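/- Assume 𝒜, ℬ as in the context with Λ_𝒜 spanning. Let ν⁰ be a Borel probability measure on 𝕍 with finite first moment, ν^∞ a Borel probability measure on 𝕊_𝕍, t > 0, and set z = ν̄⁰ + t ν̄^∞ (barycentres). Suppose F(ν̄⁰) ≤ ∫_𝕍 F dν⁰ holds for every 𝒜-quasiconvex F ∈ ℍ. Then (ν⁰, t ν^∞) ∈ Y(z) if and only if for every 𝒜-quasiconvex F ∈ ℍ one has G_F(ν̄^∞) ≤ ∫_{𝕊_𝕍} F^∞ dν^∞, where G_F(w) = sup{ ζ·w : ζ = F'(z₀) for some point z₀ of differentiability of F } is the support function of the set of derivatives of F. -/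

import Mathlib

open MeasureTheory Filter Topology

noncomputable section

/-! ## Basic PDE setup -/

abbrev Dom (n : ℕ) := Fin n → ℝ

def unitCube (n : ℕ) : Set (Dom n) := Set.univ.pi fun _ => Set.Ioo (-(1/2) : ℝ) (1/2)

def closedUnitCube (n : ℕ) : Set (Dom n) := Set.univ.pi fun _ => Set.Icc (-(1/2) : ℝ) (1/2)

/-- The finite set of multi-indices of degree `k`. -/
def degSet (n k : ℕ) : Finset (Fin n → ℕ) :=
  (Fintype.piFinset fun _ : Fin n => Finset.range (k+1)).filter fun α => (∑ i, α i) = k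

/-- Partial derivative in the `j`-th coordinate direction. -/
def pderivDir {n : ℕ} {V : Type*} [NormedAddCommGroup V] [NormedSpace ℝ V]
    (j : Fin n) (u : Dom n → V) : Dom n → V :=
  fun x => fderiv ℝ u x (Pi.single j 1)

/-- The multi-index partial derivative `∂^α`. -/
def mderiv {n : ℕ} {V : Type*} [NormedAddCommGroup V] [NormedSpace ℝ V]
    (α : Fin n → ℕ) (u : Dom n → V) : Dom n → V :=
  (List.finRange n).foldr (fun j f => (pderivDir j)^[α j] f) u

/-- The action of a homogeneous `k`-th order constant-coefficient operator with
coefficients `A α` on a function. -/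
def opApply {n : ℕ} {V W : Type*} [NormedAddCommGroup V] [NormedSpace ℝ V]
    [NormedAddCommGroup W] [NormedSpace ℝ W]
    (A : (Fin n → ℕ) → (V →L[ℝ] W)) (k : ℕ) (u : Dom n → V) (x : Dom n) : W :=
  ∑ α ∈ degSet n k, A α (mderiv α u x)

/-- The symbol `𝒜(ξ) = Σ_{|α|=k} ξ^α A_α`. -/
def opSymbol {n : ℕ} {V W : Type*} [NormedAddCommGroup V] [NormedSpace ℝ V]
    [NormedAddCommGroup W] [NormedSpace ℝ W]
    (A : (Fin n → ℕ) → (V →L[ℝ] W)) (k : ℕ) (ξ : Dom n) : V →L[ℝ] W :=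
  ∑ α ∈ degSet n k, (∏ i, ξ i ^ α i) • A α

/-- The wave cone `Λ_𝒜 = ⋃_{ξ ≠ 0} ker 𝒜(ξ)`. -/
def waveCone {n : ℕ} {V W : Type*} [NormedAddCommGroup V] [NormedSpace ℝ V]
    [NormedAddCommGroup W] [NormedSpace ℝ W]
    (A : (Fin n → ℕ) → (V →L[ℝ] W)) (k : ℕ) : Set V :=
  {v | ∃ ξ : Dom n, ξ ≠ 0 ∧ opSymbol A k ξ v = 0}

/-- The wave cone is spanning. -/
def SpanningCone {n : ℕ} {V W : Type*} [NormedAddCommGroup V] [NormedSpace ℝ V]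
    [NormedAddCommGroup W] [NormedSpace ℝ W]
    (A : (Fin n → ℕ) → (V →L[ℝ] W)) (k : ℕ) : Prop :=
  Submodule.span ℝ (waveCone A k) = ⊤

/-- `ℬ` is an exact potential of `𝒜`:  `ker 𝒜(ξ) = im ℬ(ξ)` for all `ξ ≠ 0`. -/
def ExactPotential {n : ℕ} {U V W : Type*} [NormedAddCommGroup V] [NormedSpace ℝ V]
    [NormedAddCommGroup W] [NormedSpace ℝ W] [NormedAddCommGroup U] [NormedSpace ℝ U]
    (A : (Fin n → ℕ) → (V →L[ℝ] W)) (k : ℕ)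
    (B : (Fin n → ℕ) → (U →L[ℝ] V)) (l : ℕ) : Prop :=
  ∀ ξ : Dom n, ξ ≠ 0 → LinearMap.ker (opSymbol A k ξ : V →ₗ[ℝ] W) = LinearMap.range (opSymbol B l ξ : U →ₗ[ℝ] V)

/-- `ℤⁿ`-periodicity. -/
def ZPeriodic {n : ℕ} {V : Type*} (v : Dom n → V) : Prop :=
  ∀ (x : Dom n) (m : Fin n → ℤ), v (x + fun i => (m i : ℝ)) = v x

/-- `𝒜`-quasiconvexity of a continuous integrand. -/
def AQuasiconvex {n : ℕ} {V W : Type*} [NormedAddCommGroup V] [NormedSpace ℝ V]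
    [NormedAddCommGroup W] [NormedSpace ℝ W]
    (A : (Fin n → ℕ) → (V →L[ℝ] W)) (k : ℕ) (f : V → ℝ) : Prop :=
  Continuous f ∧ ∀ (z : V) (v : Dom n → V), ContDiff ℝ (⊤ : ℕ∞) v → ZPeriodic v →
    (∫ x in unitCube n, v x) = 0 → (∀ x, opApply A k v x = 0) →
    f z ≤ ∫ x in unitCube n, f (z + v x)

def LinearGrowth {V : Type*} [NormedAddCommGroup V] (f : V → ℝ) : Prop :=
  ∃ c : ℝ, ∀ z, |f z| ≤ c * (1 + ‖z‖)

/-- Upper recession function `f^∞(z) = limsup_{t→∞, z'→z} f(tz')/t`. -/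
def urec {V : Type*} [NormedAddCommGroup V] [NormedSpace ℝ V] (f : V → ℝ) (z : V) : ℝ :=
  limsup (fun p : ℝ × V => f (p.1 • p.2) / p.1) (atTop ×ˢ 𝓝 z)

/-- The radial recession function `z ↦ limsup_{t→∞} f(tz)/t`. -/
def rrec {V : Type*} [NormedAddCommGroup V] [NormedSpace ℝ V] (f : V → ℝ) (z : V) : ℝ :=
  limsup (fun t : ℝ => f (t • z) / t) atTop

/-- `g` is the recession function of `Φ`, the limit being locally uniform. -/
def HasRec {V : Type*} [NormedAddCommGroup V] [NormedSpace ℝ V] (Φ g : V → ℝ) : Prop :=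
  TendstoLocallyUniformly (fun (t : ℝ) (z : V) => Φ (t • z) / t) g atTop

/-- Membership in the class `ℍ`. -/
def MemH {V : Type*} [NormedAddCommGroup V] [NormedSpace ℝ V] (Φ : V → ℝ) : Prop :=
  Continuous Φ ∧ LinearGrowth Φ ∧ ∃ g : V → ℝ, HasRec Φ g

/-- `C_c^∞` functions with support in `Ω`. -/
def CcSmooth {n : ℕ} {U : Type*} [NormedAddCommGroup U] [NormedSpace ℝ U]
    (Ω : Set (Dom n)) (u : Dom n → U) : Prop :=
  ContDiff ℝ (⊤ : ℕ∞) u ∧ HasCompactSupport u ∧ tsupport u ⊆ Ω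

/-- The `W^{l-1,1}` norm : sum of the `L¹` norms of derivatives of order `< l`. -/
def sobNorm {n : ℕ} {U : Type*} [NormedAddCommGroup U] [NormedSpace ℝ U]
    (l : ℕ) (u : Dom n → U) : ℝ :=
  ∑ j ∈ Finset.range l, ∫ x : Dom n, ‖iteratedFDeriv ℝ j u x‖

/-- Membership of a pair `(ν⁰, ν^∞)` in the set `Y(z)` of Young measures generated by
sequences `z + ℬ u_j` with `u_j ∈ C_c^∞(𝕏, 𝕌)` and `‖u_j‖_{W^{l-1,1}} → 0`. -/
def memY {n : ℕ} {U V : Type*} [NormedAddCommGroup V] [InnerProductSpace ℝ V]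
    [FiniteDimensional ℝ V] [MeasurableSpace V] [BorelSpace V]
    [NormedAddCommGroup U] [NormedSpace ℝ U]
    (B : (Fin n → ℕ) → (U →L[ℝ] V)) (l : ℕ) (z : V)
    (nu0 : Measure V) (nuInf : Measure (Metric.sphere (0:V) 1)) : Prop :=
  ∃ u : ℕ → Dom n → U,
    (∀ j, CcSmooth (unitCube n) (u j)) ∧
    Tendsto (fun j => sobNorm l (u j)) atTop (𝓝 0) ∧
    ∀ Φ : V → ℝ, MemH Φ →
      Tendsto (fun j => ∫ x in unitCube n, Φ (z + opApply B l (u j) x)) atTop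
        (𝓝 ((∫ v, Φ v ∂nu0) + ∫ w, rrec Φ (w : V) ∂nuInf))

/-! ## The transform T, Lipschitz test classes, derivative sets, envelopes -/

/-- The transformed integrand on the open unit ball. -/
def transf {V : Type*} [NormedAddCommGroup V] [NormedSpace ℝ V] (Φ : V → ℝ) (zh : V) : ℝ :=
  (1 - ‖zh‖) * Φ ((1 - ‖zh‖)⁻¹ • zh)

/-- The function `TΦ` on the closed unit ball (as a function on `V`). -/
def Tfun {V : Type*} [NormedAddCommGroup V] [NormedSpace ℝ V] (Φ : V → ℝ) (zh : V) : ℝ :=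
  if ‖zh‖ < 1 then transf Φ zh else rrec Φ zh

/-- `‖TΦ‖_LIP ≤ 1` on the closed unit ball. -/
def TLipUnit {V : Type*} [NormedAddCommGroup V] [NormedSpace ℝ V] (Φ : V → ℝ) : Prop :=
  ∃ K : NNReal, LipschitzOnWith K (Tfun Φ) (Metric.closedBall (0:V) 1) ∧
    (⨆ zh ∈ Metric.closedBall (0:V) 1, |Tfun Φ zh|) + (K : ℝ) ≤ 1

/-- `‖η‖_LIP ≤ 1` on `Ω̄` (with the `ℓ^∞` metric on `ℝⁿ`). -/
def etaLipUnit {n : ℕ} (Ω : Set (Dom n)) (η : Dom n → ℝ) : Prop :=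
  ∃ K : NNReal, LipschitzOnWith K η (closure Ω) ∧
    (⨆ x ∈ closure Ω, |η x|) + (K : ℝ) ≤ 1

/-- The set of derivatives `F'(z₀)` of `F` (realized as vectors via the inner product). -/
def derivSet {V : Type*} [NormedAddCommGroup V] [InnerProductSpace ℝ V]
    [FiniteDimensional ℝ V] (F : V → ℝ) : Set V :=
  {ζ : V | ∃ z₀ : V, HasFDerivAt F (InnerProductSpace.toDual ℝ V ζ : V →L[ℝ] ℝ) z₀}

/-- The support function of a set `D ⊂ 𝕍`. -/
def suppFn {V : Type*} [NormedAddCommGroup V] [InnerProductSpace ℝ V]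
    (D : Set V) (w : V) : ℝ :=
  sSup ((fun ζ => (inner ℝ ζ w : ℝ)) '' D)

/-- The `𝒜`-quasiconvex envelope, with values in `[-∞, ∞)` (realized in `EReal`). -/
def qcEnv {n : ℕ} {V W : Type*} [NormedAddCommGroup V] [InnerProductSpace ℝ V]
    [FiniteDimensional ℝ V] [NormedAddCommGroup W] [NormedSpace ℝ W]
    (A : (Fin n → ℕ) → (V →L[ℝ] W)) (k : ℕ) (Φ : V → ℝ) (ξ : V) : EReal :=
  sInf {r : EReal | ∃ v : Dom n → V, ContDiff ℝ (⊤ : ℕ∞) v ∧ ZPeriodic v ∧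
    (∫ x in unitCube n, v x) = 0 ∧ (∀ x, opApply A k v x = 0) ∧
    r = ((∫ x in unitCube n, Φ (ξ + v x) : ℝ) : EReal)}

/-- A standard mollifier: smooth, nonnegative, supported in the closed unit cube,
positive on the open unit cube, with integral one. -/
def IsStdMollifier (n : ℕ) (ρ : Dom n → ℝ) : Prop :=
  ContDiff ℝ (⊤ : ℕ∞) ρ ∧ (∀ x, 0 ≤ ρ x) ∧ tsupport ρ ⊆ closedUnitCube n ∧
    (∀ x ∈ unitCube n, 0 < ρ x) ∧ (∫ x : Dom n, ρ x) = 1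

/-- A mollifier (no interior positivity required). -/
def IsMollifier (n : ℕ) (ρ : Dom n → ℝ) : Prop :=
  ContDiff ℝ (⊤ : ℕ∞) ρ ∧ (∀ x, 0 ≤ ρ x) ∧ tsupport ρ ⊆ closedUnitCube n ∧
    (∫ x : Dom n, ρ x) = 1

/-- The rescaled mollifier kernel `φ_t(x) = t^{-n} φ(x/t)`. -/
def mollK {n : ℕ} (ρ : Dom n → ℝ) (t : ℝ) (x : Dom n) : ℝ := ((t : ℝ) ^ n)⁻¹ * ρ (t⁻¹ • x)

/-!
Necessity. An `𝒜`-quasiconvex `F` of linear growth is convex along the wave cone, which spans, so it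
is Lipschitz. If `(ν⁰, t ν^∞) ∈ Y(z)`, the generating potentials extend to periodic `𝒜`-free fields,
hence `F(z) ≤ ∫ F dν⁰ + t ∫ F^∞ dν^∞` for every `𝒜`-quasiconvex `F ∈ ℍ`. Applying this to the
blow-ups `y ↦ R⁻¹ F(z₀ + R (y - ν̄⁰))` at a point `z₀` of differentiability and letting `R → 0⁺`
removes the `ν⁰` part and leaves `F'(z₀) · ν̄^∞ ≤ ∫ F^∞ dν^∞`.

Sufficiency. A pair `(μ⁰, μ^∞)` is a measure on the closed unit ball, the compactification of `𝕍` by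
its directions at infinity. The measures coming from potentials are closed under midpoints, because
potentials can be tiled. By Hahn–Banach it therefore suffices that every lower bound of
`∫_𝕏 Φ(z + ℬu)` over `u ∈ C_c^∞(𝕏, 𝕌)` is a lower bound of `∫ Φ dν⁰ + t ∫ Φ^∞ dν^∞`, for `Φ` coming
from a Lipschitz function on the ball. The envelope `F` of `Φ` over compactly supported potentials
belongs to `ℍ` and satisfies `F ≤ Φ` and `F^∞ ≤ Φ^∞`. It is `𝒜`-quasiconvex, since periodic
`𝒜`-free fields are bounded limits of trigonometric ones, which have periodic potentials. Finally
`F(z) ≤ F(ν̄⁰) + t G_F(ν̄^∞)`, by the mean value theorem for averages of `F` over small translations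
(`F` is differentiable almost everywhere), and the two Jensen inequalities for `F` conclude.
-/

/-! ## Partial derivatives and differential operators -/

section PartialDerivatives

open scoped ContDiff

variable {n m : ℕ} {E E' : Type*} [NormedAddCommGroup E] [NormedSpace ℝ E]
  [NormedAddCommGroup E'] [NormedSpace ℝ E'] {u u' : Dom n → E} {α : Fin n → ℕ}

/-- The iterated partial derivative `∂_{j₁} ⋯ ∂_{jₘ} u` along a list `[j₁, …, jₘ]` of coordinate
directions. Unlike a multi-index, a list allows induction on the order. -/
def listDeriv (L : List (Fin n)) (u : Dom n → E) : Dom n → E := L.foldr pderivDir u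

/-- The coordinate directions of the multi-index `α` in increasing order, the direction `j` being
repeated `α j` times. -/
def multiIndexDirs (α : Fin n → ℕ) : List (Fin n) :=
  (List.finRange n).flatMap fun j => List.replicate (α j) j

lemma mem_degSet : α ∈ degSet n m ↔ ∑ i, α i = m := by
  simp only [degSet, Finset.mem_filter, Fintype.mem_piFinset, Finset.mem_range,
    and_iff_right_iff_imp]
  intro h i
  have := Finset.single_le_sum (f := α) (fun _ _ => Nat.zero_le _) (Finset.mem_univ i)
  lia

lemma prod_map_multiIndexDirs {M : Type*} [CommMonoid M] (f : Fin n → M) (α : Fin n → ℕ) :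
    ((multiIndexDirs α).map f).prod = ∏ i, f i ^ α i := by
  simp [multiIndexDirs, List.flatMap_def, List.prod_flatten, Fin.prod_univ_def, Function.comp_def]

lemma sum_map_multiIndexDirs {M : Type*} [AddCommMonoid M] (f : Fin n → M) (α : Fin n → ℕ) :
    ((multiIndexDirs α).map f).sum = ∑ i, α i • f i :=
  prod_map_multiIndexDirs (M := Multiplicative M) f α

lemma length_multiIndexDirs (α : Fin n → ℕ) : (multiIndexDirs α).length = ∑ i, α i := by
  simpa using sum_map_multiIndexDirs (fun _ => (1 : ℕ)) α

lemma count_multiIndexDirs (α : Fin n → ℕ) (j : Fin n) : (multiIndexDirs α).count j = α j := by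
  have hcount : ∀ L : List (Fin n), L.count j = (L.map fun i => if i = j then 1 else 0).sum := by
    intro L
    induction L with
    | nil => rfl
    | cons i L ih => rw [List.count_cons, ih, List.map_cons, List.sum_cons, add_comm]; simp
  rw [hcount, sum_map_multiIndexDirs]
  simp

lemma length_multiIndexDirs_of_mem_degSet (hα : α ∈ degSet n m) :
    (multiIndexDirs α).length = m :=
  (length_multiIndexDirs α).trans (mem_degSet.1 hα)

lemma listDeriv_cons (j : Fin n) (L : List (Fin n)) (u : Dom n → E) :
    listDeriv (j :: L) u = pderivDir j (listDeriv L u) := rfl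

lemma listDeriv_append (L L' : List (Fin n)) (u : Dom n → E) :
    listDeriv (L ++ L') u = listDeriv L (listDeriv L' u) :=
  List.foldr_append

lemma listDeriv_replicate (j : Fin n) (m : ℕ) (u : Dom n → E) :
    listDeriv (List.replicate m j) u = (pderivDir j)^[m] u := by
  induction m with
  | zero => rfl
  | succ m ih => rw [List.replicate_succ, listDeriv_cons, ih, Function.iterate_succ_apply']

lemma mderiv_eq_listDeriv (α : Fin n → ℕ) (u : Dom n → E) :
    mderiv α u = listDeriv (multiIndexDirs α) u := by
  unfold mderiv multiIndexDirs
  induction List.finRange n with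
  | nil => rfl
  | cons j L ih =>
    rw [List.foldr_cons, List.flatMap_cons, listDeriv_append, ← ih, listDeriv_replicate]

lemma contDiff_pderivDir (j : Fin n) (hu : ContDiff ℝ ∞ u) : ContDiff ℝ ∞ (pderivDir j u) :=
  (hu.fderiv_right (by simp)).clm_apply contDiff_const

lemma contDiff_listDeriv (L : List (Fin n)) (hu : ContDiff ℝ ∞ u) :
    ContDiff ℝ ∞ (listDeriv L u) := by
  induction L with
  | nil => exact hu
  | cons j L ih => exact contDiff_pderivDir j ih

lemma contDiff_mderiv (α : Fin n → ℕ) (hu : ContDiff ℝ ∞ u) : ContDiff ℝ ∞ (mderiv α u) :=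
  mderiv_eq_listDeriv α u ▸ contDiff_listDeriv _ hu

lemma pderivDir_comm (i j : Fin n) (hu : ContDiff ℝ ∞ u) :
    pderivDir i (pderivDir j u) = pderivDir j (pderivDir i u) := by
  have hsecond : ∀ (i j : Fin n) (x : Dom n), pderivDir i (pderivDir j u) x
      = fderiv ℝ (fderiv ℝ u) x (Pi.single i 1) (Pi.single j 1) := fun i j x => by
    have hd : Differentiable ℝ (fderiv ℝ u) :=
      (hu.fderiv_right (m := ∞) (by simp)).differentiable (by simp)
    unfold pderivDir
    rw [fderiv_clm_apply (hd x) (by fun_prop)]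
    simp
  have hsymm (x : Dom n) : IsSymmSndFDerivAt ℝ u x :=
    hu.contDiffAt.isSymmSndFDerivAt (by
      rw [minSmoothness_of_isRCLikeNormedField]; exact WithTop.coe_le_coe.2 le_top)
  funext x
  rw [hsecond, hsecond, hsymm x]

lemma listDeriv_perm {L L' : List (Fin n)} (h : L.Perm L') (hu : ContDiff ℝ ∞ u) :
    listDeriv L u = listDeriv L' u := by
  induction h with
  | nil => rfl
  | cons a _ ih => rw [listDeriv_cons, listDeriv_cons, ih]
  | swap a b L => exact pderivDir_comm _ _ (contDiff_listDeriv L hu)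
  | trans _ _ ih ih' => rw [ih, ih']

lemma mderiv_mderiv (α β : Fin n → ℕ) (hu : ContDiff ℝ ∞ u) :
    mderiv α (mderiv β u) = mderiv (α + β) u := by
  simp only [mderiv_eq_listDeriv, ← listDeriv_append]
  refine listDeriv_perm (List.perm_iff_count.2 fun j => ?_) hu
  simp only [List.count_append, count_multiIndexDirs, Pi.add_apply]

lemma listDeriv_eq_iteratedFDeriv (L : List (Fin n)) (hu : ContDiff ℝ ∞ u) (x : Dom n) :
    listDeriv L u x = iteratedFDeriv ℝ L.length u x fun i => Pi.single (L.get i) 1 := by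
  induction L generalizing x with
  | nil => simp [listDeriv]
  | cons j L ih =>
    have hd : DifferentiableAt ℝ (iteratedFDeriv ℝ L.length u) x :=
      hu.differentiable_iteratedFDeriv (by exact_mod_cast ENat.natCast_lt_top _) x
    rw [listDeriv_cons, funext ih, pderivDir, fderiv_continuousMultilinear_apply_const_apply hd]
    exact (iteratedFDeriv_succ_apply_left (n := L.length)
      fun i : Fin (L.length + 1) => (Pi.single ((j :: L).get i) 1 : Dom n)).symm

lemma norm_listDeriv_le (L : List (Fin n)) (hu : ContDiff ℝ ∞ u) (x : Dom n) :
    ‖listDeriv L u x‖ ≤ ‖iteratedFDeriv ℝ L.length u x‖ := by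
  rw [listDeriv_eq_iteratedFDeriv L hu x]
  refine (ContinuousMultilinearMap.le_opNorm _ _).trans_eq ?_
  rw [Finset.prod_eq_one fun i _ => by rw [Pi.norm_single, norm_one], mul_one]

lemma listDeriv_clm_comp (T : E →L[ℝ] E') (L : List (Fin n)) (hu : ContDiff ℝ ∞ u) :
    listDeriv L (T ∘ u) = T ∘ listDeriv L u := by
  funext x
  rw [listDeriv_eq_iteratedFDeriv L (T.contDiff.comp hu),
    T.iteratedFDeriv_comp_left hu.contDiffAt (by exact_mod_cast le_top),
    Function.comp_apply, listDeriv_eq_iteratedFDeriv L hu]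
  rfl

lemma listDeriv_const_smul (L : List (Fin n)) (c : ℝ) (hu : ContDiff ℝ ∞ u) :
    listDeriv L (c • u) = c • listDeriv L u :=
  listDeriv_clm_comp (c • ContinuousLinearMap.id ℝ E) L hu

lemma listDeriv_sum {ι : Type*} (s : Finset ι) (L : List (Fin n)) {f : ι → Dom n → E}
    (hf : ∀ i, ContDiff ℝ ∞ (f i)) :
    listDeriv L (∑ i ∈ s, f i) = ∑ i ∈ s, listDeriv L (f i) := by
  funext x
  have hsum : ContDiff ℝ ∞ (∑ i ∈ s, f i) := by
    simpa only [← Finset.sum_apply] using ContDiff.sum fun i (_ : i ∈ s) => hf i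
  rw [listDeriv_eq_iteratedFDeriv L hsum, iteratedFDeriv_sum_apply fun i _ =>
      (hf i).contDiffAt.of_le (by exact_mod_cast le_top), _root_.sum_apply,
    Finset.sum_apply]
  exact Finset.sum_congr rfl fun i _ => (listDeriv_eq_iteratedFDeriv L (hf i) x).symm

lemma listDeriv_eventuallyEq {x : Dom n} (L : List (Fin n)) (h : u =ᶠ[𝓝 x] u') :
    listDeriv L u =ᶠ[𝓝 x] listDeriv L u' := by
  induction L with
  | nil => exact h
  | cons j L ih =>
    filter_upwards [ih.fderiv (𝕜 := ℝ)] with y hy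
    rw [listDeriv_cons, listDeriv_cons, pderivDir, pderivDir, hy]

lemma ZPeriodic.listDeriv (L : List (Fin n)) (hp : ZPeriodic u) : ZPeriodic (listDeriv L u) := by
  induction L with
  | nil => exact hp
  | cons j L ih =>
    intro x m
    have hshift : (fun y => _root_.listDeriv L u (y + fun i => (m i : ℝ))) =
        _root_.listDeriv L u := funext (ih · m)
    rw [listDeriv_cons, pderivDir, ← fderiv_comp_add_right, hshift, pderivDir]

lemma ZPeriodic.iteratedFDeriv (hp : ZPeriodic u) (j : ℕ) :
    ZPeriodic (iteratedFDeriv ℝ j u) := by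
  intro x m
  have hshift : (fun y => u (y + fun i => (m i : ℝ))) = u := funext (hp · m)
  rw [← iteratedFDeriv_comp_add_right, hshift]

lemma contDiff_comp_smul_sub (r : ℝ) (c : Dom n) (hu : ContDiff ℝ ∞ u) :
    ContDiff ℝ ∞ fun x => u (r • x - c) :=
  hu.comp (by fun_prop)

lemma iteratedFDeriv_comp_smul_sub (j : ℕ) (r : ℝ) (c : Dom n) (hu : ContDiff ℝ ∞ u)
    (x : Dom n) :
    iteratedFDeriv ℝ j (fun x => u (r • x - c)) x = r ^ j • iteratedFDeriv ℝ j u (r • x - c) := by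
  have hshift : ContDiff ℝ j fun y => u (y - c) :=
    (hu.of_le (by exact_mod_cast le_top)).comp (by fun_prop)
  simpa only [iteratedFDeriv_comp_sub] using congrFun (iteratedFDeriv_comp_const_smul r hshift) x

lemma listDeriv_comp_smul_sub (L : List (Fin n)) (r : ℝ) (c : Dom n) (hu : ContDiff ℝ ∞ u)
    (x : Dom n) :
    listDeriv L (fun x => u (r • x - c)) x = r ^ L.length • listDeriv L u (r • x - c) := by
  rw [listDeriv_eq_iteratedFDeriv L (contDiff_comp_smul_sub r c hu),
    iteratedFDeriv_comp_smul_sub _ _ _ hu, listDeriv_eq_iteratedFDeriv L hu]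
  rfl

end PartialDerivatives

section Operators

open scoped ContDiff

variable {n : ℕ} {V W : Type*} [NormedAddCommGroup V] [NormedSpace ℝ V]
  [NormedAddCommGroup W] [NormedSpace ℝ W] (A : (Fin n → ℕ) → (V →L[ℝ] W)) (k : ℕ)
  {u u' : Dom n → V}

lemma contDiff_opApply (hu : ContDiff ℝ ∞ u) : ContDiff ℝ ∞ (opApply A k u) :=
  ContDiff.sum fun α _ => (A α).contDiff.comp (contDiff_mderiv α hu)

lemma opApply_congr_of_eventuallyEq {x : Dom n} (h : u =ᶠ[𝓝 x] u') :
    opApply A k u x = opApply A k u' x := by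
  unfold opApply
  simp only [mderiv_eq_listDeriv, (listDeriv_eventuallyEq _ h).eq_of_nhds]

lemma opApply_add (hu : ContDiff ℝ ∞ u) (hu' : ContDiff ℝ ∞ u') (x : Dom n) :
    opApply A k (u + u') x = opApply A k u x + opApply A k u' x := by
  have hadd (L : List (Fin n)) : listDeriv L (u + u') = listDeriv L u + listDeriv L u' := by
    simpa using listDeriv_sum Finset.univ L (f := ![u, u']) (by simp [Fin.forall_fin_two, hu, hu'])
  simp only [opApply, mderiv_eq_listDeriv, hadd, Pi.add_apply, map_add, Finset.sum_add_distrib]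

lemma opApply_const_smul (c : ℝ) (hu : ContDiff ℝ ∞ u) (x : Dom n) :
    opApply A k (c • u) x = c • opApply A k u x := by
  simp only [opApply, mderiv_eq_listDeriv, listDeriv_const_smul _ c hu, Pi.smul_apply, map_smul,
    Finset.smul_sum]

lemma opApply_zero (x : Dom n) : opApply A k (0 : Dom n → V) x = 0 := by
  simpa using opApply_const_smul A k 0 (u := (0 : Dom n → V)) contDiff_const x

lemma opApply_comp_smul_sub (r : ℝ) (c : Dom n) (hu : ContDiff ℝ ∞ u) (x : Dom n) :
    opApply A k (fun x => u (r • x - c)) x = r ^ k • opApply A k u (r • x - c) := by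
  unfold opApply
  rw [Finset.smul_sum]
  refine Finset.sum_congr rfl fun α hα => ?_
  rw [mderiv_eq_listDeriv, mderiv_eq_listDeriv, listDeriv_comp_smul_sub _ _ _ hu, map_smul,
    length_multiIndexDirs_of_mem_degSet hα]

lemma ZPeriodic.opApply (hp : ZPeriodic u) : ZPeriodic (opApply A k u) := fun x m =>
  Finset.sum_congr rfl fun α _ => by rw [mderiv_eq_listDeriv, hp.listDeriv]

lemma exists_norm_opApply_le : ∃ C : ℝ, 0 ≤ C ∧ ∀ u : Dom n → V, ContDiff ℝ ∞ u →
    ∀ x, ‖opApply A k u x‖ ≤ C * ‖iteratedFDeriv ℝ k u x‖ := by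
  refine ⟨∑ α ∈ degSet n k, ‖A α‖, by positivity, fun u hu x => ?_⟩
  rw [opApply, Finset.sum_mul]
  refine norm_sum_le_of_le _ fun α hα => (A α).le_opNorm_of_le ?_
  rw [mderiv_eq_listDeriv]
  exact length_multiIndexDirs_of_mem_degSet hα ▸ norm_listDeriv_le (multiIndexDirs α) hu x

end Operators

/-! ## The unit cube and periodic functions -/

section UnitCube

open scoped ContDiff Pointwise

variable {n : ℕ} {E : Type*} [NormedAddCommGroup E]

lemma unitCube_eq_ball : unitCube n = Metric.ball (0 : Dom n) (1 / 2) := by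
  rw [unitCube, ball_pi _ (by norm_num)]
  simp [Real.ball_eq_Ioo]

lemma mem_unitCube_iff_abs {x : Dom n} : x ∈ unitCube n ↔ ∀ i, |x i| < 1 / 2 := by
  simp [unitCube, abs_lt]

lemma unitCube_subset_closedUnitCube : unitCube n ⊆ closedUnitCube n :=
  Set.pi_mono fun _ _ => Set.Ioo_subset_Icc_self

lemma isOpen_unitCube : IsOpen (unitCube n) := unitCube_eq_ball ▸ Metric.isOpen_ball

lemma measurableSet_unitCube : MeasurableSet (unitCube n) := isOpen_unitCube.measurableSet

lemma isCompact_closedUnitCube : IsCompact (closedUnitCube n) :=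
  isCompact_univ_pi fun _ => isCompact_Icc

lemma volume_unitCube : volume (unitCube n) = 1 := by
  rw [unitCube_eq_ball, Real.volume_pi_ball _ (by norm_num)]
  simp

instance isProbabilityMeasure_restrict_unitCube :
    IsProbabilityMeasure (volume.restrict (unitCube n)) :=
  ⟨by simp [volume_unitCube]⟩

lemma integrableOn_unitCube {f : Dom n → E} (hf : Continuous f) : IntegrableOn f (unitCube n) :=
  (hf.continuousOn.integrableOn_compact isCompact_closedUnitCube).mono_set
    unitCube_subset_closedUnitCube

lemma unitCube_ae_eq_closedUnitCube : unitCube n =ᵐ[volume] closedUnitCube n := by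
  rw [closedUnitCube, Set.pi_univ_Icc]
  exact Measure.univ_pi_Ioo_ae_eq_Icc

lemma sub_round_mem_closedUnitCube (x : Dom n) :
    (x - fun i => (round (x i) : ℝ)) ∈ closedUnitCube n := fun i _ => by
  simpa [abs_le, Set.mem_Icc] using abs_sub_round (x i)

lemma ZPeriodic.sub_int {X : Type*} {g : Dom n → X} (hp : ZPeriodic g) (x : Dom n) (m : Fin n → ℤ) :
    g (x - fun i => (m i : ℝ)) = g x := by
  simpa using (hp (x - fun i => (m i : ℝ)) m).symm

lemma ZPeriodic.exists_norm_le {g : Dom n → E} (hp : ZPeriodic g) (hg : Continuous g) :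
    ∃ M : ℝ, 0 ≤ M ∧ ∀ x, ‖g x‖ ≤ M := by
  obtain ⟨M, hM⟩ := isCompact_closedUnitCube.exists_bound_of_continuousOn hg.continuousOn
  have hbound (x : Dom n) : ‖g x‖ ≤ M := by
    rw [← hp.sub_int x fun i => round (x i)]
    exact hM _ (sub_round_mem_closedUnitCube x)
  exact ⟨M, (norm_nonneg _).trans (hbound 0), hbound⟩

variable [NormedSpace ℝ E] {g : Dom n → E}

variable (n) in
/-- The lattice `ℤⁿ ⊂ ℝⁿ`, in the form for which Mathlib knows the fundamental domain. -/
def integerLattice : AddSubgroup (Dom n) :=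
  (Submodule.span ℤ (Set.range (Pi.basisFun ℝ (Fin n)))).toAddSubgroup

instance countable_integerLattice : Countable (integerLattice n) :=
  inferInstanceAs (Countable (Submodule.span ℤ (Set.range (Pi.basisFun ℝ (Fin n)))))

variable (n) in
/-- The half-open cube `[-1/2, 1/2)ⁿ`, an exact fundamental domain of `ℤⁿ`. -/
def halfOpenCube : Set (Dom n) := Set.univ.pi fun _ => Set.Ico (-(1 / 2) : ℝ) (1 / 2)

lemma unitCube_ae_eq_halfOpenCube : unitCube n =ᵐ[volume] halfOpenCube n :=
  Measure.univ_pi_Ioo_ae_eq_Icc.trans Measure.univ_pi_Ico_ae_eq_Icc.symm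

lemma isAddFundamentalDomain_halfOpenCube :
    IsAddFundamentalDomain (integerLattice n) (halfOpenCube n) volume := by
  have htranslate : halfOpenCube n = (fun _ => -(1 / 2) : Dom n) +ᵥ
      ZSpan.fundamentalDomain (Pi.basisFun ℝ (Fin n)) := by
    ext x
    simp only [halfOpenCube, Set.mem_pi, Set.mem_univ, true_implies, Set.mem_Ico,
      Set.mem_vadd_set_iff_neg_vadd_mem, ZSpan.mem_fundamentalDomain, Pi.basisFun_repr,
      vadd_eq_add, Pi.add_apply, Pi.neg_apply]
    refine forall_congr' fun i => ⟨fun h => ?_, fun h => ?_⟩ <;> constructor <;> linarith [h.1, h.2]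
  rw [htranslate]
  exact (ZSpan.isAddFundamentalDomain' (Pi.basisFun ℝ (Fin n)) volume).vadd_of_comm _

lemma ZPeriodic.vadd_integerLattice {X : Type*} {g : Dom n → X} (hp : ZPeriodic g)
    (m : integerLattice n) (x : Dom n) : g (m +ᵥ x) = g x := by
  have hm := ((Pi.basisFun ℝ (Fin n)).mem_span_iff_repr_mem ℤ (m : Dom n)).1 m.2
  choose c hc using hm
  have hmc : (m : Dom n) = fun i => (c i : ℝ) := funext fun i => by simpa using (hc i).symm
  rw [AddSubgroup.vadd_def, vadd_eq_add, hmc, add_comm, hp]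

lemma setIntegral_vadd_eq (f : Dom n → E) (a : Dom n) (s : Set (Dom n)) :
    ∫ y in a +ᵥ s, f y = ∫ y in s, f (a + y) := by
  have hpre : (a + ·) ⁻¹' (a +ᵥ s) = s := by
    ext y; simp [Set.mem_vadd_set_iff_neg_vadd_mem]
  rw [← (measurePreserving_add_left volume a).setIntegral_preimage_emb
    (MeasurableEquiv.addLeft a).measurableEmbedding f, hpre]

lemma ZPeriodic.setIntegral_unitCube_add (hp : ZPeriodic g) (a : Dom n) :
    ∫ y in unitCube n, g (a + y) = ∫ y in unitCube n, g y := by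
  simp only [setIntegral_congr_set unitCube_ae_eq_halfOpenCube]
  rw [← setIntegral_vadd_eq]
  exact (isAddFundamentalDomain_halfOpenCube.vadd_of_comm a).setIntegral_eq
    isAddFundamentalDomain_halfOpenCube hp.vadd_integerLattice

lemma ZPeriodic.setIntegral_pderivDir (hp : ZPeriodic g) (hg : ContDiff ℝ ∞ g) (j : Fin n) :
    ∫ y in unitCube n, pderivDir j g y = 0 := by
  have hcont : Continuous (pderivDir j g) := (contDiff_pderivDir j hg).continuous
  obtain ⟨M, -, hM⟩ := (hp.listDeriv [j]).exists_norm_le hcont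
  have hline (y : Dom n) (s : ℝ) : HasDerivAt (fun s : ℝ => g (s • Pi.single j 1 + y))
      (pderivDir j g (s • Pi.single j 1 + y)) s := by
    have hshift : HasDerivAt (fun s : ℝ => s • (Pi.single j 1 : Dom n) + y) (Pi.single j 1) s := by
      simpa using ((hasDerivAt_id s).smul_const (Pi.single j 1 : Dom n)).add_const y
    exact (hg.differentiable (by simp) _).hasFDerivAt.comp_hasDerivAt s hshift
  have hderiv : HasDerivAt (fun s : ℝ => ∫ y in unitCube n, g (s • Pi.single j 1 + y))
      (∫ y in unitCube n, pderivDir j g ((0 : ℝ) • Pi.single j 1 + y)) 0 :=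
    (hasDerivAt_integral_of_dominated_loc_of_deriv_le
    (μ := volume.restrict (unitCube n)) (x₀ := (0 : ℝ)) (bound := fun _ => M) univ_mem
    (Eventually.of_forall fun s => (hg.continuous.comp (by fun_prop)).aestronglyMeasurable)
    (integrableOn_unitCube (hg.continuous.comp (by fun_prop)))
    (hcont.comp (by fun_prop)).aestronglyMeasurable
    (Eventually.of_forall fun y s _ => hM _) (integrable_const _)
    (Eventually.of_forall fun y s _ => hline y s)).2
  simp only [hp.setIntegral_unitCube_add] at hderiv
  simpa using hderiv.unique (hasDerivAt_const _ _)

end UnitCube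

section Subcubes

open scoped Pointwise

variable {n N : ℕ} {i i' : Fin n → Fin N} {x : Dom n} {f : Dom n → ℝ}

/-- The centres of the `Nⁿ` unit cubes into which the dilated cube `N • unitCube n` decomposes. -/
def subcubeCenter (N : ℕ) (i : Fin n → Fin N) : Dom n := fun a => (i a : ℝ) - ((N : ℝ) - 1) / 2

lemma eq_of_sub_subcubeCenter_mem (h : x - subcubeCenter N i ∈ unitCube n)
    (h' : x - subcubeCenter N i' ∈ unitCube n) : i = i' := by
  rw [mem_unitCube_iff_abs] at h h'
  funext a
  have hi := abs_lt.1 (h a)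
  have hi' := abs_lt.1 (h' a)
  simp only [subcubeCenter, Pi.sub_apply] at hi hi'
  have hle : ((i a : ℕ) : ℝ) < (i' a : ℕ) + 1 := by linarith [hi.1, hi'.2]
  have hge : ((i' a : ℕ) : ℝ) < (i a : ℕ) + 1 := by linarith [hi.2, hi'.1]
  norm_cast at hle hge
  lia

lemma inv_smul_mem_unitCube (hN : 0 < N) (h : x - subcubeCenter N i ∈ unitCube n) :
    (N : ℝ)⁻¹ • x ∈ unitCube n := by
  rw [mem_unitCube_iff_abs] at h ⊢
  intro a
  have ha := abs_lt.1 (h a)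
  have hN' : (0 : ℝ) < N := Nat.cast_pos.2 hN
  have hi : ((i a : ℕ) : ℝ) + 1 ≤ N := by exact_mod_cast (i a).2
  have hi0 : (0 : ℝ) ≤ (i a : ℕ) := Nat.cast_nonneg _
  simp only [subcubeCenter, Pi.sub_apply] at ha
  rw [Pi.smul_apply, smul_eq_mul, inv_mul_eq_div, abs_lt, div_lt_iff₀ hN', lt_div_iff₀ hN']
  constructor <;> linarith [ha.1, ha.2, hi0]

lemma mem_subcubeCenter_vadd_unitCube :
    x ∈ subcubeCenter N i +ᵥ unitCube n ↔ x - subcubeCenter N i ∈ unitCube n := by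
  rw [Set.mem_vadd_set_iff_neg_vadd_mem, vadd_eq_add, neg_add_eq_sub]

lemma pairwise_disjoint_subcubes :
    Pairwise (Function.onFun Disjoint fun i : Fin n → Fin N => subcubeCenter N i +ᵥ unitCube n) :=
  fun _ _ hne => Set.disjoint_left.2 fun _ hx hx' => hne <|
    eq_of_sub_subcubeCenter_mem (mem_subcubeCenter_vadd_unitCube.1 hx)
      (mem_subcubeCenter_vadd_unitCube.1 hx')

lemma iUnion_subcubes_ae_eq (hN : 0 < N) :
    (⋃ i : Fin n → Fin N, subcubeCenter N i +ᵥ unitCube n) =ᵐ[volume] (N : ℝ) • unitCube n := by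
  have hN' : (N : ℝ) ≠ 0 := Nat.cast_ne_zero.2 hN.ne'
  have hmeas (i : Fin n → Fin N) : MeasurableSet (subcubeCenter N i +ᵥ unitCube n) :=
    (isOpen_unitCube.vadd _).measurableSet
  have hvol : volume ((N : ℝ) • unitCube n) = (N : ENNReal) ^ n := by
    rw [Measure.addHaar_smul, volume_unitCube]
    simp
  refine ae_eq_of_subset_of_measure_ge ?_ ?_ (MeasurableSet.iUnion hmeas).nullMeasurableSet
    (by simp [hvol])
  · refine Set.iUnion_subset fun i x hx => ?_
    rw [Set.mem_smul_set_iff_inv_smul_mem₀ hN']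
    exact inv_smul_mem_unitCube hN (mem_subcubeCenter_vadd_unitCube.1 hx)
  · rw [measure_iUnion pairwise_disjoint_subcubes hmeas, hvol]
    simp [measure_vadd, volume_unitCube]

lemma setIntegral_unitCube_eq_sum_subcubes (hN : 0 < N) (hf : Continuous f) :
    ∫ x in unitCube n, f x =
      ∑ i : Fin n → Fin N,
        ((N : ℝ) ^ n)⁻¹ * ∫ y in unitCube n, f ((N : ℝ)⁻¹ • (subcubeCenter N i + y)) := by
  have hN' : (0 : ℝ) < N := Nat.cast_pos.2 hN
  set g : Dom n → ℝ := fun x => f ((N : ℝ)⁻¹ • x)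
  have hg : Continuous g := hf.comp (by fun_prop)
  have hint (i : Fin n → Fin N) : IntegrableOn g (subcubeCenter N i +ᵥ unitCube n) :=
    (hg.continuousOn.integrableOn_compact
      (isCompact_closedUnitCube.vadd (subcubeCenter N i))).mono_set
      (Set.vadd_set_mono unitCube_subset_closedUnitCube)
  calc ∫ x in unitCube n, f x
      = ∫ x in unitCube n, g ((N : ℝ) • x) := by simp [g, smul_smul, inv_mul_cancel₀ hN'.ne']
    _ = ((N : ℝ) ^ n)⁻¹ * ∫ x in (N : ℝ) • unitCube n, g x := by
        rw [Measure.setIntegral_comp_smul_of_pos volume g _ hN', Module.finrank_fin_fun,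
          smul_eq_mul]
    _ = ((N : ℝ) ^ n)⁻¹ * ∑ i, ∫ x in subcubeCenter N i +ᵥ unitCube n, g x := by
        rw [← setIntegral_congr_set (iUnion_subcubes_ae_eq hN), integral_iUnion_fintype
          (fun i => (isOpen_unitCube.vadd _).measurableSet) pairwise_disjoint_subcubes hint]
    _ = _ := by simp only [setIntegral_vadd_eq, Finset.mul_sum, g]

end Subcubes

/-! ## Compactly supported potentials and tilings -/

section CompactlySupported

open scoped ContDiff

variable {n : ℕ} {U : Type*} [NormedAddCommGroup U] [NormedSpace ℝ U] {u u' : Dom n → U}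

lemma ccSmooth_of_support_subset {K : Set (Dom n)} (hu : ContDiff ℝ ∞ u) (hK : IsClosed K)
    (hsupp : Function.support u ⊆ K) (hKcube : K ⊆ unitCube n) : CcSmooth (unitCube n) u := by
  have htsupp : tsupport u ⊆ unitCube n := (closure_minimal hsupp hK).trans hKcube
  exact ⟨hu, isCompact_closedUnitCube.of_isClosed_subset (isClosed_tsupport u)
    (htsupp.trans unitCube_subset_closedUnitCube), htsupp⟩

lemma CcSmooth.eq_zero_of_notMem (hu : CcSmooth (unitCube n) u) {x : Dom n}
    (hx : x ∉ unitCube n) : u x = 0 :=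
  image_eq_zero_of_notMem_tsupport fun h => hx (hu.2.2 h)

lemma CcSmooth.add (hu : CcSmooth (unitCube n) u) (hu' : CcSmooth (unitCube n) u') :
    CcSmooth (unitCube n) (u + u') :=
  ⟨hu.1.add hu'.1, hu.2.1.add hu'.2.1,
    (tsupport_add u u').trans (Set.union_subset hu.2.2 hu'.2.2)⟩

lemma CcSmooth.const_smul (c : ℝ) (hu : CcSmooth (unitCube n) u) :
    CcSmooth (unitCube n) (c • u) :=
  ⟨hu.1.const_smul c, hu.2.1.smul_left (f := fun _ => c),
    (tsupport_smul_subset_right (fun _ => c) u).trans hu.2.2⟩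

lemma ccSmooth_zero : CcSmooth (unitCube n) (0 : Dom n → U) :=
  ⟨contDiff_const, HasCompactSupport.zero, by simp [tsupport]⟩

lemma CcSmooth.integrable_norm_iteratedFDeriv (hu : CcSmooth (unitCube n) u) (j : ℕ) :
    Integrable fun x => ‖iteratedFDeriv ℝ j u x‖ :=
  ((hu.1.continuous_iteratedFDeriv (by exact_mod_cast le_top)).integrable_of_hasCompactSupport
    (hu.2.1.iteratedFDeriv j)).norm

end CompactlySupported

section Tiling

open scoped ContDiff

variable {n N : ℕ} {U V : Type*} [NormedAddCommGroup U] [NormedSpace ℝ U]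
  [NormedAddCommGroup V] [NormedSpace ℝ V] {u : (Fin n → Fin N) → Dom n → U}

/-- The function that carries a copy of `u i`, shrunk by the factor `N`, in the `i`-th of the `Nⁿ`
subcubes of the unit cube. The prefactor `N⁻ˡ` makes operators of order `l` scale invariant. -/
def tiling (N l : ℕ) (u : (Fin n → Fin N) → Dom n → U) : Dom n → U :=
  fun x => ∑ i, ((N : ℝ) ^ l)⁻¹ • u i ((N : ℝ) • x - subcubeCenter N i)

lemma contDiff_tiling (l : ℕ) (hu : ∀ i, ContDiff ℝ ∞ (u i)) : ContDiff ℝ ∞ (tiling N l u) :=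
  ContDiff.sum fun i _ => (contDiff_comp_smul_sub _ _ (hu i)).const_smul _

lemma ccSmooth_tiling (hN : 0 < N) (l : ℕ) (hu : ∀ i, CcSmooth (unitCube n) (u i)) :
    CcSmooth (unitCube n) (tiling N l u) := by
  refine ccSmooth_of_support_subset (contDiff_tiling l fun i => (hu i).1)
    (K := ⋃ i, (fun x : Dom n => (N : ℝ) • x - subcubeCenter N i) ⁻¹' tsupport (u i)) ?_ ?_ ?_
  · exact isClosed_iUnion_of_finite fun i => (isClosed_tsupport _).preimage (by fun_prop)
  · intro x hx
    obtain ⟨i, -, hi⟩ := Finset.exists_ne_zero_of_sum_ne_zero hx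
    exact Set.mem_iUnion.2 ⟨i, subset_tsupport _ (right_ne_zero_of_smul hi)⟩
  · refine Set.iUnion_subset fun i x hx => ?_
    simpa [smul_smul, hN.ne'] using inv_smul_mem_unitCube hN ((hu i).2.2 hx)

lemma opApply_tiling (hN : 0 < N) (B : (Fin n → ℕ) → (U →L[ℝ] V)) (l : ℕ)
    (hu : ∀ i, CcSmooth (unitCube n) (u i)) (i : Fin n → Fin N) {y : Dom n}
    (hy : y ∈ unitCube n) :
    opApply B l (tiling N l u) ((N : ℝ)⁻¹ • (subcubeCenter N i + y)) = opApply B l (u i) y := by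
  have hN' : (N : ℝ) ≠ 0 := Nat.cast_ne_zero.2 hN.ne'
  set x := (N : ℝ)⁻¹ • (subcubeCenter N i + y) with hx
  have hxy : (N : ℝ) • x - subcubeCenter N i = y := by rw [hx, smul_inv_smul₀ hN']; simp
  have hnear : ∀ᶠ x' in 𝓝 x, (N : ℝ) • x' - subcubeCenter N i ∈ unitCube n := by
    refine ContinuousAt.eventually_mem (by fun_prop) ?_
    rw [hxy]
    exact isOpen_unitCube.mem_nhds hy
  have hlocal : tiling N l u =ᶠ[𝓝 x]
      ((N : ℝ) ^ l)⁻¹ • fun x' => u i ((N : ℝ) • x' - subcubeCenter N i) := by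
    filter_upwards [hnear] with x' hx'
    refine Finset.sum_eq_single_of_mem i (Finset.mem_univ i) fun i' _ hne => ?_
    rw [(hu i').eq_zero_of_notMem fun h => hne (eq_of_sub_subcubeCenter_mem h hx'), smul_zero]
  rw [opApply_congr_of_eventuallyEq B l hlocal,
    opApply_const_smul B l _ (contDiff_comp_smul_sub _ _ (hu i).1),
    opApply_comp_smul_sub B l _ _ (hu i).1, hxy, inv_smul_smul₀ (pow_ne_zero l hN')]

lemma setIntegral_opApply_tiling (hN : 0 < N) (B : (Fin n → ℕ) → (U →L[ℝ] V)) (l : ℕ)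
    (hu : ∀ i, CcSmooth (unitCube n) (u i)) {H : Dom n → V → ℝ}
    (hH : Continuous (Function.uncurry H)) :
    ∫ x in unitCube n, H x (opApply B l (tiling N l u) x) =
      ∑ i, ((N : ℝ) ^ n)⁻¹ * ∫ y in unitCube n,
        H ((N : ℝ)⁻¹ • (subcubeCenter N i + y)) (opApply B l (u i) y) := by
  have hcont : Continuous (opApply B l (tiling N l u)) :=
    (contDiff_opApply B l (contDiff_tiling l fun i => (hu i).1)).continuous
  rw [setIntegral_unitCube_eq_sum_subcubes (f := fun x => H x (opApply B l (tiling N l u) x)) hN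
    (hH.comp (continuous_id.prodMk hcont))]
  refine Finset.sum_congr rfl fun i _ => congrArg _ ?_
  refine setIntegral_congr_fun measurableSet_unitCube fun y hy => ?_
  simp only [opApply_tiling hN B l hu i hy]

lemma integral_norm_iteratedFDeriv_tiling_le (hN : 0 < N) (l j : ℕ) {u : Dom n → U}
    (hu : CcSmooth (unitCube n) u) :
    ∫ x, ‖iteratedFDeriv ℝ j (tiling N l fun _ => u) x‖ ≤
      ((N : ℝ) ^ l)⁻¹ * (N : ℝ) ^ j * ∫ x, ‖iteratedFDeriv ℝ j u x‖ := by
  have hN' : (0 : ℝ) < N := Nat.cast_pos.2 hN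
  set D : (Fin n → Fin N) → Dom n → ℝ := fun i x =>
    ‖iteratedFDeriv ℝ j u ((N : ℝ) • x - subcubeCenter N i)‖
  have hD (i) : Integrable (D i) :=
    ((hu.integrable_norm_iteratedFDeriv j).comp_sub_right (subcubeCenter N i)).comp_smul hN'.ne'
  have hDint (i) : ∫ x, D i x = ((N : ℝ) ^ n)⁻¹ * ∫ x, ‖iteratedFDeriv ℝ j u x‖ := by
    rw [Measure.integral_comp_smul_of_nonneg volume
      (fun x => ‖iteratedFDeriv ℝ j u (x - subcubeCenter N i)‖) (N : ℝ) (hR := hN'.le),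
      integral_sub_right_eq_self fun x => ‖iteratedFDeriv ℝ j u x‖, Module.finrank_fin_fun,
      smul_eq_mul]
  have hpointwise (x : Dom n) : ‖iteratedFDeriv ℝ j (tiling N l fun _ => u) x‖ ≤
      ∑ i, ((N : ℝ) ^ l)⁻¹ * (N : ℝ) ^ j * D i x := by
    have hsmooth (i : Fin n → Fin N) :
        ContDiff ℝ j fun x : Dom n => u ((N : ℝ) • x - subcubeCenter N i) :=
      (contDiff_comp_smul_sub _ _ hu.1).of_le (by exact_mod_cast le_top)
    unfold tiling
    rw [iteratedFDeriv_fun_sum_apply fun i _ => ((hsmooth i).const_smul _).contDiffAt]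
    refine norm_sum_le_of_le _ fun i _ => ?_
    rw [iteratedFDeriv_const_smul_apply' (hsmooth i).contDiffAt,
      iteratedFDeriv_comp_smul_sub _ _ _ hu.1, norm_smul, norm_smul, mul_assoc]
    simp [D]
  calc ∫ x, ‖iteratedFDeriv ℝ j (tiling N l fun _ => u) x‖
      ≤ ∫ x, ∑ i, ((N : ℝ) ^ l)⁻¹ * (N : ℝ) ^ j * D i x :=
        integral_mono ((ccSmooth_tiling hN l fun _ => hu).integrable_norm_iteratedFDeriv j)
          (integrable_finsetSum _ fun i _ => (hD i).const_mul _) hpointwise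
    _ = _ := by
        rw [integral_finsetSum _ fun i _ => (hD i).const_mul _]
        simp only [integral_const_mul, hDint, Finset.sum_const, Finset.card_univ, Fintype.card_fun,
          Fintype.card_fin, nsmul_eq_mul, Nat.cast_pow]
        field_simp

lemma sobNorm_tiling_le (hN : 0 < N) (l : ℕ) {u : Dom n → U} (hu : CcSmooth (unitCube n) u) :
    sobNorm l (tiling N l fun _ => u) ≤ (N : ℝ)⁻¹ * sobNorm l u := by
  have hN' : (0 : ℝ) < N := Nat.cast_pos.2 hN
  rw [sobNorm, sobNorm, Finset.mul_sum]
  refine Finset.sum_le_sum fun j hj => (integral_norm_iteratedFDeriv_tiling_le hN l j hu).trans ?_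
  gcongr
  rw [inv_mul_le_iff₀ (by positivity), ← div_eq_mul_inv, le_div_iff₀ hN', ← pow_succ]
  exact pow_le_pow_right₀ (Nat.one_le_cast.2 hN) (Finset.mem_range.1 hj)

end Tiling

/-! ## The envelope with respect to compactly supported potentials -/

section Lipschitz

variable {n : ℕ} {V : Type*} [NormedAddCommGroup V] {Φ : V → ℝ} {K : NNReal}

lemma setIntegral_unitCube_le_of_lipschitz (hΦ : LipschitzWith K Φ) {g g' : Dom n → V}
    (hg : Continuous g) (hg' : Continuous g') {e : ℝ}
    (he : ∀ x ∈ unitCube n, ‖g x - g' x‖ ≤ e) :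
    ∫ x in unitCube n, Φ (g x) ≤ (∫ x in unitCube n, Φ (g' x)) + K * e := by
  have hint : IntegrableOn (fun x => Φ (g' x)) (unitCube n) :=
    integrableOn_unitCube (hΦ.continuous.comp hg')
  calc ∫ x in unitCube n, Φ (g x)
      ≤ ∫ x in unitCube n, (Φ (g' x) + K * e) := by
        refine setIntegral_mono_on (integrableOn_unitCube (hΦ.continuous.comp hg))
          (hint.add (integrable_const _)) measurableSet_unitCube fun x hx => ?_
        refine (hΦ.le_add_mul (g x) (g' x)).trans ?_
        rw [dist_eq_norm]
        gcongr
        exact he x hx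
    _ = (∫ x in unitCube n, Φ (g' x)) + K * e := by
        rw [integral_add hint (integrable_const _)]; simp

end Lipschitz

section Subdivision

lemma exists_subdivision_norm_sub_le {n : ℕ} {V : Type*} [NormedAddCommGroup V] {g : Dom n → V}
    (hg : Continuous g) {e : ℝ} (he : 0 < e) :
    ∃ N : ℕ, 0 < N ∧ ∀ i : Fin n → Fin N, ∀ y ∈ unitCube n,
      ‖g ((N : ℝ)⁻¹ • (subcubeCenter N i + y)) - g ((N : ℝ)⁻¹ • subcubeCenter N i)‖ ≤ e := by
  obtain ⟨δ, hδ, hgδ⟩ := Metric.uniformContinuousOn_iff.1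
    (isCompact_closedUnitCube.uniformContinuousOn_of_continuous hg.continuousOn) e he
  obtain ⟨N, hN⟩ := exists_nat_one_div_lt hδ
  have hmem (i : Fin n → Fin (N + 1)) (y : Dom n) (hy : y ∈ unitCube n) :
      ((N + 1 : ℕ) : ℝ)⁻¹ • (subcubeCenter (N + 1) i + y) ∈ closedUnitCube n :=
    unitCube_subset_closedUnitCube (inv_smul_mem_unitCube (i := i) N.succ_pos (by simpa using hy))
  have hzero : (0 : Dom n) ∈ unitCube n := mem_unitCube_iff_abs.2 fun _ => by simp
  refine ⟨N + 1, N.succ_pos, fun i y hy => ?_⟩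
  rw [← dist_eq_norm]
  refine (hgδ _ (hmem i y hy) _ (by simpa using hmem i 0 hzero) ?_).le
  have hy' : ‖y‖ ≤ 1 := by
    rw [unitCube_eq_ball, mem_ball_zero_iff] at hy
    linarith
  calc dist (((N + 1 : ℕ) : ℝ)⁻¹ • (subcubeCenter (N + 1) i + y))
        (((N + 1 : ℕ) : ℝ)⁻¹ • subcubeCenter (N + 1) i)
      = ((N + 1 : ℕ) : ℝ)⁻¹ * ‖y‖ := by
        rw [dist_eq_norm, ← smul_sub, add_sub_cancel_left, norm_smul, norm_inv, Real.norm_natCast]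
    _ ≤ ((N + 1 : ℕ) : ℝ)⁻¹ * 1 := by gcongr
    _ < δ := by simpa using hN

end Subdivision

section Envelope

variable {n : ℕ} {U V : Type*} [NormedAddCommGroup U] [NormedSpace ℝ U]
  [NormedAddCommGroup V] [NormedSpace ℝ V]

/-- The envelope `y ↦ inf ∫_𝕏 Φ(y + ℬu)` over `u ∈ C_c^∞(𝕏, 𝕌)`, the potential version of the
`𝒜`-quasiconvex envelope. As a real infimum it takes the junk value `0` when the integrals are
not bounded below; `EnvelopeBddBelow` excludes this. -/
def potentialEnvelope (B : (Fin n → ℕ) → (U →L[ℝ] V)) (l : ℕ) (Φ : V → ℝ) (y : V) : ℝ :=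
  ⨅ u : {u : Dom n → U // CcSmooth (unitCube n) u}, ∫ x in unitCube n, Φ (y + opApply B l u.1 x)

/-- The integrals defining `potentialEnvelope B l Φ` are bounded below at some point, hence at
every point when `Φ` is Lipschitz. -/
def EnvelopeBddBelow (B : (Fin n → ℕ) → (U →L[ℝ] V)) (l : ℕ) (Φ : V → ℝ) : Prop :=
  ∃ (z : V) (r : ℝ), ∀ u : Dom n → U, CcSmooth (unitCube n) u →
    r ≤ ∫ x in unitCube n, Φ (z + opApply B l u x)

instance nonempty_ccSmooth : Nonempty {u : Dom n → U // CcSmooth (unitCube n) u} :=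
  ⟨⟨_, ccSmooth_zero⟩⟩

variable {B : (Fin n → ℕ) → (U →L[ℝ] V)} {l : ℕ} {Φ : V → ℝ} {K : NNReal} {u : Dom n → U}

lemma CcSmooth.continuous_opApply (B : (Fin n → ℕ) → (U →L[ℝ] V)) (l : ℕ)
    (hu : CcSmooth (unitCube n) u) : Continuous (opApply B l u) :=
  (contDiff_opApply B l hu.1).continuous

lemma setIntegral_add_opApply_le_of_lipschitz (hΦ : LipschitzWith K Φ)
    (hu : CcSmooth (unitCube n) u) (y y' : V) :
    ∫ x in unitCube n, Φ (y + opApply B l u x) ≤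
      (∫ x in unitCube n, Φ (y' + opApply B l u x)) + K * ‖y - y'‖ :=
  setIntegral_unitCube_le_of_lipschitz hΦ (continuous_const.add (hu.continuous_opApply B l))
    (continuous_const.add (hu.continuous_opApply B l)) fun x _ => by simp

lemma EnvelopeBddBelow.bddBelow_range (hb : EnvelopeBddBelow B l Φ) (hΦ : LipschitzWith K Φ)
    (y : V) :
    BddBelow (Set.range fun u : {u : Dom n → U // CcSmooth (unitCube n) u} =>
      ∫ x in unitCube n, Φ (y + opApply B l u.1 x)) := by
  obtain ⟨z, r, hr⟩ := hb
  refine ⟨r - K * ‖z - y‖, ?_⟩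
  rintro _ ⟨u, rfl⟩
  rw [sub_le_iff_le_add]
  exact (hr u.1 u.2).trans (setIntegral_add_opApply_le_of_lipschitz hΦ u.2 z y)

lemma potentialEnvelope_le (hΦ : LipschitzWith K Φ) (hb : EnvelopeBddBelow B l Φ) (y : V)
    (hu : CcSmooth (unitCube n) u) :
    potentialEnvelope B l Φ y ≤ ∫ x in unitCube n, Φ (y + opApply B l u x) :=
  ciInf_le (hb.bddBelow_range hΦ y) ⟨u, hu⟩

lemma exists_integral_lt_potentialEnvelope_add (B : (Fin n → ℕ) → (U →L[ℝ] V)) (l : ℕ)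
    (Φ : V → ℝ) (y : V) {e : ℝ} (he : 0 < e) :
    ∃ u : Dom n → U, CcSmooth (unitCube n) u ∧
      ∫ x in unitCube n, Φ (y + opApply B l u x) < potentialEnvelope B l Φ y + e := by
  obtain ⟨u, hu⟩ := exists_lt_of_ciInf_lt (lt_add_of_pos_right (potentialEnvelope B l Φ y) he)
  exact ⟨u.1, u.2, hu⟩

lemma le_potentialEnvelope {y : V} {r : ℝ} (h : ∀ u : Dom n → U, CcSmooth (unitCube n) u →
    r ≤ ∫ x in unitCube n, Φ (y + opApply B l u x)) : r ≤ potentialEnvelope B l Φ y :=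
  le_ciInf fun u => h u.1 u.2

lemma potentialEnvelope_le_self (hΦ : LipschitzWith K Φ) (hb : EnvelopeBddBelow B l Φ) (y : V) :
    potentialEnvelope B l Φ y ≤ Φ y := by
  simpa [opApply_zero] using potentialEnvelope_le hΦ hb y ccSmooth_zero

lemma lipschitzWith_potentialEnvelope (hΦ : LipschitzWith K Φ) (hb : EnvelopeBddBelow B l Φ) :
    LipschitzWith K (potentialEnvelope B l Φ) := by
  refine LipschitzWith.of_le_add_mul K fun y y' => ?_
  rw [dist_eq_norm, ← sub_le_iff_le_add]
  refine le_potentialEnvelope fun u hu => ?_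
  rw [sub_le_iff_le_add]
  exact (potentialEnvelope_le hΦ hb y hu).trans (setIntegral_add_opApply_le_of_lipschitz hΦ hu y y')

lemma potentialEnvelope_le_sum_subcubes (hΦ : LipschitzWith K Φ) (hb : EnvelopeBddBelow B l Φ)
    (y : V) {φ : Dom n → U} (hφ : CcSmooth (unitCube n) φ) {N : ℕ} (hN : 0 < N)
    {u : (Fin n → Fin N) → Dom n → U} (hu : ∀ i, CcSmooth (unitCube n) (u i)) :
    potentialEnvelope B l Φ y ≤ ∑ i, ((N : ℝ) ^ n)⁻¹ * ∫ x in unitCube n,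
      Φ (y + opApply B l φ ((N : ℝ)⁻¹ • (subcubeCenter N i + x)) + opApply B l (u i) x) := by
  have hφc := hφ.continuous_opApply B l
  have htile := ccSmooth_tiling hN l hu
  refine (potentialEnvelope_le hΦ hb y (hφ.add htile)).trans_eq ?_
  simp only [opApply_add B l hφ.1 htile.1, ← add_assoc]
  exact setIntegral_opApply_tiling hN B l hu (H := fun x b => Φ (y + opApply B l φ x + b))
    (hΦ.continuous.comp (by fun_prop))

lemma integral_le_integral_potentialEnvelope_of_close (hΦ : LipschitzWith K Φ)
    (hb : EnvelopeBddBelow B l Φ) {y : V} {e : ℝ} {g : Dom n → V} (hg : Continuous g)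
    (hclose : ∀ x ∈ unitCube n, ‖g x - y‖ ≤ e) (hu : CcSmooth (unitCube n) u)
    (hnear : ∫ x in unitCube n, Φ (y + opApply B l u x) ≤ potentialEnvelope B l Φ y + e) :
    ∫ x in unitCube n, Φ (g x + opApply B l u x) ≤
      (∫ x in unitCube n, potentialEnvelope B l Φ (g x)) + (2 * K + 1) * e := by
  have huc := hu.continuous_opApply B l
  have hfreeze : ∫ x in unitCube n, Φ (g x + opApply B l u x) ≤
      (∫ x in unitCube n, Φ (y + opApply B l u x)) + K * e :=
    setIntegral_unitCube_le_of_lipschitz hΦ (hg.add huc) (continuous_const.add huc)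
      fun x hx => by simpa using hclose x hx
  have hrelease : ∫ _ in unitCube n, potentialEnvelope B l Φ y ≤
      (∫ x in unitCube n, potentialEnvelope B l Φ (g x)) + K * e :=
    setIntegral_unitCube_le_of_lipschitz (lipschitzWith_potentialEnvelope hΦ hb)
      continuous_const hg fun x hx => by simpa [norm_sub_rev] using hclose x hx
  rw [integral_const, probReal_univ, one_smul] at hrelease
  linarith

/-- On each cell of a fine subdivision `ℬφ` is nearly constant; correct `φ` there by a rescaled
near-minimizer for that constant. -/
lemma potentialEnvelope_le_integral_potentialEnvelope (hΦ : LipschitzWith K Φ)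
    (hb : EnvelopeBddBelow B l Φ) (y : V) {φ : Dom n → U} (hφ : CcSmooth (unitCube n) φ) :
    potentialEnvelope B l Φ y ≤
      ∫ x in unitCube n, potentialEnvelope B l Φ (y + opApply B l φ x) := by
  have hQ := (lipschitzWith_potentialEnvelope hΦ hb).continuous
  have hφc := hφ.continuous_opApply B l
  suffices hε : ∀ e : ℝ, 0 < e → potentialEnvelope B l Φ y ≤
      (∫ x in unitCube n, potentialEnvelope B l Φ (y + opApply B l φ x)) + (2 * K + 1) * e by
    refine le_of_forall_pos_le_add fun e he => ?_
    simpa only [mul_div_cancel₀ e (by positivity : (2 * K + 1 : ℝ) ≠ 0)] using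
      hε (e / (2 * K + 1)) (by positivity)
  intro e he
  obtain ⟨N, hN, hclose⟩ := exists_subdivision_norm_sub_le hφc he
  choose u hu hnear using fun i : Fin n → Fin N => exists_integral_lt_potentialEnvelope_add B l Φ
    (y + opApply B l φ ((N : ℝ)⁻¹ • subcubeCenter N i)) he
  have hconst : (2 * K + 1) * e = ∑ _i : Fin n → Fin N, ((N : ℝ) ^ n)⁻¹ * ((2 * K + 1) * e) := by
    simp [hN.ne']
  rw [setIntegral_unitCube_eq_sum_subcubes
    (f := fun x => potentialEnvelope B l Φ (y + opApply B l φ x)) hN (hQ.comp (by fun_prop)),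
    hconst, ← Finset.sum_add_distrib]
  refine (potentialEnvelope_le_sum_subcubes hΦ hb y hφ hN hu).trans
    (Finset.sum_le_sum fun i _ => ?_)
  rw [← mul_add]
  gcongr
  exact integral_le_integral_potentialEnvelope_of_close hΦ hb (by fun_prop)
    (fun x hx => by simpa using hclose i x hx) (hu i) (hnear i).le

end Envelope

/-! ## Quasiconvexity with respect to periodic potentials -/

section PeriodicPotentials

open scoped ContDiff

variable {n : ℕ} {U V : Type*} [NormedAddCommGroup U] [NormedSpace ℝ U]
  [NormedAddCommGroup V]

lemma ZPeriodic.setIntegral_unitCube_comp_smul {f : Dom n → ℝ} (hp : ZPeriodic f)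
    (hf : Continuous f) {N : ℕ} (hN : 0 < N) :
    ∫ x in unitCube n, f ((N : ℝ) • x) = ∫ x in unitCube n, f x := by
  rw [setIntegral_unitCube_eq_sum_subcubes (f := fun x => f ((N : ℝ) • x)) hN (by fun_prop)]
  simp [smul_smul, hN.ne', hp.setIntegral_unitCube_add]

/-- The rescaled function `x ↦ N^{-l} w(N x)`, whose `l`-th derivatives are those of `w` at
`N x`. -/
def fastRescaling (N l : ℕ) (w : Dom n → U) : Dom n → U :=
  ((N : ℝ) ^ l)⁻¹ • fun x => w ((N : ℝ) • x)

variable {w : Dom n → U} {N l : ℕ}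

lemma contDiff_fastRescaling (N l : ℕ) (hw : ContDiff ℝ ∞ w) :
    ContDiff ℝ ∞ (fastRescaling N l w) := by
  unfold fastRescaling
  fun_prop

lemma norm_iteratedFDeriv_fastRescaling (hN : 0 < N) (hw : ContDiff ℝ ∞ w) {j : ℕ} (hj : j ≤ l)
    (x : Dom n) : ‖iteratedFDeriv ℝ (l - j) (fastRescaling N l w) x‖ =
      ((N : ℝ) ^ j)⁻¹ * ‖iteratedFDeriv ℝ (l - j) w ((N : ℝ) • x)‖ := by
  have hscaled := iteratedFDeriv_comp_smul_sub (l - j) (N : ℝ) 0 hw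
  simp only [sub_zero] at hscaled
  have hpow : (N : ℝ) ^ l = (N : ℝ) ^ j * (N : ℝ) ^ (l - j) := by
    rw [← pow_add, Nat.add_sub_cancel' hj]
  have hsmooth : ContDiff ℝ (l - j : ℕ) fun x => w ((N : ℝ) • x) :=
    (hw.of_le (WithTop.coe_le_coe.2 le_top)).comp (by fun_prop)
  rw [fastRescaling, iteratedFDeriv_const_smul_apply hsmooth.contDiffAt, hscaled, norm_smul,
    norm_smul, ← mul_assoc, norm_inv, norm_pow, norm_pow, Real.norm_natCast, hpow, mul_inv,
    mul_assoc ((N : ℝ) ^ j)⁻¹, inv_mul_cancel₀ (by positivity), mul_one]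

lemma norm_iteratedFDeriv_cutoff_fastRescaling_le {η : Dom n → ℝ} (hη : ContDiff ℝ ∞ η)
    (hη_le : ∀ x, ‖η x‖ ≤ 1) {E M : ℕ → ℝ} (hE : ∀ j x, ‖iteratedFDeriv ℝ j η x‖ ≤ E j)
    (hw : ContDiff ℝ ∞ w) (hM : ∀ j x, ‖iteratedFDeriv ℝ j w x‖ ≤ M j) (hN : 0 < N) (x : Dom n) :
    ‖iteratedFDeriv ℝ l (fun x => η x • fastRescaling N l w x) x‖ ≤ M l +
      (N : ℝ)⁻¹ * ∑ j ∈ Finset.range l, (l.choose (j + 1) : ℝ) * E (j + 1) * M (l - (j + 1)) := by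
  have hosc (j : ℕ) (hj : j ≤ l) : ‖iteratedFDeriv ℝ (l - j) (fastRescaling N l w) x‖ ≤
      ((N : ℝ) ^ j)⁻¹ * M (l - j) := by
    rw [norm_iteratedFDeriv_fastRescaling hN hw hj]
    gcongr
    exact hM _ _
  refine (norm_iteratedFDeriv_smul_le hη (contDiff_fastRescaling N l hw) x
    (by exact_mod_cast le_top)).trans ?_
  rw [Finset.sum_range_succ', add_comm, Finset.mul_sum]
  refine add_le_add ?_ (Finset.sum_le_sum fun j hj => ?_)
  · simpa using mul_le_mul (hη_le x) (hosc 0 (Nat.zero_le l)) (norm_nonneg _) zero_le_one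
  · have hE0 : 0 ≤ E (j + 1) := (norm_nonneg _).trans (hE _ x)
    have hM0 : 0 ≤ M (l - (j + 1)) := (norm_nonneg _).trans (hM _ x)
    calc (l.choose (j + 1) : ℝ) * ‖iteratedFDeriv ℝ (j + 1) η x‖ *
          ‖iteratedFDeriv ℝ (l - (j + 1)) (fastRescaling N l w) x‖
        ≤ (l.choose (j + 1) : ℝ) * E (j + 1) * (((N : ℝ) ^ (j + 1))⁻¹ * M (l - (j + 1))) := by
          gcongr
          exacts [hE _ _, hosc _ (Finset.mem_range.1 hj)]
      _ ≤ (l.choose (j + 1) : ℝ) * E (j + 1) * ((N : ℝ)⁻¹ * M (l - (j + 1))) := by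
          gcongr
          exact le_self_pow₀ (Nat.one_le_cast.2 hN) j.succ_ne_zero
      _ = _ := by ring

lemma exists_norm_iteratedFDeriv_cutoff_fastRescaling_le {η : Dom n → ℝ} (hη : ContDiff ℝ ∞ η)
    (hηc : HasCompactSupport η) (hη_le : ∀ x, ‖η x‖ ≤ 1) (hw : ContDiff ℝ ∞ w) {M : ℕ → ℝ}
    (hM : ∀ j x, ‖iteratedFDeriv ℝ j w x‖ ≤ M j) (l : ℕ) :
    ∃ N : ℕ, 0 < N ∧
      ∀ x, ‖iteratedFDeriv ℝ l (fun x => η x • fastRescaling N l w x) x‖ ≤ M l + 1 := by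
  choose E hE using fun j : ℕ =>
    (hη.continuous_iteratedFDeriv (m := j)
      (by exact_mod_cast le_top)).bounded_above_of_compact_support (hηc.iteratedFDeriv j)
  obtain ⟨N, hN⟩ := exists_nat_ge
    (∑ j ∈ Finset.range l, (l.choose (j + 1) : ℝ) * E (j + 1) * M (l - (j + 1)))
  refine ⟨N + 1, N.succ_pos, fun x =>
    (norm_iteratedFDeriv_cutoff_fastRescaling_le hη hη_le hE hw hM N.succ_pos x).trans ?_⟩
  gcongr
  rw [inv_mul_le_iff₀ (by positivity)]
  push_cast
  linarith

/-- Cut off `fastRescaling N l w` near the boundary of the cube. -/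
lemma exists_ccSmooth_opApply_eq_opApply_smul [NormedSpace ℝ V] (B : (Fin n → ℕ) → (U →L[ℝ] V))
    (l : ℕ) (hw : ContDiff ℝ ∞ w) (hp : ZPeriodic w) :
    ∃ D : ℝ, (∀ x, ‖opApply B l w x‖ ≤ D) ∧ ∀ δ : ℝ, 0 < δ → δ < 1 / 4 →
      ∃ (N : ℕ) (φ : Dom n → U), 0 < N ∧ CcSmooth (unitCube n) φ ∧ (∀ x, ‖opApply B l φ x‖ ≤ D) ∧
        ∀ x ∈ Metric.ball (0 : Dom n) (1 / 2 - 2 * δ),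
          opApply B l φ x = opApply B l w ((N : ℝ) • x) := by
  choose M _ hM using fun j : ℕ => (hp.iteratedFDeriv j).exists_norm_le
    (hw.continuous_iteratedFDeriv (by exact_mod_cast le_top))
  obtain ⟨C, hC_nonneg, hC⟩ := exists_norm_opApply_le B l
  refine ⟨C * (M l + 1), fun x => (hC w hw x).trans ?_, fun δ hδ hδ_lt => ?_⟩
  · gcongr
    linarith [hM l x]
  let η : ContDiffBump (0 : Dom n) := ⟨1 / 2 - 2 * δ, 1 / 2 - δ, by linarith, by linarith⟩
  obtain ⟨N, hN, hbound⟩ := exists_norm_iteratedFDeriv_cutoff_fastRescaling_le η.contDiff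
    η.hasCompactSupport (fun x => by rw [Real.norm_of_nonneg η.nonneg]; exact η.le_one) hw hM l
  have hosc := contDiff_fastRescaling N l hw
  have hφ : ContDiff ℝ ∞ fun x => η x • fastRescaling N l w x := η.contDiff.smul hosc
  refine ⟨N, fun x => η x • fastRescaling N l w x, hN, ?_, fun x => (hC _ hφ x).trans ?_,
    fun x hx => ?_⟩
  · refine ccSmooth_of_support_subset hφ (K := Metric.closedBall 0 (1 / 2 - δ))
      Metric.isClosed_closedBall (fun x hx => ?_) ?_
    · have hx : x ∈ Function.support η := left_ne_zero_of_smul hx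
      rw [η.support_eq] at hx
      exact Metric.ball_subset_closedBall hx
    · rw [unitCube_eq_ball]
      exact Metric.closedBall_subset_ball (by linarith)
  · gcongr
    exact hbound x
  · have hlocal : (fun x => η x • fastRescaling N l w x) =ᶠ[𝓝 x] fastRescaling N l w := by
      filter_upwards [Metric.isOpen_ball.mem_nhds hx] with x' hx'
      rw [η.one_of_mem_closedBall (Metric.ball_subset_closedBall hx'), one_smul]
    have hscaled := opApply_comp_smul_sub B l (N : ℝ) 0 hw x
    simp only [sub_zero] at hscaled
    rw [opApply_congr_of_eventuallyEq B l hlocal, fastRescaling,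
      opApply_const_smul B l _ (by fun_prop), hscaled, inv_smul_smul₀ (by positivity)]

lemma measureReal_unitCube_diff_ball_le {δ : ℝ} (hδ : 0 ≤ δ) (hδ_lt : δ < 1 / 4) :
    (volume.restrict (unitCube n)).real (unitCube n \ Metric.ball 0 (1 / 2 - 2 * δ)) ≤
      4 * δ * n := by
  rw [measureReal_restrict_apply (measurableSet_unitCube.diff measurableSet_ball),
    Set.inter_eq_left.2 Set.sdiff_subset, unitCube_eq_ball,
    measureReal_sdiff (Metric.ball_subset_ball (by linarith)) measurableSet_ball,
    Measure.real, Measure.real, Real.volume_pi_ball _ (by norm_num),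
    Real.volume_pi_ball _ (by linarith), ENNReal.toReal_ofReal (by positivity),
    ENNReal.toReal_ofReal (pow_nonneg (by linarith) _), Fintype.card_fin,
    show 2 * (1 / 2 - 2 * δ) = 1 + -(4 * δ) by ring]
  have hbernoulli := one_add_mul_le_pow (a := -(4 * δ)) (by linarith) n
  norm_num
  linarith

lemma setIntegral_unitCube_le_add_measureReal {F : V → ℝ} {K : NNReal} (hF : LipschitzWith K F)
    {g g' : Dom n → V} (hg : Continuous g) (hg' : Continuous g') {S : Set (Dom n)}
    (hS : MeasurableSet S) (heq : ∀ x ∈ unitCube n, x ∉ S → g x = g' x) {D : ℝ}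
    (hD : ∀ x, ‖g x - g' x‖ ≤ D) :
    ∫ x in unitCube n, F (g x) ≤
      (∫ x in unitCube n, F (g' x)) + (volume.restrict (unitCube n)).real S * (K * D) := by
  have hbump : Integrable (S.indicator fun _ => K * D) (volume.restrict (unitCube n)) :=
    (integrable_const _).indicator hS
  have hint : IntegrableOn (fun x => F (g' x)) (unitCube n) :=
    integrableOn_unitCube (hF.continuous.comp hg')
  calc ∫ x in unitCube n, F (g x)
      ≤ ∫ x in unitCube n, (F (g' x) + S.indicator (fun _ => K * D) x) := by
        refine setIntegral_mono_on (integrableOn_unitCube (hF.continuous.comp hg))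
          (hint.add hbump) measurableSet_unitCube fun x hx => ?_
        by_cases hxS : x ∈ S
        · rw [Set.indicator_of_mem hxS]
          refine (hF.le_add_mul (g x) (g' x)).trans ?_
          rw [dist_eq_norm]
          gcongr
          exact hD x
        · rw [Set.indicator_of_notMem hxS, add_zero, heq x hx hxS]
    _ = _ := by rw [integral_add hint hbump, integral_indicator_const _ hS, smul_eq_mul]

lemma le_integral_add_opApply_of_zPeriodic [NormedSpace ℝ V] {B : (Fin n → ℕ) → (U →L[ℝ] V)}
    {F : V → ℝ} {K : NNReal} (hF : LipschitzWith K F) {y : V}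
    (hcc : ∀ φ : Dom n → U, CcSmooth (unitCube n) φ →
      F y ≤ ∫ x in unitCube n, F (y + opApply B l φ x))
    (hw : ContDiff ℝ ∞ w) (hp : ZPeriodic w) :
    F y ≤ ∫ x in unitCube n, F (y + opApply B l w x) := by
  obtain ⟨D, hD, happrox⟩ := exists_ccSmooth_opApply_eq_opApply_smul B l hw hp
  have hcont : Continuous (opApply B l w) := (contDiff_opApply B l hw).continuous
  have hcutoff (δ : ℝ) (hδ : 0 < δ) (hδ_lt : δ < 1 / 4) :
      F y ≤ (∫ x in unitCube n, F (y + opApply B l w x)) + 4 * δ * n * (K * (D + D)) := by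
    obtain ⟨N, φ, hN, hφ, hφD, hφ_eq⟩ := happrox δ hδ hδ_lt
    have hD0 : 0 ≤ D := (norm_nonneg _).trans (hD 0)
    have hperiodic : ZPeriodic fun x => F (y + opApply B l w x) := fun x m => by
      simp only [ZPeriodic.opApply B l hp x m]
    rw [← hperiodic.setIntegral_unitCube_comp_smul (hF.continuous.comp (by fun_prop)) hN]
    refine (hcc φ hφ).trans ((setIntegral_unitCube_le_add_measureReal hF
      (continuous_const.add (hφ.continuous_opApply B l)) (by fun_prop)
      (measurableSet_unitCube.diff measurableSet_ball) (fun x hx hxS => ?_)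
      fun x => ?_).trans (add_le_add_right
        (mul_le_mul_of_nonneg_right (measureReal_unitCube_diff_ball_le hδ.le hδ_lt) ?_) _))
    · exact congrArg (y + ·) (hφ_eq x (not_not.1 fun hball => hxS ⟨hx, hball⟩))
    · simpa using norm_sub_le_of_le (hφD x) (hD ((N : ℝ) • x))
    · positivity
  have hlim : Tendsto (fun δ : ℝ => (∫ x in unitCube n, F (y + opApply B l w x)) +
      4 * δ * n * (K * (D + D))) (𝓝[>] 0) (𝓝 (∫ x in unitCube n, F (y + opApply B l w x))) := by
    refine tendsto_nhdsWithin_of_tendsto_nhds ?_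
    exact Continuous.tendsto' (by fun_prop) _ _ (by simp)
  refine ge_of_tendsto hlim ?_
  filter_upwards [Ioo_mem_nhdsGT (show (0 : ℝ) < 1 / 4 by norm_num)] with δ hδ
  exact hcutoff δ hδ.1 hδ.2

end PeriodicPotentials

/-! ## Plane waves -/

section PlaneWaves

open scoped ContDiff

variable {n : ℕ} {U V W : Type*} [NormedAddCommGroup U] [NormedSpace ℝ U]
  [NormedAddCommGroup V] [NormedSpace ℝ V] [NormedAddCommGroup W] [NormedSpace ℝ W]

/-- The real plane wave with frequency `ξ` and phase `θ`. Differentiation advances the phase by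
`π / 2`, which replaces the multiplication by `i` of complex exponentials. -/
def planeWave (ξ : Dom n) (θ : ℝ) (x : Dom n) : ℝ := Real.cos (2 * Real.pi * (ξ ⬝ᵥ x) + θ)

/-- An integer vector as a frequency in `ℝⁿ`. -/
def intFreq (m : Fin n → ℤ) : Dom n := fun i => (m i : ℝ)

lemma contDiff_planeWave (ξ : Dom n) (θ : ℝ) : ContDiff ℝ ∞ (planeWave ξ θ) := by
  unfold planeWave dotProduct
  fun_prop

lemma continuous_planeWave (ξ : Dom n) (θ : ℝ) : Continuous (planeWave ξ θ) :=
  (contDiff_planeWave ξ θ).continuous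

lemma zPeriodic_planeWave (m : Fin n → ℤ) (θ : ℝ) : ZPeriodic (planeWave (intFreq m) θ) := by
  intro x p
  have hphase : 2 * Real.pi * (intFreq m ⬝ᵥ (x + fun i => (p i : ℝ))) + θ =
      2 * Real.pi * (intFreq m ⬝ᵥ x) + θ + ((m ⬝ᵥ p : ℤ) : ℝ) * (2 * Real.pi) := by
    rw [dotProduct_add]
    simp only [intFreq, dotProduct]
    push_cast
    ring
  rw [planeWave, planeWave, hphase, Real.cos_add_int_mul_two_pi]

lemma ZPeriodic.smul {f : Dom n → ℝ} {g : Dom n → V} (hf : ZPeriodic f) (hg : ZPeriodic g) :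
    ZPeriodic fun x => f x • g x := fun x m => by
  simp only [hf x m, hg x m]

lemma pderivDir_planeWave (ξ : Dom n) (θ : ℝ) (j : Fin n) (x : Dom n) :
    pderivDir j (planeWave ξ θ) x = 2 * Real.pi * ξ j * planeWave ξ (θ + Real.pi / 2) x := by
  have hphase : HasFDerivAt (fun x : Dom n => 2 * Real.pi * (ξ ⬝ᵥ x) + θ)
      ((2 * Real.pi) • ∑ i, ξ i • (ContinuousLinearMap.proj i : Dom n →L[ℝ] ℝ)) x := by
    refine (HasFDerivAt.const_mul (HasFDerivAt.fun_sum fun i _ => ?_) _).add_const _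
    exact (ContinuousLinearMap.proj i : Dom n →L[ℝ] ℝ).hasFDerivAt.const_mul _
  have hwave : fderiv ℝ (planeWave ξ θ) x = _ := hphase.cos.fderiv
  rw [pderivDir, hwave, planeWave, ← add_assoc, Real.cos_add_pi_div_two]
  simp [Pi.single_apply]
  ring

lemma pderivDir_smul (j : Fin n) {f : Dom n → ℝ} {g : Dom n → V} (hf : ContDiff ℝ ∞ f)
    (hg : ContDiff ℝ ∞ g) (x : Dom n) :
    pderivDir j (fun x => f x • g x) x = f x • pderivDir j g x + pderivDir j f x • g x := by
  unfold pderivDir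
  rw [fderiv_fun_smul (hf.differentiable (by simp) x) (hg.differentiable (by simp) x)]
  rfl

lemma listDeriv_planeWave_smul (ξ : Dom n) (b : V) (L : List (Fin n)) (θ : ℝ) :
    listDeriv L (fun x => planeWave ξ θ x • b) = fun x =>
      ((L.map fun j => 2 * Real.pi * ξ j).prod) •
        planeWave ξ (θ + L.length * (Real.pi / 2)) x • b := by
  induction L with
  | nil => simp [listDeriv]
  | cons j L ih =>
    have hfactor (θ' : ℝ) (x : Dom n) : pderivDir j (fun x => planeWave ξ θ' x • b) x =
        (2 * Real.pi * ξ j) • planeWave ξ (θ' + Real.pi / 2) x • b := by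
      rw [pderivDir_smul j (contDiff_planeWave ξ θ') contDiff_const, pderivDir_planeWave,
        mul_smul]
      simp [pderivDir]
    have hout (c θ' : ℝ) : listDeriv [j] (fun x => c • planeWave ξ θ' x • b) =
        c • listDeriv [j] (fun x => planeWave ξ θ' x • b) :=
      listDeriv_const_smul [j] c ((contDiff_planeWave ξ θ').smul contDiff_const)
    rw [listDeriv_cons, ih]
    refine (hout _ _).trans (funext fun x => ?_)
    have hphase : θ + L.length * (Real.pi / 2) + Real.pi / 2 =
        θ + (j :: L).length * (Real.pi / 2) := by
      rw [List.length_cons]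
      push_cast
      ring
    rw [Pi.smul_apply, listDeriv_cons]
    refine (congrArg _ (hfactor _ x)).trans ?_
    rw [smul_smul, hphase, List.map_cons, List.prod_cons, mul_comm]

lemma prod_map_mul_multiIndexDirs (c : ℝ) (ξ : Dom n) {k : ℕ} {α : Fin n → ℕ}
    (hα : α ∈ degSet n k) :
    ((multiIndexDirs α).map fun j => c * ξ j).prod = c ^ k * ∏ i, ξ i ^ α i := by
  simp only [prod_map_multiIndexDirs, mul_pow, Finset.prod_mul_distrib,
    Finset.prod_pow_eq_pow_sum, mem_degSet.1 hα]

lemma opApply_planeWave_smul (A : (Fin n → ℕ) → (V →L[ℝ] W)) (k : ℕ) (ξ : Dom n) (θ : ℝ) (b : V)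
    (x : Dom n) :
    opApply A k (fun x => planeWave ξ θ x • b) x =
      ((2 * Real.pi) ^ k * planeWave ξ (θ + k * (Real.pi / 2)) x) • opSymbol A k ξ b := by
  unfold opApply opSymbol
  rw [sum_apply, Finset.smul_sum]
  refine Finset.sum_congr rfl fun α hα => ?_
  rw [mderiv_eq_listDeriv, listDeriv_planeWave_smul, length_multiIndexDirs_of_mem_degSet hα,
    prod_map_mul_multiIndexDirs _ _ hα, map_smul, map_smul, smul_apply,
    smul_smul, smul_smul]
  congr 1
  ring

lemma exists_zPeriodic_opApply_eq_planeWave_smul (B : (Fin n → ℕ) → (U →L[ℝ] V)) (l : ℕ)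
    (m : Fin n → ℤ) (θ : ℝ) (a : U) :
    ∃ w : Dom n → U, ContDiff ℝ ∞ w ∧ ZPeriodic w ∧
      ∀ x, opApply B l w x = planeWave (intFreq m) θ x • opSymbol B l (intFreq m) a := by
  refine ⟨fun x => planeWave (intFreq m) (θ - l * (Real.pi / 2)) x • ((2 * Real.pi) ^ l)⁻¹ • a,
    (contDiff_planeWave _ _).smul contDiff_const,
    (zPeriodic_planeWave _ _).smul fun _ _ => rfl, fun x => ?_⟩
  have hpi : (2 * Real.pi) ^ l ≠ 0 := pow_ne_zero _ (by simp [Real.pi_ne_zero])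
  rw [opApply_planeWave_smul, map_smul, smul_smul, sub_add_cancel, mul_right_comm,
    mul_inv_cancel₀ hpi, one_mul]

end PlaneWaves

section FourierCoefficients

open scoped ContDiff

variable {n : ℕ} {V W : Type*} [NormedAddCommGroup V] [NormedSpace ℝ V]
  [NormedAddCommGroup W] [NormedSpace ℝ W] {v : Dom n → V}

lemma integral_planeWave_smul_pderivDir (m : Fin n → ℤ) (θ : ℝ) (hv : ContDiff ℝ ∞ v)
    (hp : ZPeriodic v) (j : Fin n) :
    ∫ x in unitCube n, planeWave (intFreq m) θ x • pderivDir j v x =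
      (-(2 * Real.pi) * intFreq m j) •
        ∫ x in unitCube n, planeWave (intFreq m) (θ + Real.pi / 2) x • v x := by
  have hwave := contDiff_planeWave (intFreq m) θ
  have hzero := ((zPeriodic_planeWave m θ).smul hp).setIntegral_pderivDir (hwave.smul hv) j
  have hdv : IntegrableOn (fun x => planeWave (intFreq m) θ x • pderivDir j v x) (unitCube n) :=
    integrableOn_unitCube (hwave.continuous.smul (contDiff_pderivDir j hv).continuous)
  have hdwave : IntegrableOn (fun x => (2 * Real.pi * intFreq m j) •
      planeWave (intFreq m) (θ + Real.pi / 2) x • v x) (unitCube n) :=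
    integrableOn_unitCube (((continuous_planeWave _ _).smul hv.continuous).const_smul _)
  simp only [pderivDir_smul j hwave hv, pderivDir_planeWave, mul_smul _ (planeWave _ _ _)] at hzero
  rw [integral_add hdv hdwave, integral_smul] at hzero
  rw [neg_mul, neg_smul]
  exact eq_neg_of_add_eq_zero_left hzero

lemma integral_planeWave_smul_listDeriv (m : Fin n → ℤ) (hv : ContDiff ℝ ∞ v)
    (hp : ZPeriodic v) (L : List (Fin n)) (θ : ℝ) :
    ∫ x in unitCube n, planeWave (intFreq m) θ x • listDeriv L v x =
      (L.map fun j => -(2 * Real.pi) * intFreq m j).prod •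
        ∫ x in unitCube n, planeWave (intFreq m) (θ + L.length * (Real.pi / 2)) x • v x := by
  induction L generalizing θ with
  | nil => simp [listDeriv]
  | cons j L ih =>
    have hphase : θ + Real.pi / 2 + L.length * (Real.pi / 2) =
        θ + (j :: L).length * (Real.pi / 2) := by
      rw [List.length_cons]
      push_cast
      ring
    rw [listDeriv_cons, integral_planeWave_smul_pderivDir m θ (contDiff_listDeriv L hv)
      (hp.listDeriv L), ih, smul_smul, hphase, List.map_cons, List.prod_cons]

lemma opSymbol_fourierCoeff_eq_zero_of_complete [CompleteSpace V] [CompleteSpace W]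
    (A : (Fin n → ℕ) → (V →L[ℝ] W)) (k : ℕ) (m : Fin n → ℤ) (θ : ℝ) (hv : ContDiff ℝ ∞ v)
    (hp : ZPeriodic v) (hA : ∀ x, opApply A k v x = 0) :
    opSymbol A k (intFreq m) (∫ x in unitCube n, planeWave (intFreq m) θ x • v x) = 0 := by
  set θ' := θ - k * (Real.pi / 2) with hθ'
  have hint (α : Fin n → ℕ) :
      IntegrableOn (fun x => planeWave (intFreq m) θ' x • mderiv α v x) (unitCube n) :=
    integrableOn_unitCube ((continuous_planeWave _ _).smul (contDiff_mderiv α hv).continuous)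
  have hterm (α) (hα : α ∈ degSet n k) :
      ∫ x in unitCube n, A α (planeWave (intFreq m) θ' x • mderiv α v x) =
        (-(2 * Real.pi)) ^ k • (∏ i, intFreq m i ^ α i) • A α
          (∫ x in unitCube n, planeWave (intFreq m) θ x • v x) := by
    rw [(A α).integral_comp_comm (hint α), mderiv_eq_listDeriv,
      integral_planeWave_smul_listDeriv m hv hp, prod_map_mul_multiIndexDirs _ _ hα,
      length_multiIndexDirs_of_mem_degSet hα, map_smul, mul_smul, hθ', sub_add_cancel]
  have hpi : (-(2 * Real.pi)) ^ k ≠ 0 := pow_ne_zero _ (by simp [Real.pi_ne_zero])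
  refine (smul_eq_zero_iff_right hpi).1 ?_
  calc (-(2 * Real.pi)) ^ k • opSymbol A k (intFreq m)
        (∫ x in unitCube n, planeWave (intFreq m) θ x • v x)
      = ∑ α ∈ degSet n k,
          ∫ x in unitCube n, A α (planeWave (intFreq m) θ' x • mderiv α v x) := by
        rw [Finset.sum_congr rfl hterm, ← Finset.smul_sum, opSymbol,
          sum_apply]
        rfl
    _ = ∫ x in unitCube n, planeWave (intFreq m) θ' x • opApply A k v x := by
        rw [← integral_finsetSum _ fun α _ => (A α).integrable_comp (hint α)]
        simp only [opApply, Finset.smul_sum, map_smul]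
    _ = 0 := by simp [hA]

lemma opSymbol_fourierCoeff_eq_zero [CompleteSpace V] (A : (Fin n → ℕ) → (V →L[ℝ] W)) (k : ℕ)
    (m : Fin n → ℤ) (θ : ℝ) (hv : ContDiff ℝ ∞ v) (hp : ZPeriodic v)
    (hA : ∀ x, opApply A k v x = 0) :
    opSymbol A k (intFreq m) (∫ x in unitCube n, planeWave (intFreq m) θ x • v x) = 0 := by
  refine SeparatingDual.eq_zero_of_forall_dual_eq_zero (R := ℝ) fun f => ?_
  have hf (x : Dom n) : opApply (fun α => f ∘L A α) k v x = 0 := by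
    simpa [opApply] using congrArg f (hA x)
  simpa [opSymbol] using
    opSymbol_fourierCoeff_eq_zero_of_complete (fun α => f ∘L A α) k m θ hv hp hf

lemma exists_opSymbol_eq_fourierCoeff [CompleteSpace V] {U : Type*} [NormedAddCommGroup U]
    [NormedSpace ℝ U] {A : (Fin n → ℕ) → (V →L[ℝ] W)} {k : ℕ} {B : (Fin n → ℕ) → (U →L[ℝ] V)}
    {l : ℕ} (hexact : ExactPotential A k B l) (hv : ContDiff ℝ ∞ v) (hp : ZPeriodic v)
    (hmean : ∫ x in unitCube n, v x = 0) (hA : ∀ x, opApply A k v x = 0) (m : Fin n → ℤ) (θ : ℝ) :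
    ∃ a, opSymbol B l (intFreq m) a = ∫ x in unitCube n, planeWave (intFreq m) θ x • v x := by
  obtain rfl | hm := eq_or_ne m 0
  · have hconst (x : Dom n) : planeWave (intFreq 0) θ x = Real.cos θ := by
      simp [planeWave, intFreq, dotProduct]
    exact ⟨0, by simp only [hconst, integral_smul, hmean, smul_zero, map_zero]⟩
  · have hne : intFreq m ≠ 0 := fun h =>
      hm (funext fun i => by simpa [intFreq] using congrFun h i)
    exact (hexact _ hne).le (opSymbol_fourierCoeff_eq_zero A k m θ hv hp hA)

end FourierCoefficients

/-! ## Potentials of trigonometric approximations -/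

section CosineKernel

variable {n : ℕ}

/-- The trigonometric polynomial `∏ᵢ cos² (π yᵢ)`. Its powers, normalized to mass one, form an
approximate identity on the torus. -/
def cosineKernel (y : Dom n) : ℝ := ∏ i, (1 + Real.cos (2 * Real.pi * y i)) / 2

lemma continuous_cosineKernel : Continuous (cosineKernel : Dom n → ℝ) := by
  unfold cosineKernel
  fun_prop

lemma one_add_cos_div_two_mem_Icc (s : ℝ) : (1 + Real.cos s) / 2 ∈ Set.Icc 0 1 :=
  ⟨by linarith [Real.neg_one_le_cos s], by linarith [Real.cos_le_one s]⟩

lemma cosineKernel_nonneg (y : Dom n) : 0 ≤ cosineKernel y :=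
  Finset.prod_nonneg fun _ _ => (one_add_cos_div_two_mem_Icc _).1

lemma cosineKernel_zero : cosineKernel (0 : Dom n) = 1 := by
  simp [cosineKernel]

lemma eq_zero_of_cos_two_pi_mul_eq_one {s : ℝ} (hs : |s| < 1)
    (hcos : Real.cos (2 * Real.pi * s) = 1) : s = 0 := by
  obtain ⟨q, hq⟩ := (Real.cos_eq_one_iff _).1 hcos
  have hqs : (q : ℝ) = s :=
    mul_right_cancel₀ Real.two_pi_pos.ne' (hq.trans (mul_comm _ _))
  rw [← hqs] at hs
  have hq0 : q = 0 := Int.abs_lt_one_iff.1 (by exact_mod_cast hs)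
  rw [← hqs, hq0, Int.cast_zero]

lemma cosineKernel_lt_one {y : Dom n} (hy : ∀ i, |y i| < 1) (h0 : y ≠ 0) : cosineKernel y < 1 := by
  obtain ⟨i, hi⟩ := Function.ne_iff.1 h0
  have hfactor : (1 + Real.cos (2 * Real.pi * y i)) / 2 < 1 := by
    refine lt_of_le_of_ne (one_add_cos_div_two_mem_Icc _).2 fun h => hi ?_
    exact eq_zero_of_cos_two_pi_mul_eq_one (hy i) (by linarith)
  rw [cosineKernel, ← Finset.mul_prod_erase _ _ (Finset.mem_univ i)]
  refine (mul_le_of_le_one_right (one_add_cos_div_two_mem_Icc _).1 ?_).trans_lt hfactor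
  exact Finset.prod_le_one (fun _ _ => (one_add_cos_div_two_mem_Icc _).1)
    fun _ _ => (one_add_cos_div_two_mem_Icc _).2

lemma zPeriodic_cosineKernel : ZPeriodic (cosineKernel : Dom n → ℝ) := fun x m => by
  refine Finset.prod_congr rfl fun i _ => ?_
  rw [Pi.add_apply, mul_add, mul_comm _ (m i : ℝ), Real.cos_add_int_mul_two_pi]

variable (n) in
/-- The real trigonometric polynomials on the torus `ℝⁿ / ℤⁿ`. -/
def trigPolynomials : Submodule ℝ (Dom n → ℝ) :=
  Submodule.span ℝ (Set.range fun p : (Fin n → ℤ) × ℝ => planeWave (intFreq p.1) p.2)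

lemma planeWave_mem_trigPolynomials (m : Fin n → ℤ) (θ : ℝ) :
    planeWave (intFreq m) θ ∈ trigPolynomials n :=
  Submodule.subset_span ⟨(m, θ), rfl⟩

lemma one_mem_trigPolynomials : (1 : Dom n → ℝ) ∈ trigPolynomials n := by
  have hone : planeWave (intFreq (0 : Fin n → ℤ)) 0 = 1 := by
    funext x
    simp [planeWave, intFreq, dotProduct]
  exact hone ▸ planeWave_mem_trigPolynomials 0 0

lemma planeWave_mul_planeWave (m m' : Fin n → ℤ) (θ θ' : ℝ) :
    planeWave (intFreq m) θ * planeWave (intFreq m') θ' =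
      (1 / 2 : ℝ) • (planeWave (intFreq (m - m')) (θ - θ') +
        planeWave (intFreq (m + m')) (θ + θ')) := by
  funext x
  have hsub : intFreq (m - m') ⬝ᵥ x = intFreq m ⬝ᵥ x - intFreq m' ⬝ᵥ x := by
    rw [← sub_dotProduct]
    congr 1
    exact funext fun i => Int.cast_sub _ _
  have hadd : intFreq (m + m') ⬝ᵥ x = intFreq m ⬝ᵥ x + intFreq m' ⬝ᵥ x := by
    rw [← add_dotProduct]
    congr 1
    exact funext fun i => Int.cast_add _ _
  have hcos := Real.two_mul_cos_mul_cos (2 * Real.pi * (intFreq m ⬝ᵥ x) + θ)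
    (2 * Real.pi * (intFreq m' ⬝ᵥ x) + θ')
  simp only [Pi.mul_apply, Pi.smul_apply, Pi.add_apply, planeWave, hsub, hadd, smul_eq_mul]
  ring_nf at hcos ⊢
  linarith

lemma mul_mem_trigPolynomials {f g : Dom n → ℝ} (hf : f ∈ trigPolynomials n)
    (hg : g ∈ trigPolynomials n) : f * g ∈ trigPolynomials n := by
  refine Submodule.span_induction₂ (p := fun f g _ _ => f * g ∈ trigPolynomials n)
    ?_ ?_ ?_ ?_ ?_ ?_ ?_ hf hg
  · rintro _ _ ⟨⟨m, θ⟩, rfl⟩ ⟨⟨m', θ'⟩, rfl⟩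
    rw [planeWave_mul_planeWave]
    exact Submodule.smul_mem _ _ (Submodule.add_mem _ (planeWave_mem_trigPolynomials _ _)
      (planeWave_mem_trigPolynomials _ _))
  · exact fun g _ => by simp
  · exact fun f _ => by simp
  · exact fun f₁ f₂ g _ _ _ h₁ h₂ => by simpa only [add_mul] using Submodule.add_mem _ h₁ h₂
  · exact fun f g₁ g₂ _ _ _ h₁ h₂ => by simpa only [mul_add] using Submodule.add_mem _ h₁ h₂
  · exact fun c f g _ _ h => by simpa only [smul_mul_assoc] using Submodule.smul_mem _ c h
  · exact fun c f g _ _ h => by simpa only [mul_smul_comm] using Submodule.smul_mem _ c h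

lemma cosineKernel_pow_mem_trigPolynomials (N : ℕ) :
    (cosineKernel : Dom n → ℝ) ^ N ∈ trigPolynomials n := by
  have hfactor (i : Fin n) :
      (fun x : Dom n => (1 + Real.cos (2 * Real.pi * x i)) / 2) ∈ trigPolynomials n := by
    have hwave (x : Dom n) : planeWave (intFreq (Pi.single i 1)) 0 x =
        Real.cos (2 * Real.pi * x i) := by
      simp [planeWave, intFreq, dotProduct, Pi.single_apply]
    convert Submodule.smul_mem _ (1 / 2 : ℝ) (Submodule.add_mem _ one_mem_trigPolynomials
      (planeWave_mem_trigPolynomials (Pi.single i 1) 0)) using 1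
    funext x
    simp only [Pi.smul_apply, Pi.add_apply, Pi.one_apply, hwave, smul_eq_mul]
    ring
  let S := (trigPolynomials n).toSubalgebra one_mem_trigPolynomials
    fun _ _ => mul_mem_trigPolynomials
  have hprod : (cosineKernel : Dom n → ℝ) =
      ∏ i, fun x : Dom n => (1 + Real.cos (2 * Real.pi * x i)) / 2 := by
    funext x
    rw [Finset.prod_apply, cosineKernel]
  have hmem : (cosineKernel : Dom n → ℝ) ∈ S := hprod ▸ S.prod_mem fun i _ => hfactor i
  exact S.pow_mem hmem N

end CosineKernel

section CosineMean

variable {n : ℕ} {V : Type*} [NormedAddCommGroup V] [NormedSpace ℝ V] {v : Dom n → V}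

/-- The average of `v` over the torus with respect to the normalized `N`-th power of
`cosineKernel (x - ·)`. -/
def cosineMean (v : Dom n → V) (N : ℕ) (x : Dom n) : V :=
  (∫ y in unitCube n, cosineKernel (x - y) ^ N)⁻¹ •
    ∫ y in unitCube n, cosineKernel (x - y) ^ N • v y

lemma tendsto_cosineMean [CompleteSpace V] (hv : Continuous v) {x : Dom n} (hx : x ∈ unitCube n) :
    Tendsto (fun N => cosineMean v N x) atTop (𝓝 (v x)) := by
  unfold cosineMean
  rw [Measure.restrict_congr_set unitCube_ae_eq_closedUnitCube]
  refine tendsto_setIntegral_pow_smul_of_unique_maximum_of_isCompact_of_continuousOn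
    (c := fun y => cosineKernel (x - y)) isCompact_closedUnitCube
    (continuous_cosineKernel.comp (by fun_prop)).continuousOn (fun y hy hne => ?_)
    (fun y _ => cosineKernel_nonneg _) (by simp [cosineKernel_zero]) ?_ hv.continuousOn
  · simp only [sub_self, cosineKernel_zero]
    refine cosineKernel_lt_one (fun i => ?_) (sub_ne_zero.2 hne.symm)
    have hxi := abs_lt.1 (mem_unitCube_iff_abs.1 hx i)
    have hyi := hy i (Set.mem_univ i)
    simp only [Set.mem_Icc, Pi.sub_apply, abs_lt] at hyi ⊢
    constructor <;> linarith [hxi.1, hxi.2, hyi.1, hyi.2]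
  · exact subset_closure (interior_maximal unitCube_subset_closedUnitCube isOpen_unitCube hx)

lemma setIntegral_cosineKernel_sub_pow (N : ℕ) (x : Dom n) :
    ∫ y in unitCube n, cosineKernel (x - y) ^ N = ∫ y in unitCube n, cosineKernel (-y) ^ N := by
  have hp : ZPeriodic fun y : Dom n => cosineKernel (-y) ^ N := fun y m => by
    simp only [neg_add, ← sub_eq_add_neg, zPeriodic_cosineKernel.sub_int]
  rw [← hp.setIntegral_unitCube_add (-x)]
  simp only [neg_add, neg_neg, sub_eq_add_neg, add_comm]

lemma norm_cosineMean_le {M : ℝ} (hM : ∀ x, ‖v x‖ ≤ M) (N : ℕ) (x : Dom n) :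
    ‖cosineMean v N x‖ ≤ M := by
  set mass := ∫ y in unitCube n, cosineKernel (x - y) ^ N with hmass
  have hpow (y : Dom n) : 0 ≤ cosineKernel (x - y) ^ N := pow_nonneg (cosineKernel_nonneg _) _
  have hmass0 : 0 ≤ mass := integral_nonneg hpow
  have hM0 : 0 ≤ M := (norm_nonneg _).trans (hM 0)
  have hnum : ‖∫ y in unitCube n, cosineKernel (x - y) ^ N • v y‖ ≤ mass * M := by
    rw [hmass, ← integral_mul_const]
    refine norm_integral_le_of_norm_le (integrableOn_unitCube
      (((continuous_cosineKernel.comp (by fun_prop)).pow N).mul continuous_const))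
      (Eventually.of_forall fun y => ?_)
    rw [norm_smul, Real.norm_of_nonneg (hpow y)]
    exact mul_le_mul_of_nonneg_left (hM y) (hpow y)
  calc ‖cosineMean v N x‖ = mass⁻¹ * ‖∫ y in unitCube n, cosineKernel (x - y) ^ N • v y‖ := by
        rw [cosineMean, norm_smul, norm_inv, Real.norm_of_nonneg hmass0]
    _ ≤ mass⁻¹ * (mass * M) := mul_le_mul_of_nonneg_left hnum (inv_nonneg.2 hmass0)
    _ = mass⁻¹ * mass * M := (mul_assoc _ _ _).symm
    _ ≤ M := mul_le_of_le_one_left hM0 inv_mul_le_one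

end CosineMean

section PotentialsOfConvolutions

open scoped ContDiff

variable {n k l : ℕ} {U V W : Type*} [NormedAddCommGroup U] [NormedSpace ℝ U]
  [NormedAddCommGroup V] [NormedSpace ℝ V] [CompleteSpace V]
  [NormedAddCommGroup W] [NormedSpace ℝ W]
  {A : (Fin n → ℕ) → (V →L[ℝ] W)} {B : (Fin n → ℕ) → (U →L[ℝ] V)} {v : Dom n → V}

lemma planeWave_sub (m : Fin n → ℤ) (θ : ℝ) (x y : Dom n) :
    planeWave (intFreq m) θ (x - y) =
      planeWave (intFreq m) 0 x * planeWave (intFreq m) (-θ) y +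
        planeWave (intFreq m) (Real.pi / 2) x * planeWave (intFreq m) (Real.pi / 2 - θ) y := by
  simp only [planeWave, dotProduct_sub]
  have hx := Real.cos_add_pi_div_two (2 * Real.pi * (intFreq m ⬝ᵥ x))
  have hy := Real.cos_add_pi_div_two (2 * Real.pi * (intFreq m ⬝ᵥ y) + -θ)
  have hxy := Real.cos_sub (2 * Real.pi * (intFreq m ⬝ᵥ x))
    (2 * Real.pi * (intFreq m ⬝ᵥ y) + -θ)
  ring_nf at hx hy hxy ⊢
  rw [hx, hy, hxy]
  ring

lemma exists_zPeriodic_opApply_eq_planeWave_convolution (hexact : ExactPotential A k B l)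
    (hv : ContDiff ℝ ∞ v) (hp : ZPeriodic v) (hmean : ∫ x in unitCube n, v x = 0)
    (hA : ∀ x, opApply A k v x = 0) (m : Fin n → ℤ) (θ : ℝ) :
    ∃ w : Dom n → U, ContDiff ℝ ∞ w ∧ ZPeriodic w ∧
      ∀ x, opApply B l w x = ∫ y in unitCube n, planeWave (intFreq m) θ (x - y) • v y := by
  obtain ⟨a, ha⟩ := exists_opSymbol_eq_fourierCoeff hexact hv hp hmean hA m (-θ)
  obtain ⟨b, hb⟩ := exists_opSymbol_eq_fourierCoeff hexact hv hp hmean hA m (Real.pi / 2 - θ)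
  obtain ⟨w, hw, hwp, hwe⟩ := exists_zPeriodic_opApply_eq_planeWave_smul B l m 0 a
  obtain ⟨w', hw', hwp', hwe'⟩ := exists_zPeriodic_opApply_eq_planeWave_smul B l m (Real.pi / 2) b
  have hint (c θ' : ℝ) :
      IntegrableOn (fun y => c • planeWave (intFreq m) θ' y • v y) (unitCube n) :=
    integrableOn_unitCube (((continuous_planeWave _ _).smul hv.continuous).const_smul c)
  refine ⟨w + w', hw.add hw', fun x p => congrArg₂ (· + ·) (hwp x p) (hwp' x p), fun x => ?_⟩
  rw [opApply_add B l hw hw', hwe, hwe', ha, hb, ← integral_smul, ← integral_smul,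
    ← integral_add (hint _ _) (hint _ _)]
  simp only [planeWave_sub, add_smul, mul_smul]

lemma continuous_of_mem_trigPolynomials {κ : Dom n → ℝ} (hκ : κ ∈ trigPolynomials n) :
    Continuous κ := by
  induction hκ using Submodule.span_induction with
  | mem κ hκ =>
    obtain ⟨p, rfl⟩ := hκ
    exact continuous_planeWave _ _
  | zero => exact continuous_const
  | add f g _ _ hf hg => exact hf.add hg
  | smul c f _ hf => exact hf.const_smul c

lemma exists_zPeriodic_opApply_eq_convolution (hexact : ExactPotential A k B l)
    (hv : ContDiff ℝ ∞ v) (hp : ZPeriodic v) (hmean : ∫ x in unitCube n, v x = 0)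
    (hA : ∀ x, opApply A k v x = 0) {κ : Dom n → ℝ} (hκ : κ ∈ trigPolynomials n) :
    ∃ w : Dom n → U, ContDiff ℝ ∞ w ∧ ZPeriodic w ∧
      ∀ x, opApply B l w x = ∫ y in unitCube n, κ (x - y) • v y := by
  have hint {f : Dom n → ℝ} (hf : f ∈ trigPolynomials n) (x : Dom n) :
      IntegrableOn (fun y => f (x - y) • v y) (unitCube n) :=
    integrableOn_unitCube
      (((continuous_of_mem_trigPolynomials hf).comp (by fun_prop)).smul hv.continuous)
  induction hκ using Submodule.span_induction with
  | mem κ hκ =>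
    obtain ⟨p, rfl⟩ := hκ
    exact exists_zPeriodic_opApply_eq_planeWave_convolution hexact hv hp hmean hA p.1 p.2
  | zero => exact ⟨0, contDiff_const, fun _ _ => rfl, fun x => by simp [opApply_zero]⟩
  | add f g hf hg ihf ihg =>
    obtain ⟨w, hw, hwp, hwe⟩ := ihf
    obtain ⟨w', hw', hwp', hwe'⟩ := ihg
    refine ⟨w + w', hw.add hw', fun x p => congrArg₂ (· + ·) (hwp x p) (hwp' x p), fun x => ?_⟩
    rw [opApply_add B l hw hw', hwe, hwe', ← integral_add (hint hf x) (hint hg x)]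
    simp only [Pi.add_apply, add_smul]
  | smul c f _ ihf =>
    obtain ⟨w, hw, hwp, hwe⟩ := ihf
    refine ⟨c • w, hw.const_smul c, fun x p => congrArg (c • ·) (hwp x p), fun x => ?_⟩
    rw [opApply_const_smul B l c hw, hwe, ← integral_smul]
    simp only [Pi.smul_apply, smul_assoc]

lemma exists_zPeriodic_opApply_eq_cosineMean (hexact : ExactPotential A k B l)
    (hv : ContDiff ℝ ∞ v) (hp : ZPeriodic v) (hmean : ∫ x in unitCube n, v x = 0)
    (hA : ∀ x, opApply A k v x = 0) (N : ℕ) :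
    ∃ w : Dom n → U, ContDiff ℝ ∞ w ∧ ZPeriodic w ∧ opApply B l w = cosineMean v N := by
  obtain ⟨w, hw, hwp, hwe⟩ := exists_zPeriodic_opApply_eq_convolution hexact hv hp hmean hA
    (cosineKernel_pow_mem_trigPolynomials N)
  refine ⟨(∫ y in unitCube n, cosineKernel (-y) ^ N)⁻¹ • w, hw.const_smul _,
    fun x p => by simp only [Pi.smul_apply, hwp x p], funext fun x => ?_⟩
  rw [opApply_const_smul B l _ hw, hwe, cosineMean, setIntegral_cosineKernel_sub_pow]
  rfl

theorem aQuasiconvex_of_le_integral_add_opApply (hexact : ExactPotential A k B l) {F : V → ℝ}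
    {K : NNReal} (hF : LipschitzWith K F)
    (hcc : ∀ (y : V) (φ : Dom n → U), CcSmooth (unitCube n) φ →
      F y ≤ ∫ x in unitCube n, F (y + opApply B l φ x)) : AQuasiconvex A k F := by
  refine ⟨hF.continuous, fun z v hv hp hmean hA => ?_⟩
  obtain ⟨M, -, hM⟩ := hp.exists_norm_le hv.continuous
  choose w hw hwp hwe using exists_zPeriodic_opApply_eq_cosineMean hexact hv hp hmean hA
  have hlim : Tendsto (fun N => ∫ x in unitCube n, F (z + cosineMean v N x)) atTop
      (𝓝 (∫ x in unitCube n, F (z + v x))) := by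
    refine tendsto_integral_of_dominated_convergence (fun _ => |F z| + K * M) (fun N => ?_)
      (integrable_const _) (fun N => Eventually.of_forall fun x => ?_) ?_
    · rw [← hwe]
      exact (hF.continuous.comp (continuous_const.add
        (contDiff_opApply B l (hw N)).continuous)).aestronglyMeasurable
    · have hdist : |F (z + cosineMean v N x) - F z| ≤ K * M := by
        refine (hF.dist_le_mul _ _).trans ?_
        rw [dist_eq_norm, add_sub_cancel_left]
        gcongr
        exact norm_cosineMean_le hM N x
      rw [Real.norm_eq_abs]
      linarith [abs_sub_abs_le_abs_sub (F (z + cosineMean v N x)) (F z)]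
    · rw [ae_restrict_iff' measurableSet_unitCube]
      exact Eventually.of_forall fun x hx => (hF.continuous.tendsto _).comp
        ((tendsto_cosineMean hv.continuous hx).const_add z)
  refine ge_of_tendsto hlim (Eventually.of_forall fun N => ?_)
  rw [← hwe]
  exact le_integral_add_opApply_of_zPeriodic hF (hcc z) (hw N) (hwp N)

lemma aQuasiconvex_potentialEnvelope (hexact : ExactPotential A k B l) {Φ : V → ℝ} {K : NNReal}
    (hΦ : LipschitzWith K Φ) (hb : EnvelopeBddBelow B l Φ) :
    AQuasiconvex A k (potentialEnvelope B l Φ) :=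
  aQuasiconvex_of_le_integral_add_opApply hexact (lipschitzWith_potentialEnvelope hΦ hb)
    fun y _ hφ => potentialEnvelope_le_integral_potentialEnvelope hΦ hb y hφ

end PotentialsOfConvolutions

/-! ## Increments of Lipschitz functions and their derivative sets -/

section LinearGrowth

variable {V : Type*} [NormedAddCommGroup V] {Φ : V → ℝ}

lemma linearGrowth_of_lipschitz {K : NNReal} (hΦ : LipschitzWith K Φ) : LinearGrowth Φ := by
  refine ⟨|Φ 0| + K, fun z => ?_⟩
  have hdist : |Φ z - Φ 0| ≤ K * ‖z‖ := by simpa [Real.dist_eq] using hΦ.dist_le_mul z 0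
  nlinarith [abs_sub_abs_le_abs_sub (Φ z) (Φ 0), mul_nonneg (abs_nonneg (Φ 0)) (norm_nonneg z),
    NNReal.coe_nonneg K]

lemma LinearGrowth.integrable [MeasurableSpace V] [BorelSpace V] (hΦ : LinearGrowth Φ)
    (hc : Continuous Φ) {μ : Measure V} [IsFiniteMeasure μ]
    (hmom : Integrable (fun v => ‖v‖) μ) : Integrable Φ μ := by
  obtain ⟨c, hgrowth⟩ := hΦ
  exact (((integrable_const (1 : ℝ)).add hmom).const_mul c).mono' hc.aestronglyMeasurable
    (Eventually.of_forall hgrowth)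

end LinearGrowth

section DerivSet

variable {V : Type*} [NormedAddCommGroup V] [InnerProductSpace ℝ V] [FiniteDimensional ℝ V]
  {F : V → ℝ} {K : NNReal}

lemma toDual_symm_fderiv_mem_derivSet {x : V} (hx : DifferentiableAt ℝ F x) :
    (InnerProductSpace.toDual ℝ V).symm (fderiv ℝ F x) ∈ derivSet F :=
  ⟨x, by simpa only [LinearIsometryEquiv.apply_symm_apply] using hx.hasFDerivAt⟩

lemma bddAbove_inner_derivSet (hF : LipschitzWith K F) (w : V) :
    BddAbove ((fun ζ => (inner ℝ ζ w : ℝ)) '' derivSet F) := by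
  refine ⟨K * ‖w‖, ?_⟩
  rintro _ ⟨ζ, ⟨x, hx⟩, rfl⟩
  have hζ : ‖ζ‖ ≤ K := by simpa only [LinearIsometryEquiv.norm_map] using hx.le_of_lipschitz hF
  exact (real_inner_le_norm ζ w).trans (mul_le_mul_of_nonneg_right hζ (norm_nonneg _))

lemma fderiv_le_suppFn_derivSet (hF : LipschitzWith K F) {x : V} (hx : DifferentiableAt ℝ F x)
    (w : V) : fderiv ℝ F x w ≤ suppFn (derivSet F) w :=
  le_csSup (bddAbove_inner_derivSet hF w) ⟨_, toDual_symm_fderiv_mem_derivSet hx, by simp⟩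

variable [MeasurableSpace V] [BorelSpace V]

lemma derivSet_nonempty (hF : LipschitzWith K F) : (derivSet F).Nonempty := by
  obtain ⟨x, hx⟩ := (hF.ae_differentiableAt (μ := (Measure.addHaar : Measure V))).exists
  exact ⟨_, toDual_symm_fderiv_mem_derivSet hx⟩

end DerivSet

section LipschitzIncrement

lemma integrable_lipschitz_comp_const_add {V : Type*} [NormedAddCommGroup V] [MeasurableSpace V]
    [BorelSpace V] {F : V → ℝ} {K : NNReal} (hF : LipschitzWith K F)
    {ρ : Measure V} [IsFiniteMeasure ρ] (hmom : Integrable (fun h => ‖h‖) ρ) (p : V) :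
    Integrable (fun h => F (p + h)) ρ := by
  have hlip : LipschitzWith (K * 1) fun h => F (p + h) := hF.comp (isometry_add_left p).lipschitz
  exact (linearGrowth_of_lipschitz hlip).integrable hlip.continuous hmom

variable {V : Type*} [NormedAddCommGroup V] [InnerProductSpace ℝ V] [FiniteDimensional ℝ V]
  [MeasurableSpace V] [BorelSpace V] {F : V → ℝ} {K : NNReal}

lemma hasDerivAt_integral_lipschitz_line (hF : LipschitzWith K F) {ρ : Measure V}
    [IsFiniteMeasure ρ] (hρ : ρ ≪ Measure.addHaar) (hmom : Integrable (fun h => ‖h‖) ρ)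
    (a w : V) (τ : ℝ) :
    Integrable (fun h => fderiv ℝ F (a + τ • w + h) w) ρ ∧
      HasDerivAt (fun τ : ℝ => ∫ h, F (a + τ • w + h) ∂ρ)
        (∫ h, fderiv ℝ F (a + τ • w + h) w ∂ρ) τ := by
  have hint (p : V) := integrable_lipschitz_comp_const_add hF hmom p
  refine hasDerivAt_integral_of_dominated_loc_of_lip (bound := fun _ => K * ‖w‖)
    (s := Set.univ) (F := fun τ h => F (a + τ • w + h)) univ_mem
    (Eventually.of_forall fun _ => (hint _).1) (hint _)
    ((measurable_fderiv_apply_const ℝ F w).comp (measurable_const_add _)).aestronglyMeasurable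
    (Eventually.of_forall fun h => LipschitzWith.lipschitzOnWith ?_) (integrable_const _) ?_
  · refine LipschitzWith.of_dist_le_mul fun x y => (hF.dist_le_mul _ _).trans_eq ?_
    rw [dist_add_right, dist_add_left, dist_eq_norm, ← sub_smul, norm_smul, Real.coe_nnabs,
      abs_of_nonneg (by positivity), Real.dist_eq, Real.norm_eq_abs]
    ring
  · filter_upwards [hρ.ae_le ((eventually_add_left_iff Measure.addHaar (a + τ • w)).2
      hF.ae_differentiableAt)] with h hdiff
    have hline : HasDerivAt (fun τ : ℝ => a + τ • w + h) w τ := by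
      simpa using (((hasDerivAt_id τ).smul_const w).const_add a).add_const h
    exact hdiff.hasFDerivAt.comp_hasDerivAt τ hline

lemma integral_lipschitz_line_le (hF : LipschitzWith K F) {ρ : Measure V}
    [IsProbabilityMeasure ρ] (hρ : ρ ≪ Measure.addHaar) (hmom : Integrable (fun h => ‖h‖) ρ)
    (a w : V) {t : ℝ} (ht : 0 ≤ t) :
    ∫ h, F (a + t • w + h) ∂ρ ≤ (∫ h, F (a + h) ∂ρ) + t * suppFn (derivSet F) w := by
  set s := suppFn (derivSet F) w
  have hderiv (τ : ℝ) := hasDerivAt_integral_lipschitz_line hF hρ hmom a w τ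
  have hderiv_le (τ : ℝ) : deriv (fun τ : ℝ => ∫ h, F (a + τ • w + h) ∂ρ) τ ≤ s := by
    rw [(hderiv τ).2.deriv]
    calc ∫ h, fderiv ℝ F (a + τ • w + h) w ∂ρ ≤ ∫ _, s ∂ρ := by
          refine integral_mono_ae (hderiv τ).1 (integrable_const _) ?_
          filter_upwards [hρ.ae_le ((eventually_add_left_iff Measure.addHaar (a + τ • w)).2
            hF.ae_differentiableAt)] with h hdiff
          exact fderiv_le_suppFn_derivSet hF hdiff w
      _ = s := by simp
  have hmean_value := image_sub_le_mul_sub_of_deriv_le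
    (fun τ => (hderiv τ).2.differentiableAt) hderiv_le ht
  simp only [zero_smul, add_zero, sub_zero] at hmean_value
  linarith

theorem lipschitz_add_smul_le_suppFn_derivSet (hF : LipschitzWith K F) (a w : V) {t : ℝ}
    (ht : 0 ≤ t) : F (a + t • w) ≤ F a + t * suppFn (derivSet F) w := by
  refine le_of_forall_pos_le_add fun ε hε => ?_
  obtain ⟨r, hr, hKr⟩ : ∃ r > 0, 2 * K * r < ε := by
    refine ⟨ε / (2 * K + 1), by positivity, ?_⟩
    rw [mul_div_assoc', div_lt_iff₀ (by positivity)]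
    linarith
  set b := Metric.ball (0 : V) r
  let ρ : Measure V := ProbabilityTheory.cond Measure.addHaar b
  have : IsProbabilityMeasure ρ := ProbabilityTheory.cond_isProbabilityMeasure_of_finite
    (Metric.measure_ball_pos _ 0 hr).ne' measure_ball_lt_top.ne
  have hsupp : ∀ᵐ h ∂ρ, h ∈ b := ProbabilityTheory.ae_cond_mem measurableSet_ball
  have hmom : Integrable (fun h => ‖h‖) ρ := by
    refine Integrable.of_bound continuous_norm.aestronglyMeasurable r (hsupp.mono fun h hh => ?_)
    rw [norm_norm]
    exact (mem_ball_zero_iff.1 hh).le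
  have hint (p : V) := integrable_lipschitz_comp_const_add hF hmom p
  have hle := integral_lipschitz_line_le hF ProbabilityTheory.cond_absolutelyContinuous hmom a w ht
  obtain ⟨h, hh, hincr⟩ := exists_notMem_null_le_integral
    ((hint (a + t • w)).sub (hint a)) hsupp
  rw [integral_sub' (hint _) (hint _)] at hincr
  have hclose (p : V) : |F (p + h) - F p| ≤ K * r := by
    refine (hF.dist_le_mul _ _).trans ?_
    rw [dist_eq_norm, add_sub_cancel_left]
    gcongr
    exact (mem_ball_zero_iff.1 (not_not.1 hh)).le
  simp only [Pi.sub_apply] at hincr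
  linarith [abs_le.1 (hclose a), abs_le.1 (hclose (a + t • w))]

end LipschitzIncrement

/-! ## Integrands as functions on the closed unit ball -/

section Recession

variable {V : Type*} [NormedAddCommGroup V] [NormedSpace ℝ V] {Φ g : V → ℝ}

lemma HasRec.rrec_eq (h : HasRec Φ g) (z : V) : rrec Φ z = g z :=
  (TendstoLocallyUniformlyOn.tendsto_at (tendstoLocallyUniformlyOn_univ.2 h)
    (Set.mem_univ z)).limsup_eq

lemma HasRec.continuous (h : HasRec Φ g) (hΦ : Continuous Φ) : Continuous g :=
  TendstoLocallyUniformly.continuous h <| Eventually.frequently <| Eventually.of_forall fun t =>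
    (hΦ.comp (continuous_const_smul t)).div_const t

lemma hasRec_of_abs_sub_le {C : ℝ} (hC : ∀ z, |Φ z - g z| ≤ C)
    (hg : ∀ s : ℝ, 0 < s → ∀ z, g (s • z) = s * g z) : HasRec Φ g := by
  refine TendstoUniformly.tendstoLocallyUniformly (Metric.tendstoUniformly_iff.2 fun e he => ?_)
  filter_upwards [eventually_gt_atTop 0, eventually_gt_atTop (C / e)] with s hs hse z
  have hdiff : Φ (s • z) / s - g z = (Φ (s • z) - g (s • z)) / s := by
    rw [hg s hs]; field_simp
  rw [dist_comm, Real.dist_eq, hdiff, abs_div, abs_of_pos hs, div_lt_iff₀ hs, mul_comm]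
  exact (hC _).trans_lt ((div_lt_iff₀ he).1 hse)

end Recession

section BallIntegrand

/-- The closed unit ball of `V`, a compactification of `V` through `ballPoint 1` whose boundary
sphere collects the directions at infinity. -/
abbrev UnitClosedBall (V : Type*) [NormedAddCommGroup V] := Metric.closedBall (0 : V) 1

/-- The inclusion of the unit sphere into the closed unit ball. -/
def sphereToBall {V : Type*} [NormedAddCommGroup V] (w : Metric.sphere (0 : V) 1) :
    UnitClosedBall V :=
  Set.inclusion Metric.sphere_subset_closedBall w

lemma continuous_sphereToBall {V : Type*} [NormedAddCommGroup V] :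
    Continuous (sphereToBall : Metric.sphere (0 : V) 1 → UnitClosedBall V) :=
  continuous_inclusion Metric.sphere_subset_closedBall

variable {V : Type*} [NormedAddCommGroup V] [NormedSpace ℝ V]

/-- The point `z / (c + ‖z‖)` of the closed unit ball: for `c = 1` this is the compactifying
embedding of `V`, for `c = 0` the direction of `z` (and `0` when `z = 0`). -/
def ballPoint (c : NNReal) (z : V) : UnitClosedBall V :=
  ⟨((c : ℝ) + ‖z‖)⁻¹ • z, by
    rw [mem_closedBall_zero_iff, norm_smul, norm_inv, Real.norm_of_nonneg (by positivity),
      inv_mul_eq_div]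
    exact div_le_one_of_le₀ (le_add_of_nonneg_left c.coe_nonneg) (by positivity)⟩

/-- The integrand `z ↦ (c + ‖z‖) f(z / (c + ‖z‖))`. For `c = 1` this inverts the transform
`Tfun`; for `c = 0` it is the `1`-homogeneous extension of the restriction of `f` to the sphere. -/
def ballIntegrand (c : NNReal) (f : UnitClosedBall V → ℝ) (z : V) : ℝ :=
  ((c : ℝ) + ‖z‖) * f (ballPoint c z)

lemma add_norm_smul_ballPoint (c : NNReal) (z : V) :
    ((c : ℝ) + ‖z‖) • (ballPoint c z : V) = z := by
  rcases eq_or_ne z 0 with rfl | hz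
  · simp [ballPoint]
  · exact smul_inv_smul₀ (by positivity) z

lemma norm_ballPoint_le_one (c : NNReal) (z : V) : ‖(ballPoint c z : V)‖ ≤ 1 :=
  mem_closedBall_zero_iff.1 (ballPoint c z).2

lemma continuous_ballPoint_one : Continuous (ballPoint 1 : V → UnitClosedBall V) := by
  refine Continuous.subtype_mk (Continuous.smul (Continuous.inv₀ (by fun_prop) fun z => ?_)
    continuous_id) _
  rw [NNReal.coe_one]
  positivity

lemma add_norm_mul_dist_ballPoint_le (c : NNReal) (z z' : V) :
    ((c : ℝ) + ‖z'‖) * dist (ballPoint c z) (ballPoint c z') ≤ 2 * ‖z - z'‖ := by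
  have hdecomp : ((c : ℝ) + ‖z'‖) • ((ballPoint c z : V) - ballPoint c z') =
      (z - z') + (‖z'‖ - ‖z‖) • (ballPoint c z : V) := by
    have hz := add_norm_smul_ballPoint c z
    have hz' := add_norm_smul_ballPoint c z'
    linear_combination (norm := module) hz - hz'
  calc ((c : ℝ) + ‖z'‖) * dist (ballPoint c z) (ballPoint c z')
      = ‖((c : ℝ) + ‖z'‖) • ((ballPoint c z : V) - ballPoint c z')‖ := by
        rw [Subtype.dist_eq, dist_eq_norm, norm_smul, Real.norm_of_nonneg (by positivity)]
    _ ≤ ‖z - z'‖ + |‖z'‖ - ‖z‖| * ‖(ballPoint c z : V)‖ := by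
        rw [hdecomp, ← Real.norm_eq_abs, ← norm_smul]
        exact norm_add_le _ _
    _ ≤ ‖z - z'‖ + ‖z - z'‖ * 1 := by
        gcongr
        · rw [abs_sub_comm]
          exact abs_norm_sub_norm_le z z'
        · exact norm_ballPoint_le_one c z
    _ = 2 * ‖z - z'‖ := by ring

lemma lipschitzWith_ballIntegrand (c : NNReal) {f : UnitClosedBall V → ℝ} {K M : NNReal}
    (hf : LipschitzWith K f) (hM : ∀ x, |f x| ≤ M) :
    LipschitzWith (M + 2 * K) (ballIntegrand c f) := by
  refine LipschitzWith.of_dist_le_mul fun z z' => ?_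
  rw [Real.dist_eq, dist_eq_norm]
  have hvalue : |(‖z‖ - ‖z'‖) * f (ballPoint c z)| ≤ M * ‖z - z'‖ := by
    rw [abs_mul, mul_comm]
    exact mul_le_mul (hM _) (abs_norm_sub_norm_le z z') (abs_nonneg _) M.coe_nonneg
  have hpoint : |((c : ℝ) + ‖z'‖) * (f (ballPoint c z) - f (ballPoint c z'))| ≤
      K * (2 * ‖z - z'‖) := by
    rw [abs_mul, abs_of_nonneg (by positivity : (0 : ℝ) ≤ c + ‖z'‖)]
    calc ((c : ℝ) + ‖z'‖) * |f (ballPoint c z) - f (ballPoint c z')|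
        ≤ ((c : ℝ) + ‖z'‖) * (K * dist (ballPoint c z) (ballPoint c z')) := by
          gcongr
          exact hf.dist_le_mul _ _
      _ = K * (((c : ℝ) + ‖z'‖) * dist (ballPoint c z) (ballPoint c z')) := by ring
      _ ≤ K * (2 * ‖z - z'‖) :=
          mul_le_mul_of_nonneg_left (add_norm_mul_dist_ballPoint_le c z z') K.coe_nonneg
  calc |ballIntegrand c f z - ballIntegrand c f z'|
      = |(‖z‖ - ‖z'‖) * f (ballPoint c z) +
          ((c : ℝ) + ‖z'‖) * (f (ballPoint c z) - f (ballPoint c z'))| := by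
        unfold ballIntegrand
        ring_nf
    _ ≤ M * ‖z - z'‖ + K * (2 * ‖z - z'‖) := (abs_add_le _ _).trans (add_le_add hvalue hpoint)
    _ = ((M + 2 * K : NNReal) : ℝ) * ‖z - z'‖ := by push_cast; ring

lemma norm_mul_dist_ballPoint_le_one (z : V) :
    ‖z‖ * dist (ballPoint 1 z) (ballPoint 0 z) ≤ 1 := by
  have hdecomp : ‖z‖ • ((ballPoint 1 z : V) - ballPoint 0 z) = -(ballPoint 1 z : V) := by
    have hone := add_norm_smul_ballPoint 1 z
    have hzero := add_norm_smul_ballPoint 0 z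
    simp only [NNReal.coe_one, NNReal.coe_zero, zero_add] at hone hzero
    linear_combination (norm := module) hone - hzero
  calc ‖z‖ * dist (ballPoint 1 z) (ballPoint 0 z)
      = ‖‖z‖ • ((ballPoint 1 z : V) - ballPoint 0 z)‖ := by
        rw [Subtype.dist_eq, dist_eq_norm, norm_smul, norm_norm]
    _ ≤ 1 := by
        rw [hdecomp, norm_neg]
        exact norm_ballPoint_le_one 1 z

lemma abs_ballIntegrand_one_sub_zero_le {f : UnitClosedBall V → ℝ} {K M : NNReal}
    (hf : LipschitzWith K f) (hM : ∀ x, |f x| ≤ M) (z : V) :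
    |ballIntegrand 1 f z - ballIntegrand 0 f z| ≤ M + K := by
  have hpoint : ‖z‖ * |f (ballPoint 1 z) - f (ballPoint 0 z)| ≤ K :=
    calc ‖z‖ * |f (ballPoint 1 z) - f (ballPoint 0 z)|
        ≤ ‖z‖ * (K * dist (ballPoint 1 z) (ballPoint 0 z)) := by
          gcongr
          exact hf.dist_le_mul _ _
      _ = K * (‖z‖ * dist (ballPoint 1 z) (ballPoint 0 z)) := by ring
      _ ≤ K * 1 := by
          gcongr
          exact norm_mul_dist_ballPoint_le_one z
      _ = K := mul_one _
  calc |ballIntegrand 1 f z - ballIntegrand 0 f z|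
      = |f (ballPoint 1 z) + ‖z‖ * (f (ballPoint 1 z) - f (ballPoint 0 z))| := by
        unfold ballIntegrand
        push_cast
        ring_nf
    _ ≤ |f (ballPoint 1 z)| + ‖z‖ * |f (ballPoint 1 z) - f (ballPoint 0 z)| := by
        refine (abs_add_le _ _).trans_eq ?_
        rw [abs_mul, abs_norm]
    _ ≤ M + K := add_le_add (hM _) hpoint

lemma ballIntegrand_zero_smul (f : UnitClosedBall V → ℝ) {s : ℝ} (hs : 0 < s) (z : V) :
    ballIntegrand 0 f (s • z) = s * ballIntegrand 0 f z := by
  have hpoint : ballPoint 0 (s • z) = ballPoint 0 z := by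
    refine Subtype.ext ?_
    simp only [ballPoint, NNReal.coe_zero, zero_add, norm_smul, Real.norm_of_nonneg hs.le,
      smul_smul]
    congr 1
    field_simp
  simp only [ballIntegrand, hpoint, norm_smul, Real.norm_of_nonneg hs.le, NNReal.coe_zero, zero_add,
    mul_assoc]

lemma ballIntegrand_zero_sphere (f : UnitClosedBall V → ℝ) (w : Metric.sphere (0 : V) 1) :
    ballIntegrand 0 f (w : V) = f (sphereToBall w) := by
  simp [ballIntegrand, ballPoint, sphereToBall, Set.inclusion]

lemma continuous_ballIntegrand_one {f : UnitClosedBall V → ℝ} (hf : Continuous f) :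
    Continuous (ballIntegrand 1 f) :=
  (continuous_const.add continuous_norm).mul (hf.comp continuous_ballPoint_one)

end BallIntegrand

section TransformContinuity

lemma tendsto_inv_one_sub_norm {V : Type*} [NormedAddCommGroup V] {x : V} (hx : ‖x‖ = 1) :
    Tendsto (fun y : V => (1 - ‖y‖)⁻¹) (𝓝[{y | ‖y‖ < 1}] x) atTop := by
  refine Tendsto.inv_tendsto_nhdsGT_zero (tendsto_nhdsWithin_iff.2 ⟨?_, ?_⟩)
  · have hcont : Continuous fun y : V => 1 - ‖y‖ := by fun_prop
    simpa [hx] using (hcont.tendsto x).mono_left nhdsWithin_le_nhds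
  · filter_upwards [self_mem_nhdsWithin] with y hy
    exact sub_pos.2 hy

variable {V : Type*} [NormedAddCommGroup V] [NormedSpace ℝ V] {Φ g : V → ℝ}

lemma Tfun_of_norm_lt_one {y : V} (hy : ‖y‖ < 1) :
    Tfun Φ y = Φ ((1 - ‖y‖)⁻¹ • y) / (1 - ‖y‖)⁻¹ := by
  rw [Tfun, if_pos hy, transf, div_inv_eq_mul, mul_comm]

lemma HasRec.Tfun_of_one_le_norm (hg : HasRec Φ g) {y : V} (hy : 1 ≤ ‖y‖) : Tfun Φ y = g y := by
  rw [Tfun, if_neg hy.not_gt, hg.rrec_eq]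

lemma continuousAt_Tfun_of_norm_lt_one (hΦ : Continuous Φ) {x : V} (hx : ‖x‖ < 1) :
    ContinuousAt (Tfun Φ) x := by
  have hev : Tfun Φ =ᶠ[𝓝 x] transf Φ := by
    filter_upwards [continuous_norm.continuousAt.eventually_lt continuousAt_const hx] with y hy
    exact if_pos hy
  have hfactor : ContinuousAt (fun y : V => 1 - ‖y‖) x := by fun_prop
  exact (hfactor.mul (hΦ.continuousAt.comp'
    ((hfactor.inv₀ (by linarith)).smul continuousAt_id))).congr hev.symm

lemma HasRec.tendsto_Tfun_of_norm_eq_one (hg : HasRec Φ g) (hΦ : Continuous Φ) {x : V}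
    (hx : ‖x‖ = 1) : Tendsto (Tfun Φ) (𝓝[{y | ‖y‖ < 1}] x) (𝓝 (g x)) := by
  refine Metric.tendsto_nhds.2 fun e he => ?_
  obtain ⟨s, hs, hunif⟩ := Metric.tendstoLocallyUniformly_iff.1 hg (e / 2) (half_pos he) x
  filter_upwards [nhdsWithin_le_nhds hs, self_mem_nhdsWithin,
    (tendsto_inv_one_sub_norm hx).eventually hunif,
    nhdsWithin_le_nhds ((hg.continuous hΦ).continuousAt (Metric.ball_mem_nhds _ (half_pos he)))]
    with y hys hy hclose hgy
  rw [Tfun_of_norm_lt_one hy]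
  have htri := dist_triangle_left (Φ ((1 - ‖y‖)⁻¹ • y) / (1 - ‖y‖)⁻¹) (g x) (g y)
  linarith [hclose y hys, Metric.mem_ball.1 hgy]

lemma HasRec.continuous_Tfun (hg : HasRec Φ g) (hΦ : Continuous Φ) : Continuous (Tfun Φ) := by
  refine continuous_iff_continuousAt.2 fun x => ?_
  rcases lt_or_ge ‖x‖ 1 with hx | hx
  · exact continuousAt_Tfun_of_norm_lt_one hΦ hx
  · have hinside : Tendsto (Tfun Φ) (𝓝[{y | ‖y‖ < 1}] x) (𝓝 (g x)) := by
      rcases hx.eq_or_lt with hx | hx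
      · exact hg.tendsto_Tfun_of_norm_eq_one hΦ hx.symm
      · have hbot : 𝓝[{y : V | ‖y‖ < 1}] x = ⊥ := by
          rw [← notMem_closure_iff_nhdsWithin_eq_bot]
          intro hmem
          have := closure_lt_subset_le continuous_norm continuous_const hmem
          exact hx.not_ge this
        rw [hbot]
        exact tendsto_bot
    have houtside : Tendsto (Tfun Φ) (𝓝[{y | ‖y‖ < 1}ᶜ] x) (𝓝 (g x)) := by
      refine (((hg.continuous hΦ).tendsto x).mono_left nhdsWithin_le_nhds).congr' ?_
      filter_upwards [self_mem_nhdsWithin] with y hy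
      exact (hg.Tfun_of_one_le_norm (not_lt.1 hy)).symm
    rw [ContinuousAt, hg.Tfun_of_one_le_norm hx, ← nhdsWithin_univ,
      ← Set.union_compl_self {y : V | ‖y‖ < 1}, nhdsWithin_union]
    exact hinside.sup houtside

lemma ballIntegrand_Tfun (Φ : V → ℝ) (z : V) :
    ballIntegrand 1 (fun x : UnitClosedBall V => Tfun Φ x) z = Φ z := by
  have hpos : 0 < 1 + ‖z‖ := by positivity
  have hnorm : 1 - ‖(ballPoint 1 z : V)‖ = (1 + ‖z‖)⁻¹ := by
    simp only [ballPoint, NNReal.coe_one, norm_smul, norm_inv, Real.norm_of_nonneg hpos.le]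
    field_simp
    ring
  have hlt : ‖(ballPoint 1 z : V)‖ < 1 := by linarith [inv_pos.2 hpos]
  have hsmul := add_norm_smul_ballPoint 1 z
  rw [NNReal.coe_one] at hsmul
  rw [ballIntegrand, Tfun_of_norm_lt_one hlt, hnorm, inv_inv, NNReal.coe_one, hsmul,
    mul_div_cancel₀ _ hpos.ne']

lemma MemH.exists_ballIntegrand_eq (hΦ : MemH Φ) : ∃ f : C(UnitClosedBall V, ℝ),
    (∀ z, ballIntegrand 1 f z = Φ z) ∧ ∀ w, f (sphereToBall w) = rrec Φ (w : V) := by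
  obtain ⟨hc, -, g, hg⟩ := hΦ
  refine ⟨⟨_, (hg.continuous_Tfun hc).comp continuous_subtype_val⟩, ballIntegrand_Tfun Φ,
    fun w => ?_⟩
  have hw : ¬ ‖(w : V)‖ < 1 := by simp
  exact if_neg hw

end TransformContinuity

/-! ## Separation and weak convergence -/

section Separation

variable {E : Type*} [NormedAddCommGroup E] [NormedSpace ℝ E] {S : Set E}

lemma convex_of_midpoint_mem (hS : IsClosed S) (hmid : ∀ x ∈ S, ∀ y ∈ S, midpoint ℝ x y ∈ S) :
    Convex ℝ S := by
  rw [convex_iff_segment_subset]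
  intro x hx y hy
  rw [segment_eq_image_lineMap]
  rintro _ ⟨s, hs, rfl⟩
  by_contra hsS
  set L := AffineMap.lineMap (k := ℝ) x y
  have hclosed : IsClosed (L ⁻¹' S) := hS.preimage AffineMap.lineMap_continuous
  obtain ⟨a, ⟨haS, ha⟩, hamax⟩ := (isCompact_Icc.inter_left hclosed).exists_isGreatest
    ⟨0, by simpa [L] using hx, le_rfl, hs.1⟩
  obtain ⟨b, ⟨hbS, hb⟩, hbmin⟩ := (isCompact_Icc.inter_left hclosed).exists_isLeast
    ⟨1, by simpa [L] using hy, hs.2, le_rfl⟩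
  have hmidS : L ((a + b) / 2) ∈ S := by
    convert hmid _ haS _ hbS using 1
    rw [← L.map_midpoint, midpoint_eq_smul_add, smul_eq_mul, invOf_eq_inv, inv_mul_eq_div]
  have has : a < s := lt_of_le_of_ne ha.2 fun h => hsS (h ▸ haS)
  have hsb : s < b := lt_of_le_of_ne hb.1 fun h => hsS (h ▸ hbS)
  rcases le_total ((a + b) / 2) s with h | h
  · linarith [hamax ⟨hmidS, by linarith [ha.1, hs.1], h⟩]
  · linarith [hbmin ⟨hmidS, h, by linarith [hb.2]⟩]

lemma mem_closure_of_forall_le_dual (hmid : ∀ x ∈ S, ∀ y ∈ S, midpoint ℝ x y ∈ S) {y : E}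
    (hy : ∀ (φ : StrongDual ℝ E) (r : ℝ), (∀ x ∈ S, r ≤ φ x) → r ≤ φ y) : y ∈ closure S := by
  have hconv : Convex ℝ (closure S) :=
    convex_of_midpoint_mem isClosed_closure fun x hx x' hx' =>
      map_mem_closure₂ (by simp only [Function.uncurry_def, midpoint_eq_smul_add]; fun_prop)
        hx hx' hmid
  by_contra hyS
  obtain ⟨φ, r, hφy, hφS⟩ := geometric_hahn_banach_point_closed hconv isClosed_closure hyS
  exact hφy.not_ge (hy φ r fun x hx => (hφS x (subset_closure hx)).le)

end Separation

section LipschitzFunctions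

variable (X : Type*) [MetricSpace X] [CompactSpace X]

/-- The algebra of Lipschitz functions on a compact metric space, a dense subalgebra of the
algebra of continuous functions. -/
def lipschitzSubalgebra : Subalgebra ℝ C(X, ℝ) where
  carrier := {f | ∃ K : NNReal, LipschitzWith K f}
  mul_mem' := by
    rintro f g ⟨K, hf⟩ ⟨L, hg⟩
    refine ⟨‖f‖₊ * L + ‖g‖₊ * K, LipschitzWith.of_dist_le_mul fun x y => ?_⟩
    have hsplit : (f * g) x - (f * g) y = f x * (g x - g y) + g y * (f x - f y) := by
      simp only [ContinuousMap.mul_apply]; ring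
    have hfirst : ‖f x * (g x - g y)‖ ≤ ‖f‖ * (L * dist x y) :=
      norm_mul_le_of_le (f.norm_coe_le_norm x) (hg.dist_le_mul x y)
    have hsecond : ‖g y * (f x - f y)‖ ≤ ‖g‖ * (K * dist x y) :=
      norm_mul_le_of_le (g.norm_coe_le_norm y) (hf.dist_le_mul x y)
    calc dist ((f * g) x) ((f * g) y)
        ≤ ‖f‖ * (L * dist x y) + ‖g‖ * (K * dist x y) := by
          rw [dist_eq_norm, hsplit]
          exact norm_add_le_of_le hfirst hsecond
      _ = ((‖f‖₊ * L + ‖g‖₊ * K : NNReal) : ℝ) * dist x y := by push_cast; ring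
  add_mem' := by
    rintro f g ⟨K, hf⟩ ⟨L, hg⟩
    exact ⟨K + L, hf.add hg⟩
  algebraMap_mem' r := ⟨0, LipschitzWith.const r⟩

lemma dense_lipschitzSubalgebra : Dense (lipschitzSubalgebra X : Set C(X, ℝ)) := by
  rw [dense_iff_closure_eq, ← Subalgebra.topologicalClosure_coe,
    ContinuousMap.subalgebra_topologicalClosure_eq_top_of_separatesPoints, Algebra.coe_top]
  refine fun x y hxy => ⟨fun z => dist z x,
    ⟨⟨fun z => dist z x, by fun_prop⟩, ⟨1, LipschitzWith.dist_left x⟩, rfl⟩, ?_⟩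
  simpa [eq_comm] using hxy

lemma exists_denseRange_lipschitz :
    ∃ f : ℕ → C(X, ℝ), DenseRange f ∧ ∀ i, f i ∈ lipschitzSubalgebra X := by
  have : Nonempty (lipschitzSubalgebra X) := ⟨0⟩
  exact ⟨_, (dense_lipschitzSubalgebra X).denseRange_val.comp
    (TopologicalSpace.denseRange_denseSeq _) continuous_subtype_val, fun i =>
    (TopologicalSpace.denseSeq (lipschitzSubalgebra X) i).2⟩

end LipschitzFunctions

section WeakConvergence

variable {X : Type*} [TopologicalSpace X] [CompactSpace X] [MeasurableSpace X]
  [BorelSpace X]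

lemma integrable_continuousMap (f : C(X, ℝ)) (μ : Measure X) [IsFiniteMeasure μ] :
    Integrable f μ :=
  f.continuous.integrable_of_hasCompactSupport (HasCompactSupport.of_compactSpace f)

lemma lipschitzWith_integral_continuousMap (μ : Measure X) [IsFiniteMeasure μ] {M : NNReal}
    (hM : μ.real Set.univ ≤ M) : LipschitzWith M fun f : C(X, ℝ) => ∫ x, f x ∂μ := by
  refine LipschitzWith.of_dist_le_mul fun f g => ?_
  rw [dist_eq_norm, dist_eq_norm,
    ← integral_sub (integrable_continuousMap f μ) (integrable_continuousMap g μ), mul_comm]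
  refine (norm_integral_le_of_norm_le_const (Eventually.of_forall
    (f - g).norm_coe_le_norm)).trans ?_
  gcongr

lemma measureReal_univ_le_two_mul_integral (μ : Measure X) [IsFiniteMeasure μ] {f : C(X, ℝ)}
    (hf : dist f 1 < 1 / 2) : μ.real Set.univ ≤ 2 * ∫ x, f x ∂μ := by
  have hmass : μ.real Set.univ = ∫ _, (1 : ℝ) ∂μ := by simp
  rw [hmass, ← integral_const_mul]
  refine integral_mono (integrable_const 1) ((integrable_continuousMap f μ).const_mul 2)
    fun x => ?_
  have hdist := (abs_lt.1 ((ContinuousMap.dist_apply_le_dist (f := f) (g := 1) x).trans_lt hf)).1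
  rw [ContinuousMap.one_apply] at hdist
  linarith

lemma tendsto_integral_of_denseRange {ι : Type*} {μ : ℕ → Measure X} [∀ j, IsFiniteMeasure (μ j)]
    {ν : Measure X} [IsFiniteMeasure ν] {f : ι → C(X, ℝ)} (hf : DenseRange f)
    (hlim : ∀ i, Tendsto (fun j => ∫ x, f i x ∂(μ j)) atTop (𝓝 (∫ x, f i x ∂ν))) (g : C(X, ℝ)) :
    Tendsto (fun j => ∫ x, g x ∂(μ j)) atTop (𝓝 (∫ x, g x ∂ν)) := by
  obtain ⟨M, hM⟩ : ∃ M : NNReal, ∀ j, (μ j).real Set.univ ≤ M := by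
    obtain ⟨i, hi⟩ := hf.exists_dist_lt 1 one_half_pos
    obtain ⟨C, hC⟩ := (hlim i).bddAbove_range
    refine ⟨(2 * C).toNNReal, fun j => ?_⟩
    calc (μ j).real Set.univ ≤ 2 * ∫ x, f i x ∂(μ j) :=
          measureReal_univ_le_two_mul_integral _ (by rwa [dist_comm])
      _ ≤ 2 * C := by gcongr; exact hC ⟨j, rfl⟩
      _ ≤ _ := Real.le_coe_toNNReal _
  have hequi := (LipschitzWith.uniformEquicontinuous _ M fun j =>
    lipschitzWith_integral_continuousMap (μ j) (hM j)).equicontinuous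
  have hcont : Continuous fun g : C(X, ℝ) => ∫ x, g x ∂ν :=
    (lipschitzWith_integral_continuousMap ν (M := ⟨_, measureReal_nonneg⟩) le_rfl).continuous
  exact (hequi g).tendsto_of_mem_closure (hcont.tendsto g |>.mono_left nhdsWithin_le_nhds)
    (by rintro _ ⟨i, rfl⟩; exact hlim i) (hf g)

lemma exists_mem_dual_eq_integral {ι : Type*} [Finite ι] {p : Submodule ℝ C(X, ℝ)}
    {f : ι → C(X, ℝ)} (hf : ∀ i, f i ∈ p) (φ : StrongDual ℝ (ι → ℝ)) :
    ∃ g ∈ p, ∀ (μ : Measure X) [IsFiniteMeasure μ], φ (fun i => ∫ x, f i x ∂μ) = ∫ x, g x ∂μ := by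
  classical
  have := Fintype.ofFinite ι
  refine ⟨∑ i, φ (Pi.single i 1) • f i, p.sum_mem fun i _ => p.smul_mem _ (hf i), fun μ _ => ?_⟩
  simp only [ContinuousMap.coe_sum, ContinuousMap.coe_smul, Finset.sum_apply, Pi.smul_apply,
    smul_eq_mul]
  rw [integral_finsetSum _ fun i _ => (integrable_continuousMap (f i) μ).const_mul _]
  conv_lhs => rw [← Finset.univ_sum_single fun i => ∫ x, f i x ∂μ, map_sum]
  refine Finset.sum_congr rfl fun i _ => ?_
  rw [integral_const_mul, mul_comm, ← smul_eq_mul, ← map_smul, ← Pi.single_smul,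
    smul_eq_mul, mul_one]

end WeakConvergence

/-! ## Generation of Young measures by duality -/

section CompactifiedMeasure

lemma isFiniteMeasure_withDensity_one_add_norm {V : Type*} [NormedAddCommGroup V]
    [MeasurableSpace V] {μ : Measure V} [IsFiniteMeasure μ] (hmom : Integrable (fun v => ‖v‖) μ) :
    IsFiniteMeasure (μ.withDensity fun v => ENNReal.ofReal (1 + ‖v‖)) :=
  isFiniteMeasure_withDensity_ofReal ((integrable_const 1).add hmom).2

variable {V : Type*} [NormedAddCommGroup V] [NormedSpace ℝ V] [MeasurableSpace V]

/-- The pair `(μ⁰, μ^∞)` as a single measure on the closed unit ball, against which `TΦ`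
integrates to `∫ Φ dμ⁰ + ∫ Φ^∞ dμ^∞`. -/
def compactifiedMeasure (μ0 : Measure V) (μinf : Measure (Metric.sphere (0 : V) 1)) :
    Measure (UnitClosedBall V) :=
  (μ0.withDensity fun v => ENNReal.ofReal (1 + ‖v‖)).map (ballPoint 1) + μinf.map sphereToBall

variable {μ0 : Measure V} [IsFiniteMeasure μ0] {μinf : Measure (Metric.sphere (0 : V) 1)}
  [IsFiniteMeasure μinf]

lemma isFiniteMeasure_compactifiedMeasure (hmom : Integrable (fun v => ‖v‖) μ0) :
    IsFiniteMeasure (compactifiedMeasure μ0 μinf) := by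
  have := isFiniteMeasure_withDensity_one_add_norm hmom
  unfold compactifiedMeasure
  infer_instance

variable [FiniteDimensional ℝ V]

instance compactSpace_unitClosedBall : CompactSpace (UnitClosedBall V) :=
  have := FiniteDimensional.proper_real V
  isCompact_iff_compactSpace.1 (isCompact_closedBall 0 1)

instance compactSpace_unitSphere : CompactSpace (Metric.sphere (0 : V) 1) :=
  have := FiniteDimensional.proper_real V
  isCompact_iff_compactSpace.1 (isCompact_sphere 0 1)

variable [BorelSpace V]

lemma integral_compactifiedMeasure (hmom : Integrable (fun v => ‖v‖) μ0)
    (g : C(UnitClosedBall V, ℝ)) :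
    ∫ x, g x ∂(compactifiedMeasure μ0 μinf) =
      (∫ v, ballIntegrand 1 g v ∂μ0) + ∫ w, g (sphereToBall w) ∂μinf := by
  have := isFiniteMeasure_withDensity_one_add_norm hmom
  have hfinite : ∫ x, g x ∂((μ0.withDensity fun v => ENNReal.ofReal (1 + ‖v‖)).map (ballPoint 1)) =
      ∫ v, ballIntegrand 1 g v ∂μ0 := by
    rw [integral_map continuous_ballPoint_one.aemeasurable g.continuous.aestronglyMeasurable,
      integral_withDensity_eq_integral_toReal_smul (by fun_prop) (by simp)]
    refine integral_congr_ae (Eventually.of_forall fun v => ?_)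
    simp only [ballIntegrand, NNReal.coe_one, smul_eq_mul,
      ENNReal.toReal_ofReal (by positivity : (0 : ℝ) ≤ 1 + ‖v‖)]
  rw [compactifiedMeasure, integral_add_measure (integrable_continuousMap g _)
    (integrable_continuousMap g _), hfinite, integral_map continuous_sphereToBall.aemeasurable
    g.continuous.aestronglyMeasurable]

end CompactifiedMeasure

section Averages

variable {n : ℕ} {U V : Type*} [NormedAddCommGroup U] [NormedSpace ℝ U]
  [NormedAddCommGroup V] [NormedSpace ℝ V]

lemma exists_setIntegral_opApply_eq_midpoint (hn : 0 < n) (B : (Fin n → ℕ) → (U →L[ℝ] V)) (l : ℕ)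
    {u u' : Dom n → U} (hu : CcSmooth (unitCube n) u) (hu' : CcSmooth (unitCube n) u') :
    ∃ v : Dom n → U, CcSmooth (unitCube n) v ∧ ∀ H : V → ℝ, Continuous H →
      ∫ x in unitCube n, H (opApply B l v x) =
        midpoint ℝ (∫ x in unitCube n, H (opApply B l u x))
          (∫ x in unitCube n, H (opApply B l u' x)) := by
  set w : Fin 2 → Dom n → U := ![u, u']
  have hw (i : Fin n → Fin 2) : CcSmooth (unitCube n) (w (i ⟨0, hn⟩)) := by
    generalize i ⟨0, hn⟩ = j
    fin_cases j <;> assumption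
  refine ⟨tiling 2 l fun i => w (i ⟨0, hn⟩), ccSmooth_tiling two_pos l hw, fun H hH => ?_⟩
  have hsum := Fintype.sum_piFinset_apply
    (fun j => ∫ x in unitCube n, H (opApply B l (w j) x)) Finset.univ (⟨0, hn⟩ : Fin n)
  rw [Fintype.piFinset_univ, Finset.card_univ, Fintype.card_fin, Fintype.card_fin,
    Fin.sum_univ_two, nsmul_eq_mul] at hsum
  rw [setIntegral_opApply_tiling two_pos B l hw (H := fun _ => H) (hH.comp continuous_snd),
    ← Finset.mul_sum, hsum, midpoint_eq_smul_add]
  simp only [Nat.cast_pow, Nat.cast_ofNat, invOf_eq_inv, smul_eq_mul, w, Matrix.cons_val_zero,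
    Matrix.cons_val_one]
  rw [← mul_assoc, ← mul_pow_sub_one hn.ne' (2 : ℝ)]
  field_simp

lemma sobNorm_nonneg (l : ℕ) (u : Dom n → U) : 0 ≤ sobNorm l u :=
  Finset.sum_nonneg fun _ _ => integral_nonneg fun _ => norm_nonneg _

lemma exists_sobNorm_lt_setIntegral_opApply_eq (B : (Fin n → ℕ) → (U →L[ℝ] V)) (l : ℕ)
    {u : Dom n → U} (hu : CcSmooth (unitCube n) u) {e : ℝ} (he : 0 < e) :
    ∃ v : Dom n → U, CcSmooth (unitCube n) v ∧ sobNorm l v < e ∧ ∀ H : V → ℝ, Continuous H →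
      ∫ x in unitCube n, H (opApply B l v x) = ∫ x in unitCube n, H (opApply B l u x) := by
  obtain ⟨N, hN⟩ := exists_nat_gt (sobNorm l u / e)
  have hN0 : (0 : ℝ) < N := (div_nonneg (sobNorm_nonneg l u) he.le).trans_lt hN
  have hN0' : 0 < N := Nat.cast_pos.1 hN0
  refine ⟨tiling N l fun _ => u, ccSmooth_tiling hN0' l fun _ => hu,
    (sobNorm_tiling_le hN0' l hu).trans_lt ?_, fun H hH => ?_⟩
  · rwa [inv_mul_lt_iff₀ hN0, ← div_lt_iff₀ he]
  · rw [setIntegral_opApply_tiling hN0' B l (fun _ => hu) (H := fun _ => H)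
      (hH.comp continuous_snd)]
    simp only [Finset.sum_const, Finset.card_univ, Fintype.card_fun, Fintype.card_fin,
      nsmul_eq_mul, Nat.cast_pow]
    field_simp

end Averages

section Generation

variable {n l : ℕ} {U V : Type*} [NormedAddCommGroup U] [NormedSpace ℝ U]
  [NormedAddCommGroup V] [NormedSpace ℝ V] [FiniteDimensional ℝ V] [MeasurableSpace V]
  [BorelSpace V] {B : (Fin n → ℕ) → (U →L[ℝ] V)} {z : V}

/-- The compactified distribution of `z + ℬu` under the uniform measure on the cube. -/
def potentialMeasure (B : (Fin n → ℕ) → (U →L[ℝ] V)) (l : ℕ) (z : V) (u : Dom n → U) :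
    Measure (UnitClosedBall V) :=
  compactifiedMeasure ((volume.restrict (unitCube n)).map fun x => z + opApply B l u x) 0

lemma integrable_norm_map_add_opApply (B : (Fin n → ℕ) → (U →L[ℝ] V)) (l : ℕ) (z : V)
    {u : Dom n → U} (hu : CcSmooth (unitCube n) u) :
    Integrable (fun v => ‖v‖)
      ((volume.restrict (unitCube n)).map fun x => z + opApply B l u x) := by
  have hcont := hu.continuous_opApply B l
  exact (integrable_map_measure (by fun_prop) (by fun_prop)).2
    (integrableOn_unitCube (by fun_prop))

lemma isFiniteMeasure_potentialMeasure (B : (Fin n → ℕ) → (U →L[ℝ] V)) (l : ℕ) (z : V)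
    {u : Dom n → U} (hu : CcSmooth (unitCube n) u) :
    IsFiniteMeasure (potentialMeasure B l z u) :=
  isFiniteMeasure_compactifiedMeasure (integrable_norm_map_add_opApply B l z hu)

lemma integral_potentialMeasure (B : (Fin n → ℕ) → (U →L[ℝ] V)) (l : ℕ) (z : V)
    {u : Dom n → U} (hu : CcSmooth (unitCube n) u) (g : C(UnitClosedBall V, ℝ)) :
    ∫ x, g x ∂(potentialMeasure B l z u) =
      ∫ x in unitCube n, ballIntegrand 1 g (z + opApply B l u x) := by
  have hcont := hu.continuous_opApply B l
  rw [potentialMeasure, integral_compactifiedMeasure (integrable_norm_map_add_opApply B l z hu),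
    integral_zero_measure, add_zero, integral_map (by fun_prop)
    (continuous_ballIntegrand_one g.continuous).aestronglyMeasurable]

/-- Integration of Lipschitz functions against `m` respects all lower bounds valid for the
measures `potentialMeasure B l z u`. By separation, `m` is then a weak limit of such measures. -/
def DualInequality (B : (Fin n → ℕ) → (U →L[ℝ] V)) (l : ℕ) (z : V)
    (m : Measure (UnitClosedBall V)) : Prop :=
  ∀ g ∈ lipschitzSubalgebra (UnitClosedBall V), ∀ r : ℝ,
    (∀ u : Dom n → U, CcSmooth (unitCube n) u → r ≤ ∫ x, g x ∂(potentialMeasure B l z u)) →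
      r ≤ ∫ x, g x ∂m

variable {m : Measure (UnitClosedBall V)} [IsFiniteMeasure m]

lemma DualInequality.exists_forall_abs_integral_sub_lt (hm : DualInequality B l z m) (hn : 0 < n)
    {ι : Type*} [Finite ι] {f : ι → C(UnitClosedBall V, ℝ)}
    (hf : ∀ i, f i ∈ lipschitzSubalgebra (UnitClosedBall V)) {e : ℝ} (he : 0 < e) :
    ∃ u : Dom n → U, CcSmooth (unitCube n) u ∧
      ∀ i, |∫ x, f i x ∂(potentialMeasure B l z u) - ∫ x, f i x ∂m| < e := by
  have := Fintype.ofFinite ι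
  set S : Set (ι → ℝ) := {y | ∃ u : Dom n → U, CcSmooth (unitCube n) u ∧
    ∀ i, y i = ∫ x, f i x ∂(potentialMeasure B l z u)}
  have hmid : ∀ x ∈ S, ∀ y ∈ S, midpoint ℝ x y ∈ S := by
    rintro x ⟨u, hu, hx⟩ y ⟨u', hu', hy⟩
    obtain ⟨v, hv, hvmid⟩ := exists_setIntegral_opApply_eq_midpoint hn B l hu hu'
    refine ⟨v, hv, fun i => ?_⟩
    rw [pi_midpoint_apply, hx, hy, integral_potentialMeasure B l z hu,
      integral_potentialMeasure B l z hu', integral_potentialMeasure B l z hv]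
    exact (hvmid (fun y => ballIntegrand 1 (f i) (z + y))
      ((continuous_ballIntegrand_one (f i).continuous).comp (by fun_prop))).symm
  have hdual : (fun i => ∫ x, f i x ∂m) ∈ closure S := by
    refine mem_closure_of_forall_le_dual hmid fun φ r hr => ?_
    obtain ⟨g, hg, hφ⟩ := exists_mem_dual_eq_integral
      (p := (lipschitzSubalgebra (UnitClosedBall V)).toSubmodule) hf φ
    rw [hφ]
    refine hm g hg r fun u hu => ?_
    have := isFiniteMeasure_potentialMeasure B l z hu
    rw [← hφ]
    exact hr _ ⟨u, hu, fun _ => rfl⟩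
  obtain ⟨y, ⟨u, hu, hy⟩, hdist⟩ := Metric.mem_closure_iff.1 hdual e he
  refine ⟨u, hu, fun i => ?_⟩
  rw [← hy, ← Real.dist_eq, dist_comm]
  exact (dist_pi_lt_iff he).1 hdist i

lemma DualInequality.exists_seq_tendsto_integral (hm : DualInequality B l z m) (hn : 0 < n) :
    ∃ u : ℕ → Dom n → U, (∀ j, CcSmooth (unitCube n) (u j)) ∧
      Tendsto (fun j => sobNorm l (u j)) atTop (𝓝 0) ∧
      ∀ g : C(UnitClosedBall V, ℝ),
        Tendsto (fun j => ∫ x, g x ∂(potentialMeasure B l z (u j))) atTop (𝓝 (∫ x, g x ∂m)) := by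
  obtain ⟨f, hfdense, hf⟩ := exists_denseRange_lipschitz (UnitClosedBall V)
  have hstep (j : ℕ) : ∃ u : Dom n → U, CcSmooth (unitCube n) u ∧ sobNorm l u < 1 / ((j : ℝ) + 1) ∧
      ∀ i < j, |∫ x, f i x ∂(potentialMeasure B l z u) - ∫ x, f i x ∂m| < 1 / ((j : ℝ) + 1) := by
    have hj : 0 < 1 / ((j : ℝ) + 1) := Nat.one_div_pos_of_nat
    obtain ⟨u, hu, hclose⟩ := hm.exists_forall_abs_integral_sub_lt hn
      (f := fun i : Fin j => f i) (fun i => hf i) hj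
    obtain ⟨v, hv, hsob, heq⟩ := exists_sobNorm_lt_setIntegral_opApply_eq B l hu hj
    refine ⟨v, hv, hsob, fun i hi => ?_⟩
    have hvu := heq (fun y => ballIntegrand 1 (f i) (z + y))
      ((continuous_ballIntegrand_one (f i).continuous).comp (by fun_prop))
    rw [integral_potentialMeasure B l z hv, hvu, ← integral_potentialMeasure B l z hu]
    exact hclose ⟨i, hi⟩
  choose u hu hsob hclose using hstep
  have hzero := tendsto_one_div_add_atTop_nhds_zero_nat (𝕜 := ℝ)
  refine ⟨u, hu, squeeze_zero (fun j => sobNorm_nonneg l _) (fun j => (hsob j).le) hzero, ?_⟩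
  have (j : ℕ) := isFiniteMeasure_potentialMeasure B l z (hu j)
  refine tendsto_integral_of_denseRange hfdense fun i => ?_
  refine tendsto_iff_dist_tendsto_zero.2 (squeeze_zero' (Eventually.of_forall fun j =>
    dist_nonneg) ?_ hzero)
  filter_upwards [eventually_gt_atTop i] with j hj
  exact (hclose j i hj).le

end Generation

lemma DualInequality.memY {n l : ℕ} {U V : Type*} [NormedAddCommGroup U] [NormedSpace ℝ U]
    [NormedAddCommGroup V] [InnerProductSpace ℝ V] [FiniteDimensional ℝ V] [MeasurableSpace V]
    [BorelSpace V] {B : (Fin n → ℕ) → (U →L[ℝ] V)} {z : V} {μ0 : Measure V} [IsFiniteMeasure μ0]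
    {μinf : Measure (Metric.sphere (0 : V) 1)} [IsFiniteMeasure μinf]
    (hdual : DualInequality B l z (compactifiedMeasure μ0 μinf)) (hn : 0 < n)
    (hmom : Integrable (fun v => ‖v‖) μ0) : memY B l z μ0 μinf := by
  have := isFiniteMeasure_compactifiedMeasure (μinf := μinf) hmom
  obtain ⟨u, hu, hsob, hlim⟩ := hdual.exists_seq_tendsto_integral hn
  refine ⟨u, hu, hsob, fun Φ hΦ => ?_⟩
  obtain ⟨g, hgΦ, hgrec⟩ := hΦ.exists_ballIntegrand_eq
  have hg := hlim g
  rw [integral_compactifiedMeasure hmom] at hg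
  simpa only [integral_potentialMeasure B l z (hu _), hgΦ, hgrec] using hg

/-! ## The dual inequality from the two Jensen conditions -/

section EnvelopeRecession

variable {n l : ℕ} {U V : Type*} [NormedAddCommGroup U] [NormedSpace ℝ U]
  [NormedAddCommGroup V] [NormedSpace ℝ V] {B : (Fin n → ℕ) → (U →L[ℝ] V)} {Φ Ψ : V → ℝ}
  {C : ℝ} {K L : NNReal}

lemma setIntegral_add_opApply_le_add_const (hΦ : Continuous Φ) (hΨ : Continuous Ψ)
    (h : ∀ z, Φ z ≤ Ψ z + C) (y : V) {u : Dom n → U} (hu : CcSmooth (unitCube n) u) :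
    ∫ x in unitCube n, Φ (y + opApply B l u x) ≤
      (∫ x in unitCube n, Ψ (y + opApply B l u x)) + C := by
  have hcont := hu.continuous_opApply B l
  have hint : IntegrableOn (fun x => Ψ (y + opApply B l u x)) (unitCube n) :=
    integrableOn_unitCube (by fun_prop)
  calc ∫ x in unitCube n, Φ (y + opApply B l u x)
      ≤ ∫ x in unitCube n, (Ψ (y + opApply B l u x) + C) :=
        integral_mono (integrableOn_unitCube (by fun_prop)) (hint.add (integrable_const C))
          fun _ => h _
    _ = (∫ x in unitCube n, Ψ (y + opApply B l u x)) + C := by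
        rw [integral_add hint (integrable_const C), integral_const, probReal_univ, one_smul]

lemma EnvelopeBddBelow.of_le_add_const (hb : EnvelopeBddBelow B l Φ) (hΦ : Continuous Φ)
    (hΨ : Continuous Ψ) (h : ∀ z, Φ z ≤ Ψ z + C) : EnvelopeBddBelow B l Ψ := by
  obtain ⟨z, r, hr⟩ := hb
  exact ⟨z, r - C, fun u hu => sub_le_iff_le_add.2 <|
    (hr u hu).trans (setIntegral_add_opApply_le_add_const hΦ hΨ h z hu)⟩

lemma potentialEnvelope_le_potentialEnvelope_add (hΦ : LipschitzWith K Φ)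
    (hb : EnvelopeBddBelow B l Φ) (hΨ : Continuous Ψ) (h : ∀ z, Φ z ≤ Ψ z + C) (y : V) :
    potentialEnvelope B l Φ y ≤ potentialEnvelope B l Ψ y + C := by
  rw [← sub_le_iff_le_add]
  refine le_potentialEnvelope fun u hu => sub_le_iff_le_add.2 ?_
  exact (potentialEnvelope_le hΦ hb y hu).trans
    (setIntegral_add_opApply_le_add_const hΦ.continuous hΨ h y hu)

lemma potentialEnvelope_smul_le (hΨ : LipschitzWith K Ψ) (hb : EnvelopeBddBelow B l Ψ)
    (hhom : ∀ s : ℝ, 0 < s → ∀ z, Ψ (s • z) = s * Ψ z) {s : ℝ} (hs : 0 < s) (z : V) :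
    potentialEnvelope B l Ψ (s • z) ≤ s * potentialEnvelope B l Ψ z := by
  rw [← inv_mul_le_iff₀ hs]
  refine le_potentialEnvelope fun u hu => ?_
  rw [inv_mul_le_iff₀ hs, ← integral_const_mul]
  refine (potentialEnvelope_le hΨ hb (s • z) (hu.const_smul s)).trans_eq ?_
  simp only [opApply_const_smul B l s hu.1, ← smul_add, hhom s hs]

lemma potentialEnvelope_smul (hΨ : LipschitzWith K Ψ) (hb : EnvelopeBddBelow B l Ψ)
    (hhom : ∀ s : ℝ, 0 < s → ∀ z, Ψ (s • z) = s * Ψ z) {s : ℝ} (hs : 0 < s) (z : V) :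
    potentialEnvelope B l Ψ (s • z) = s * potentialEnvelope B l Ψ z := by
  refine le_antisymm (potentialEnvelope_smul_le hΨ hb hhom hs z) ?_
  simpa [smul_smul, hs.ne', le_inv_mul_iff₀ hs] using
    potentialEnvelope_smul_le hΨ hb hhom (inv_pos.2 hs) (s • z)

lemma hasRec_potentialEnvelope (hΦ : LipschitzWith K Φ) (hΨ : LipschitzWith L Ψ)
    (hb : EnvelopeBddBelow B l Φ) (hC : ∀ z, |Φ z - Ψ z| ≤ C)
    (hhom : ∀ s : ℝ, 0 < s → ∀ z, Ψ (s • z) = s * Ψ z) :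
    HasRec (potentialEnvelope B l Φ) (potentialEnvelope B l Ψ) := by
  have hΦΨ (z : V) : Φ z ≤ Ψ z + C := by linarith [(abs_le.1 (hC z)).2]
  have hΨΦ (z : V) : Ψ z ≤ Φ z + C := by linarith [(abs_le.1 (hC z)).1]
  have hb' := hb.of_le_add_const hΦ.continuous hΨ.continuous hΦΨ
  refine hasRec_of_abs_sub_le (C := C) (fun z => abs_sub_le_iff.2 ⟨?_, ?_⟩)
    fun s hs z => potentialEnvelope_smul hΨ hb' hhom hs z
  · linarith [potentialEnvelope_le_potentialEnvelope_add hΦ hb hΨ.continuous hΦΨ z]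
  · linarith [potentialEnvelope_le_potentialEnvelope_add hΨ hb' hΦ.continuous hΨΦ z]

end EnvelopeRecession

section Duality

variable {n k l : ℕ} {V W U : Type*} [NormedAddCommGroup V] [InnerProductSpace ℝ V]
  [FiniteDimensional ℝ V] [MeasurableSpace V] [BorelSpace V] [NormedAddCommGroup W]
  [NormedSpace ℝ W] [NormedAddCommGroup U] [NormedSpace ℝ U] {A : (Fin n → ℕ) → (V →L[ℝ] W)}
  {B : (Fin n → ℕ) → (U →L[ℝ] V)} {ν0 : Measure V} {νinf : Measure (Metric.sphere (0 : V) 1)}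
  {t : ℝ}

lemma add_smul_le_integral_add_integral_rrec {F : V → ℝ} {K : NNReal} (hF : LipschitzWith K F)
    (ht : 0 ≤ t) (hJensen : F (∫ v, v ∂ν0) ≤ ∫ v, F v ∂ν0)
    (hG : suppFn (derivSet F) (∫ w, (w : V) ∂νinf) ≤ ∫ w, rrec F (w : V) ∂νinf) :
    F ((∫ v, v ∂ν0) + t • ∫ w, (w : V) ∂νinf) ≤
      (∫ v, F v ∂ν0) + t * ∫ w, rrec F (w : V) ∂νinf := by
  have hline := lipschitz_add_smul_le_suppFn_derivSet hF (∫ v, v ∂ν0) (∫ w, (w : V) ∂νinf) ht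
  linarith [mul_le_mul_of_nonneg_left hG ht]

variable [IsFiniteMeasure νinf]

lemma HasRec.integral_rrec_le {F G : V → ℝ} (hFG : HasRec F G) (hF : Continuous F)
    {g : Metric.sphere (0 : V) 1 → ℝ} (hg : Continuous g)
    (hle : ∀ w : Metric.sphere (0 : V) 1, G w ≤ g w) :
    ∫ w, rrec F (w : V) ∂νinf ≤ ∫ w, g w ∂νinf := by
  simp only [hFG.rrec_eq]
  exact integral_mono
    (integrable_continuousMap ⟨_, (hFG.continuous hF).comp continuous_subtype_val⟩ νinf)
    (integrable_continuousMap ⟨g, hg⟩ νinf) hle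

variable [IsFiniteMeasure ν0]

lemma dualInequality_compactifiedMeasure (hexact : ExactPotential A k B l) (ht : 0 ≤ t)
    (hmom : Integrable (fun v => ‖v‖) ν0)
    (hJensen : ∀ F : V → ℝ, MemH F → AQuasiconvex A k F → F (∫ v, v ∂ν0) ≤ ∫ v, F v ∂ν0)
    (hG : ∀ F : V → ℝ, MemH F → AQuasiconvex A k F →
      suppFn (derivSet F) (∫ w, (w : V) ∂νinf) ≤ ∫ w, rrec F (w : V) ∂νinf) :
    DualInequality B l ((∫ v, v ∂ν0) + t • ∫ w, (w : V) ∂νinf)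
      (compactifiedMeasure ν0 (ENNReal.ofReal t • νinf)) := by
  rintro g ⟨K, hK⟩ r hr
  have hr' (u : Dom n → U) (hu : CcSmooth (unitCube n) u) := integral_potentialMeasure B l
    ((∫ v, v ∂ν0) + t • ∫ w, (w : V) ∂νinf) hu g ▸ hr u hu
  have hΦ := lipschitzWith_ballIntegrand 1 hK (M := ‖g‖₊) g.norm_coe_le_norm
  have hΨ := lipschitzWith_ballIntegrand 0 hK (M := ‖g‖₊) g.norm_coe_le_norm
  have hdist := abs_ballIntegrand_one_sub_zero_le hK (M := ‖g‖₊) g.norm_coe_le_norm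
  have hb : EnvelopeBddBelow B l (ballIntegrand 1 g) := ⟨_, r, hr'⟩
  have hb' : EnvelopeBddBelow B l (ballIntegrand 0 g) :=
    hb.of_le_add_const hΦ.continuous hΨ.continuous fun z =>
      sub_le_iff_le_add'.1 ((le_abs_self _).trans (hdist z))
  set F := potentialEnvelope B l (ballIntegrand 1 g)
  have hF : LipschitzWith _ F := lipschitzWith_potentialEnvelope hΦ hb
  have hFrec : HasRec F (potentialEnvelope B l (ballIntegrand 0 g)) :=
    hasRec_potentialEnvelope hΦ hΨ hb hdist fun s hs z => ballIntegrand_zero_smul g hs z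
  have hFH : MemH F := ⟨hF.continuous, linearGrowth_of_lipschitz hF, _, hFrec⟩
  have hFqc : AQuasiconvex A k F := aQuasiconvex_potentialEnvelope hexact hΦ hb
  have hosc : ∫ v, F v ∂ν0 ≤ ∫ v, ballIntegrand 1 g v ∂ν0 :=
    integral_mono ((linearGrowth_of_lipschitz hF).integrable hF.continuous hmom)
      ((linearGrowth_of_lipschitz hΦ).integrable hΦ.continuous hmom)
      fun v => potentialEnvelope_le_self hΦ hb v
  have hconc : ∫ w, rrec F (w : V) ∂νinf ≤ ∫ w, g (sphereToBall w) ∂νinf :=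
    hFrec.integral_rrec_le hF.continuous (g.continuous.comp continuous_sphereToBall) fun w => by
      simpa only [ballIntegrand_zero_sphere] using potentialEnvelope_le_self hΨ hb' (w : V)
  have := νinf.smul_finite (ENNReal.ofReal_ne_top (r := t))
  rw [integral_compactifiedMeasure hmom, integral_smul_measure, ENNReal.toReal_ofReal ht,
    smul_eq_mul]
  calc r ≤ F ((∫ v, v ∂ν0) + t • ∫ w, (w : V) ∂νinf) := le_potentialEnvelope hr'
    _ ≤ (∫ v, F v ∂ν0) + t * ∫ w, rrec F (w : V) ∂νinf :=
      add_smul_le_integral_add_integral_rrec hF ht (hJensen F hFH hFqc) (hG F hFH hFqc)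
    _ ≤ _ := by gcongr

end Duality

/-! ## Compactly supported potentials as periodic `𝒜`-free fields -/

section Composition

open scoped ContDiff

variable {n k l : ℕ} {V W U : Type*} [NormedAddCommGroup V] [NormedSpace ℝ V]
  [NormedAddCommGroup W] [NormedSpace ℝ W] [NormedAddCommGroup U] [NormedSpace ℝ U]
  {A : (Fin n → ℕ) → (V →L[ℝ] W)} {B : (Fin n → ℕ) → (U →L[ℝ] V)}

lemma opSymbol_smul (A : (Fin n → ℕ) → (V →L[ℝ] W)) (k : ℕ) (s : ℝ) (ξ : Dom n) :
    opSymbol A k (s • ξ) = s ^ k • opSymbol A k ξ := by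
  rw [opSymbol, opSymbol, Finset.smul_sum]
  refine Finset.sum_congr rfl fun α hα => ?_
  simp only [Pi.smul_apply, smul_eq_mul, mul_pow, Finset.prod_mul_distrib,
    Finset.prod_pow_eq_pow_sum, mem_degSet.1 hα, mul_smul]

lemma opSymbol_zero (A : (Fin n → ℕ) → (V →L[ℝ] W)) (hk : 0 < k) : opSymbol A k 0 = 0 := by
  simpa [hk.ne'] using opSymbol_smul A k 0 0

lemma ExactPotential.opSymbol_opSymbol (hexact : ExactPotential A k B l) (hk : 0 < k) (ξ : Dom n)
    (b : U) : opSymbol A k ξ (opSymbol B l ξ b) = 0 := by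
  rcases eq_or_ne ξ 0 with rfl | hξ
  · rw [opSymbol_zero A hk, zero_apply]
  · exact LinearMap.mem_ker.1 (hexact ξ hξ ▸ LinearMap.mem_range_self _ b)

lemma opSymbol_opSymbol_apply (ξ : Dom n) (b : U) :
    opSymbol A k ξ (opSymbol B l ξ b) =
      ∑ p ∈ degSet n k ×ˢ degSet n l, (∏ i, ξ i ^ (p.1 + p.2) i) • A p.1 (B p.2 b) := by
  simp only [opSymbol, sum_apply, smul_apply, map_sum, map_smul, Finset.smul_sum, smul_smul,
    Finset.sum_product, Pi.add_apply, pow_add, Finset.prod_mul_distrib]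
  rw [Finset.sum_comm]
  simp only [mul_comm]

/-- The left-hand side is the `ξ^γ`-coefficient of the polynomial `𝒜(ξ)ℬ(ξ)b`. -/
lemma sum_coeff_comp_coeff_eq_zero {b : U} (h : ∀ ξ, opSymbol A k ξ (opSymbol B l ξ b) = 0)
    (γ : Fin n → ℕ) :
    ∑ p ∈ degSet n k ×ˢ degSet n l with p.1 + p.2 = γ, A p.1 (B p.2 b) = 0 := by
  refine SeparatingDual.eq_zero_of_forall_dual_eq_zero (R := ℝ) fun φ => ?_
  set P : MvPolynomial (Fin n) ℝ := ∑ p ∈ degSet n k ×ˢ degSet n l,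
    MvPolynomial.monomial (Finsupp.equivFunOnFinite.symm (p.1 + p.2)) (φ (A p.1 (B p.2 b)))
  have heval (ξ : Dom n) : MvPolynomial.eval ξ P = φ (opSymbol A k ξ (opSymbol B l ξ b)) := by
    rw [opSymbol_opSymbol_apply, map_sum, map_sum]
    refine Finset.sum_congr rfl fun p _ => ?_
    rw [MvPolynomial.eval_monomial, Finsupp.prod_fintype _ _ (by simp), map_smul, smul_eq_mul,
      mul_comm]
    rfl
  have hP : P = 0 := MvPolynomial.funext fun ξ => by rw [heval, h, map_zero, map_zero]
  have hcoeff : MvPolynomial.coeff (Finsupp.equivFunOnFinite.symm γ) P = 0 := by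
    rw [hP, MvPolynomial.coeff_zero]
  simpa only [P, MvPolynomial.coeff_sum, MvPolynomial.coeff_monomial,
    EmbeddingLike.apply_eq_iff_eq, ← Finset.sum_filter, map_sum] using hcoeff

lemma mderiv_opApply (B : (Fin n → ℕ) → (U →L[ℝ] V)) (l : ℕ) (α : Fin n → ℕ) {u : Dom n → U}
    (hu : ContDiff ℝ ∞ u) (x : Dom n) :
    mderiv α (opApply B l u) x = ∑ β ∈ degSet n l, B β (mderiv (α + β) u x) := by
  have hsmooth (β : Fin n → ℕ) : ContDiff ℝ ∞ (B β ∘ mderiv β u) :=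
    (B β).contDiff.comp (contDiff_mderiv β hu)
  have hsum : opApply B l u = ∑ β ∈ degSet n l, B β ∘ mderiv β u := by
    funext x
    simp [opApply]
  rw [hsum, mderiv_eq_listDeriv, listDeriv_sum _ _ hsmooth, Finset.sum_apply]
  refine Finset.sum_congr rfl fun β _ => ?_
  rw [listDeriv_clm_comp _ _ (contDiff_mderiv β hu), ← mderiv_eq_listDeriv, mderiv_mderiv α β hu,
    Function.comp_apply]

lemma opApply_opApply_eq_zero (h : ∀ ξ b, opSymbol A k ξ (opSymbol B l ξ b) = 0) {u : Dom n → U}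
    (hu : ContDiff ℝ ∞ u) (x : Dom n) : opApply A k (opApply B l u) x = 0 := by
  rw [opApply]
  simp only [mderiv_opApply B l _ hu, map_sum]
  rw [← Finset.sum_product' (f := fun α β => A α (B β (mderiv (α + β) u x))),
    ← Finset.sum_fiberwise_of_maps_to (g := fun p => p.1 + p.2) fun p hp =>
      Finset.mem_image_of_mem _ hp]
  refine Finset.sum_eq_zero fun γ _ => ?_
  rw [← sum_coeff_comp_coeff_eq_zero (fun ξ => h ξ (mderiv γ u x)) γ]
  refine Finset.sum_congr rfl fun p hp => ?_
  rw [(Finset.mem_filter.1 hp).2]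

lemma ZPeriodic.setIntegral_opApply (B : (Fin n → ℕ) → (U →L[ℝ] V)) (hl : 0 < l)
    {u : Dom n → U} (hp : ZPeriodic u) (hu : ContDiff ℝ ∞ u) :
    ∫ x in unitCube n, _root_.opApply B l u x = 0 := by
  unfold _root_.opApply
  rw [integral_finsetSum (f := fun β x => B β (mderiv β u x)) _ fun β _ => integrableOn_unitCube
    ((B β).continuous.comp (contDiff_mderiv β hu).continuous)]
  refine Finset.sum_eq_zero fun β hβ => ?_
  have hBu : ContDiff ℝ ∞ (B β ∘ u) := (B β).contDiff.comp hu
  have hBp : ZPeriodic (B β ∘ u) := fun x m => congrArg (B β) (hp x m)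
  obtain ⟨j, L, hjL⟩ := List.exists_cons_of_length_pos
    (hl.trans_eq (length_multiIndexDirs_of_mem_degSet hβ).symm)
  have hderiv : (fun x => B β (mderiv β u x)) = pderivDir j (_root_.listDeriv L (B β ∘ u)) := by
    rw [mderiv_eq_listDeriv, hjL, ← listDeriv_cons, listDeriv_clm_comp _ _ hu]
    rfl
  rw [hderiv]
  exact (hBp.listDeriv L).setIntegral_pderivDir (contDiff_listDeriv L hBu) j

end Composition

section Periodization

open scoped ContDiff

variable {n : ℕ} {U : Type*}

/-- The integer vector nearest to `x`. -/
def roundVec (x : Dom n) : Fin n → ℤ := fun i => round (x i)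

/-- The `ℤⁿ`-periodic extension of the restriction of `u` to the unit cube. -/
def periodization (u : Dom n → U) (x : Dom n) : U := u (x - fun i => (roundVec x i : ℝ))

lemma roundVec_eq_of_sub_mem_unitCube {x : Dom n} {m : Fin n → ℤ}
    (h : (x - fun i => (m i : ℝ)) ∈ unitCube n) : roundVec x = m := by
  funext i
  have hi := abs_lt.1 (mem_unitCube_iff_abs.1 h i)
  rw [Pi.sub_apply] at hi
  rw [roundVec, round_eq, Int.floor_eq_iff]
  constructor <;> linarith

lemma zPeriodic_periodization (u : Dom n → U) : ZPeriodic (periodization u) := by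
  intro x m
  unfold periodization roundVec
  congr 1
  funext i
  simp

variable [NormedAddCommGroup U] [NormedSpace ℝ U] {u : Dom n → U}

lemma periodization_eventuallyEq_translate (hu : CcSmooth (unitCube n) u) (x₀ : Dom n) :
    periodization u =ᶠ[𝓝 x₀] fun x => u (x - fun i => (roundVec x₀ i : ℝ)) := by
  obtain ⟨δ, hδ, hthick⟩ := hu.2.1.isCompact.exists_thickening_subset_open isOpen_unitCube hu.2.2
  filter_upwards [Metric.ball_mem_nhds x₀ hδ] with x hx
  by_cases hround : roundVec x = roundVec x₀
  · rw [periodization, hround]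
  have hleft : periodization u x = 0 := by
    by_contra hne
    have hmem : (x₀ - fun i => (roundVec x i : ℝ)) ∈ unitCube n :=
      hthick <| Metric.mem_thickening_iff.2 ⟨_, subset_tsupport u hne, by
        rwa [dist_sub_right, dist_comm]⟩
    exact hround (roundVec_eq_of_sub_mem_unitCube hmem).symm
  have hright : u (x - fun i => (roundVec x₀ i : ℝ)) = 0 :=
    hu.eq_zero_of_notMem fun hmem => hround (roundVec_eq_of_sub_mem_unitCube hmem)
  rw [hleft, hright]

lemma contDiff_periodization (hu : CcSmooth (unitCube n) u) : ContDiff ℝ ∞ (periodization u) :=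
  contDiff_iff_contDiffAt.2 fun x =>
    (hu.1.comp (contDiff_id.sub contDiff_const)).contDiffAt.congr_of_eventuallyEq
      (periodization_eventuallyEq_translate hu x)

lemma periodization_eventuallyEq_of_mem (hu : CcSmooth (unitCube n) u) {x : Dom n}
    (hx : x ∈ unitCube n) : periodization u =ᶠ[𝓝 x] u := by
  have hzero : (fun i => ((0 : Fin n → ℤ) i : ℝ)) = 0 := by
    funext i
    simp
  have hround : roundVec x = 0 := roundVec_eq_of_sub_mem_unitCube (by rwa [hzero, sub_zero])
  filter_upwards [periodization_eventuallyEq_translate hu x] with y hy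
  rwa [hround, hzero, sub_zero] at hy

lemma AQuasiconvex.le_setIntegral_add_opApply {k l : ℕ} {V W : Type*} [NormedAddCommGroup V]
    [NormedSpace ℝ V] [NormedAddCommGroup W] [NormedSpace ℝ W]
    {A : (Fin n → ℕ) → (V →L[ℝ] W)} {B : (Fin n → ℕ) → (U →L[ℝ] V)} {F : V → ℝ}
    (hF : AQuasiconvex A k F) (hexact : ExactPotential A k B l) (hk : 0 < k) (hl : 0 < l)
    (hu : CcSmooth (unitCube n) u) (y : V) :
    F y ≤ ∫ x in unitCube n, F (y + opApply B l u x) := by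
  have hsmooth := contDiff_periodization hu
  have hper := zPeriodic_periodization u
  refine (hF.2 y (opApply B l (periodization u)) (contDiff_opApply B l hsmooth)
    (hper.opApply B l) (hper.setIntegral_opApply B hl hsmooth)
    (opApply_opApply_eq_zero (hexact.opSymbol_opSymbol hk) hsmooth)).trans_eq ?_
  refine setIntegral_congr_fun measurableSet_unitCube fun x hx => ?_
  simp only [opApply_congr_of_eventuallyEq B l (periodization_eventuallyEq_of_mem hu hx)]

end Periodization

/-! ## Necessity of the derivative condition -/

section Rescaling

variable {V : Type*} [NormedAddCommGroup V] [NormedSpace ℝ V] {F g : V → ℝ} {K : NNReal} {R : ℝ}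

/-- The blow-up `y ↦ R⁻¹ F(c + R y)` of `F` about `c`. Subtracting the constant `R⁻¹ F(c)` gives
the difference quotients of `F` at `c`, while quasiconvexity and the recession function are
unaffected. -/
def blowup (F : V → ℝ) (c : V) (R : ℝ) (y : V) : ℝ := R⁻¹ * F (c + R • y)

lemma lipschitzWith_blowup (hF : LipschitzWith K F) (c : V) (hR : 0 < R) :
    LipschitzWith K (blowup F c R) := by
  refine LipschitzWith.of_dist_le_mul fun x y => ?_
  have h := hF.dist_le_mul (c + R • x) (c + R • y)
  rw [dist_add_left, dist_smul₀, Real.norm_of_nonneg hR.le, Real.dist_eq] at h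
  rw [Real.dist_eq, blowup, blowup, ← mul_sub, abs_mul, abs_of_pos (inv_pos.2 hR),
    inv_mul_le_iff₀ hR]
  linarith

lemma HasRec.blowup (hg : HasRec F g) (hF : LipschitzWith K F) (c : V) (hR : 0 < R) :
    HasRec (blowup F c R) g := by
  refine Metric.tendstoLocallyUniformly_iff.2 fun e he x => ?_
  obtain ⟨s, hs, hclose⟩ := Metric.tendstoLocallyUniformly_iff.1 hg (e / 2) (half_pos he) x
  refine ⟨s, hs, ?_⟩
  have hscale : Tendsto (fun t : ℝ => R * t) atTop atTop := tendsto_id.const_mul_atTop hR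
  filter_upwards [hscale.eventually hclose, hscale.eventually_gt_atTop (2 * (K * ‖c‖) / e),
    hscale.eventually_gt_atTop 0] with t hclose_t hlarge hRt y hy
  have hshift : dist (F ((R * t) • y) / (R * t)) (F (c + (R * t) • y) / (R * t)) < e / 2 := by
    have hlip := hF.dist_le_mul ((R * t) • y) (c + (R * t) • y)
    rw [dist_add_self_right, Real.dist_eq] at hlip
    rw [Real.dist_eq, ← sub_div, abs_div, abs_of_pos hRt, div_lt_iff₀ hRt]
    rw [div_lt_iff₀ he] at hlarge
    linarith
  have heq : _root_.blowup F c R (t • y) / t = F (c + (R * t) • y) / (R * t) := by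
    rw [_root_.blowup, smul_smul, inv_mul_eq_div, div_div]
  rw [heq]
  exact (dist_triangle _ _ _).trans_lt
    ((add_lt_add (hclose_t y hy) hshift).trans_eq (add_halves e))

lemma MemH.blowup (hH : MemH F) (hF : LipschitzWith K F) (c : V) (hR : 0 < R) :
    MemH (blowup F c R) := by
  obtain ⟨-, -, g, hg⟩ := hH
  have hlip := lipschitzWith_blowup hF c hR
  exact ⟨hlip.continuous, linearGrowth_of_lipschitz hlip, g, hg.blowup hF c hR⟩

lemma MemH.rrec_blowup (hH : MemH F) (hF : LipschitzWith K F) (c : V) (hR : 0 < R) :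
    rrec (_root_.blowup F c R) = rrec F := by
  obtain ⟨-, -, g, hg⟩ := hH
  funext w
  rw [hg.rrec_eq, (hg.blowup hF c hR).rrec_eq]

lemma AQuasiconvex.blowup {n k : ℕ} {W : Type*} [NormedAddCommGroup W] [NormedSpace ℝ W]
    {A : (Fin n → ℕ) → (V →L[ℝ] W)} (hF : AQuasiconvex A k F) (c : V) (hR : 0 < R) :
    AQuasiconvex A k (blowup F c R) := by
  have hcont := hF.1
  refine ⟨by unfold _root_.blowup; fun_prop, fun z v hv hper hmean hfree => ?_⟩
  have hineq := hF.2 (c + R • z) (R • v) (hv.const_smul R)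
    (fun x m => congrArg (R • ·) (hper x m))
    (by simp only [Pi.smul_apply, integral_smul, hmean, smul_zero])
    (fun x => by rw [opApply_const_smul A k R hv, hfree, smul_zero])
  simp only [_root_.blowup, integral_const_mul]
  refine mul_le_mul_of_nonneg_left (hineq.trans_eq ?_) (inv_nonneg.2 hR.le)
  simp only [Pi.smul_apply, smul_add, add_assoc]

lemma norm_inv_smul_sub_le (hF : LipschitzWith K F) (z v : V) {R : ℝ} (hR : 0 < R) :
    ‖R⁻¹ • (F (z + R • v) - F z)‖ ≤ K * ‖v‖ := by
  have h := hF.dist_le_mul (z + R • v) z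
  rw [dist_self_add_left, dist_eq_norm, norm_smul, Real.norm_of_nonneg hR.le] at h
  rw [norm_smul, norm_inv, Real.norm_of_nonneg hR.le, inv_mul_le_iff₀ hR]
  linarith

lemma integral_inv_smul_sub_eq [MeasurableSpace V] [BorelSpace V] (hF : LipschitzWith K F)
    {μ : Measure V} [IsProbabilityMeasure μ] (hmom : Integrable (fun v : V => ‖v‖) μ) (z₀ a : V)
    (hR : 0 < R) :
    ∫ v, R⁻¹ • (F (z₀ + R • (v - a)) - F z₀) ∂μ =
      (∫ v, blowup F (z₀ - R • a) R v ∂μ) - R⁻¹ * F z₀ := by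
  have hlip := lipschitzWith_blowup hF (z₀ - R • a) hR
  have hint := (linearGrowth_of_lipschitz hlip).integrable hlip.continuous hmom
  have heq (v : V) : R⁻¹ • (F (z₀ + R • (v - a)) - F z₀) =
      blowup F (z₀ - R • a) R v - R⁻¹ * F z₀ := by
    rw [blowup, smul_eq_mul, mul_sub, smul_sub, sub_add_eq_add_sub, add_sub_assoc]
  simp only [heq]
  rw [integral_sub hint (integrable_const _)]
  simp

end Rescaling

section Necessity

variable {V : Type*} [NormedAddCommGroup V] [InnerProductSpace ℝ V] [FiniteDimensional ℝ V]
  {F : V → ℝ}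

lemma tendsto_inv_smul_sub_of_hasFDerivAt {ζ z₀ : V}
    (hz : HasFDerivAt F (InnerProductSpace.toDual ℝ V ζ : V →L[ℝ] ℝ) z₀) (v : V) :
    Tendsto (fun R : ℝ => R⁻¹ • (F (z₀ + R • v) - F z₀)) (𝓝[>] 0) (𝓝 (inner ℝ ζ v)) := by
  simpa using (hz.hasLineDerivAt v).tendsto_slope_zero_right

variable [MeasurableSpace V] [BorelSpace V] {K : NNReal} {ν0 : Measure V}

lemma memY.apply_le {n k l : ℕ} {W U : Type*} [NormedAddCommGroup W] [NormedSpace ℝ W]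
    [NormedAddCommGroup U] [NormedSpace ℝ U] {A : (Fin n → ℕ) → (V →L[ℝ] W)}
    {B : (Fin n → ℕ) → (U →L[ℝ] V)} {z : V} {νinf : Measure (Metric.sphere (0 : V) 1)}
    (hY : memY B l z ν0 νinf) (hexact : ExactPotential A k B l) (hk : 0 < k) (hl : 0 < l)
    (hH : MemH F) (hF : AQuasiconvex A k F) :
    F z ≤ (∫ v, F v ∂ν0) + ∫ w, rrec F (w : V) ∂νinf := by
  obtain ⟨u, hu, -, hlim⟩ := hY
  exact ge_of_tendsto (hlim F hH) <| Eventually.of_forall fun j =>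
    hF.le_setIntegral_add_opApply hexact hk hl (hu j) z

variable [IsProbabilityMeasure ν0]

lemma tendsto_integral_inv_smul_sub_barycenter (hF : LipschitzWith K F)
    (hmom : Integrable (fun v : V => ‖v‖) ν0) {ζ z₀ : V}
    (hz : HasFDerivAt F (InnerProductSpace.toDual ℝ V ζ : V →L[ℝ] ℝ) z₀) :
    Tendsto (fun R : ℝ => ∫ v, R⁻¹ • (F (z₀ + R • (v - ∫ v, v ∂ν0)) - F z₀) ∂ν0) (𝓝[>] 0)
      (𝓝 0) := by
  set a := ∫ v, v ∂ν0 with ha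
  have hid : Integrable (fun v : V => v) ν0 :=
    (integrable_norm_iff aestronglyMeasurable_id).1 hmom
  have hsub : Integrable (fun v : V => v - a) ν0 := hid.sub (integrable_const a)
  have hzero : ∫ v, (inner ℝ ζ (v - a) : ℝ) ∂ν0 = 0 := by
    rw [integral_inner hsub, integral_sub hid (integrable_const a), ← ha]
    simp
  have hcont := hF.continuous
  suffices Tendsto (fun R : ℝ => ∫ v, R⁻¹ • (F (z₀ + R • (v - a)) - F z₀) ∂ν0) (𝓝[>] 0)
      (𝓝 (∫ v, inner ℝ ζ (v - a) ∂ν0)) by rwa [hzero] at this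
  refine tendsto_integral_filter_of_dominated_convergence (fun v => K * ‖v - a‖)
    (Eventually.of_forall fun R => Continuous.aestronglyMeasurable (by fun_prop)) ?_
    (hsub.norm.const_mul _)
    (Eventually.of_forall fun v => tendsto_inv_smul_sub_of_hasFDerivAt hz (v - a))
  filter_upwards [self_mem_nhdsWithin] with R hR
  exact Eventually.of_forall fun v => norm_inv_smul_sub_le hF z₀ (v - a) hR

variable {n k l : ℕ} {W U : Type*} [NormedAddCommGroup W] [NormedSpace ℝ W]
  [NormedAddCommGroup U] [NormedSpace ℝ U] {A : (Fin n → ℕ) → (V →L[ℝ] W)}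
  {B : (Fin n → ℕ) → (U →L[ℝ] V)} {νinf : Measure (Metric.sphere (0 : V) 1)} {t : ℝ}

/-- Test the Young measure with the blow-ups of `F` at a point of differentiability `z₀` and let
`R → 0⁺`: the linearization of `F` at `z₀` integrates to zero against the centred `ν⁰`. -/
theorem memY.suppFn_derivSet_le
    (hY : memY B l ((∫ v, v ∂ν0) + t • ∫ w, (w : V) ∂νinf) ν0 (ENNReal.ofReal t • νinf))
    (hexact : ExactPotential A k B l) (hk : 0 < k) (hl : 0 < l) (ht : 0 < t)
    (hmom : Integrable (fun v : V => ‖v‖) ν0) (hLip : LipschitzWith K F) (hH : MemH F)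
    (hF : AQuasiconvex A k F) :
    suppFn (derivSet F) (∫ w, (w : V) ∂νinf) ≤ ∫ w, rrec F (w : V) ∂νinf := by
  set a := ∫ v, v ∂ν0
  set b := ∫ w, (w : V) ∂νinf
  refine csSup_le ((derivSet_nonempty hLip).image _) ?_
  rintro _ ⟨ζ, ⟨z₀, hz⟩, rfl⟩
  have hquot (R : ℝ) (hR : 0 < R) : R⁻¹ • (F (z₀ + R • (t • b)) - F z₀) ≤
      (∫ v, R⁻¹ • (F (z₀ + R • (v - a)) - F z₀) ∂ν0) + t * ∫ w, rrec F (w : V) ∂νinf := by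
    have htest := hY.apply_le hexact hk hl (hH.blowup hLip (z₀ - R • a) hR)
      (hF.blowup (z₀ - R • a) hR)
    rw [hH.rrec_blowup hLip _ hR, integral_smul_measure, ENNReal.toReal_ofReal ht.le,
      smul_eq_mul] at htest
    have hpoint : blowup F (z₀ - R • a) R (a + t • b) = R⁻¹ * F (z₀ + R • (t • b)) := by
      rw [blowup, smul_add, ← add_assoc, sub_add_cancel]
    rw [hpoint] at htest
    rw [integral_inv_smul_sub_eq hLip hmom z₀ a hR, smul_eq_mul, mul_sub]
    linarith
  have hlimit : (inner ℝ ζ (t • b) : ℝ) ≤ 0 + t * ∫ w, rrec F (w : V) ∂νinf :=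
    le_of_tendsto_of_tendsto (tendsto_inv_smul_sub_of_hasFDerivAt hz (t • b))
      ((tendsto_integral_inv_smul_sub_barycenter hLip hmom hz).add_const _)
      (eventually_mem_nhdsWithin.mono hquot)
  rw [inner_smul_right, zero_add] at hlimit
  exact le_of_mul_le_mul_left hlimit ht

end Necessity

/-! ## Quasiconvex functions of linear growth are Lipschitz -/

section OneDimensionalJensen

variable {n : ℕ}

lemma eq_of_forall_le_of_le_setIntegral_unitCube {ψ : Dom n → ℝ} {c : ℝ} (hψ : Continuous ψ)
    (hle : ∀ x, ψ x ≤ c) (hint : c ≤ ∫ x in unitCube n, ψ x) {x : Dom n} (hx : x ∈ unitCube n) :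
    ψ x = c := by
  have hcont : Continuous fun x => c - ψ x := continuous_const.sub hψ
  have hnonneg (x : Dom n) : 0 ≤ c - ψ x := sub_nonneg.2 (hle x)
  have hzero : ∫ x in unitCube n, (c - ψ x) = 0 := by
    refine le_antisymm ?_ (integral_nonneg hnonneg)
    rw [integral_sub (integrable_const _) (integrableOn_unitCube hψ)]
    simpa using hint
  rw [setIntegral_eq_zero_iff_of_nonneg_ae (Eventually.of_forall hnonneg)
    (integrableOn_unitCube hcont)] at hzero
  have heq : c - ψ x = 0 := Measure.eqOn_open_of_ae_eq hzero isOpen_unitCube hcont.continuousOn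
    continuousOn_const hx
  linarith

/-- At the leftmost maximum point `p` of `h` on `[0, 1]`, averaging over `p + a φ` with
`a = min p (1 - p)` forces `h (p - a) = h p`. -/
lemma nonpos_on_Icc_of_le_setIntegral {h : ℝ → ℝ} (hh : Continuous h) {φ : Dom n → ℝ}
    (hφ : Continuous φ) (hφ_le : ∀ x, |φ x| ≤ 1) (hφ_zero : φ 0 = -1)
    (havg : ∀ p a : ℝ, h p ≤ ∫ x in unitCube n, h (p + a * φ x)) (hh0 : h 0 ≤ 0) (hh1 : h 1 ≤ 0)
    {s : ℝ} (hs : s ∈ Set.Icc (0 : ℝ) 1) : h s ≤ 0 := by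
  by_contra! hpos
  obtain ⟨q, hq, hmax⟩ := isCompact_Icc.exists_isMaxOn ⟨s, hs⟩ hh.continuousOn
  obtain ⟨p, ⟨hpq, hp⟩, hleast⟩ := (isCompact_Icc.inter_left
    (isClosed_singleton.preimage hh) : IsCompact (h ⁻¹' {h q} ∩ Set.Icc 0 1)).exists_isLeast
    ⟨q, rfl, hq⟩
  have hpq : h p = h q := hpq
  have hhp : 0 < h p := hpq ▸ hpos.trans_le (hmax hs)
  have hp0 : 0 < p := hp.1.lt_of_ne fun heq => (hh0.trans_lt hhp).ne (by rw [heq])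
  have hp1 : p < 1 := hp.2.lt_of_ne fun heq => (hh1.trans_lt hhp).ne (by rw [heq])
  set a := min p (1 - p)
  have ha : 0 < a := lt_min hp0 (sub_pos.2 hp1)
  have hmem (x : Dom n) : p + a * φ x ∈ Set.Icc (0 : ℝ) 1 := by
    obtain ⟨hlower, hupper⟩ := abs_le.1 (hφ_le x)
    have hap : a ≤ p := min_le_left _ _
    have hap' : a ≤ 1 - p := min_le_right _ _
    constructor <;> nlinarith
  have heq : h (p + a * φ 0) = h p :=
    eq_of_forall_le_of_le_setIntegral_unitCube (hh.comp (by fun_prop))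
      (fun x => (hmax (hmem x)).trans_eq hpq.symm) (havg p a)
      (unitCube_eq_ball ▸ Metric.mem_ball_self (by norm_num))
  have hle : p ≤ p + a * φ 0 := hleast ⟨heq.trans hpq, hmem 0⟩
  rw [hφ_zero] at hle
  linarith

lemma setIntegral_sub_chord {g φ : Dom n → ℝ} (hg : Continuous g) (hφ : Continuous φ)
    (hφ_mean : ∫ x in unitCube n, φ x = 0) (c d : ℝ) :
    ∫ x in unitCube n, (g x - (c + d * φ x)) = (∫ x in unitCube n, g x) - c := by
  have hlin : Continuous fun x => d * φ x := by fun_prop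
  rw [integral_sub (integrableOn_unitCube hg) (integrableOn_unitCube (by fun_prop)),
    integral_add (integrable_const _) (integrableOn_unitCube hlin), integral_const_mul, hφ_mean]
  simp

lemma le_chord_of_le_setIntegral {g : ℝ → ℝ} (hg : Continuous g) {φ : Dom n → ℝ}
    (hφ : Continuous φ) (hφ_le : ∀ x, |φ x| ≤ 1) (hφ_zero : φ 0 = -1)
    (hφ_mean : ∫ x in unitCube n, φ x = 0)
    (havg : ∀ p a : ℝ, g p ≤ ∫ x in unitCube n, g (p + a * φ x)) {s : ℝ}
    (hs : s ∈ Set.Icc (0 : ℝ) 1) : g s ≤ (1 - s) * g 0 + s * g 1 := by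
  have hnonpos := nonpos_on_Icc_of_le_setIntegral
    (h := fun s => g s - ((1 - s) * g 0 + s * g 1)) (by fun_prop) hφ hφ_le hφ_zero
    (fun p a => ?_) (by simp) (by simp) hs
  · exact sub_nonpos.1 hnonpos
  · have hsplit (x : Dom n) : (1 - (p + a * φ x)) * g 0 + (p + a * φ x) * g 1 =
        ((1 - p) * g 0 + p * g 1) + (a * (g 1 - g 0)) * φ x := by ring
    simp only [hsplit]
    rw [setIntegral_sub_chord (g := fun x => g (p + a * φ x)) (by fun_prop) hφ hφ_mean]
    exact sub_le_sub_right (havg p a) _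

lemma convexOn_univ_of_le_setIntegral {g : ℝ → ℝ} (hg : Continuous g) {φ : Dom n → ℝ}
    (hφ : Continuous φ) (hφ_le : ∀ x, |φ x| ≤ 1) (hφ_zero : φ 0 = -1)
    (hφ_mean : ∫ x in unitCube n, φ x = 0)
    (havg : ∀ p a : ℝ, g p ≤ ∫ x in unitCube n, g (p + a * φ x)) : ConvexOn ℝ Set.univ g := by
  refine ⟨convex_univ, fun x _ y _ a b ha hb hab => ?_⟩
  have hchord := le_chord_of_le_setIntegral (g := fun s => g (x + s * (y - x))) (by fun_prop) hφ
    hφ_le hφ_zero hφ_mean (fun p a => (havg (x + p * (y - x)) (a * (y - x))).trans_eq ?_)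
    (s := b) ⟨hb, by linarith⟩
  · obtain rfl : a = 1 - b := by linarith
    simp only [smul_eq_mul]
    have hleft : (1 - b) * x + b * y = x + b * (y - x) := by ring
    simpa only [hleft, zero_mul, add_zero, one_mul, add_sub_cancel] using hchord
  · congr! 2
    ring_nf

lemma intFreq_zero : intFreq (0 : Fin n → ℤ) = 0 := by
  funext i
  simp [intFreq]

lemma setIntegral_planeWave {m : Fin n → ℤ} (hm : m ≠ 0) (θ : ℝ) :
    ∫ x in unitCube n, planeWave (intFreq m) θ x = 0 := by
  obtain ⟨j, hj⟩ := Function.ne_iff.1 hm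
  have hcoeff : 2 * Real.pi * intFreq m j ≠ 0 :=
    mul_ne_zero (by simp [Real.pi_ne_zero]) (Int.cast_ne_zero.2 hj)
  have hzero := (zPeriodic_planeWave m (θ - Real.pi / 2)).setIntegral_pderivDir
    (contDiff_planeWave _ _) j
  simp only [pderivDir_planeWave, sub_add_cancel, integral_const_mul] at hzero
  exact (mul_eq_zero.1 hzero).resolve_left hcoeff

lemma convexOn_univ_sub_le {f : ℝ → ℝ} (hf : ConvexOn ℝ Set.univ f) {M C : ℝ}
    (hgrowth : ∀ y, f y ≤ M + C * |y|) (y : ℝ) : f y ≤ f 0 + C * |y| := by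
  have hbound : ∀ T : ℝ, 1 ≤ T → f y ≤ f 0 + T⁻¹ * (M - f 0) + C * |y| := by
    intro T hT
    have hT0 : 0 < T := by linarith
    have hconv := hf.2 (Set.mem_univ 0) (Set.mem_univ (T * y))
      (sub_nonneg.2 (inv_le_one_of_one_le₀ hT)) (inv_nonneg.2 hT0.le) (sub_add_cancel 1 T⁻¹)
    simp only [smul_eq_mul, mul_zero, zero_add, inv_mul_cancel_left₀ hT0.ne'] at hconv
    have hfar := mul_le_mul_of_nonneg_left (hgrowth (T * y)) (inv_nonneg.2 hT0.le)
    rw [abs_mul, abs_of_pos hT0, mul_add, mul_left_comm C, inv_mul_cancel_left₀ hT0.ne'] at hfar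
    linarith
  have hlim : Tendsto (fun T : ℝ => f 0 + T⁻¹ * (M - f 0) + C * |y|) atTop
      (𝓝 (f 0 + 0 * (M - f 0) + C * |y|)) :=
    ((tendsto_inv_atTop_zero.mul_const _).const_add _).add_const _
  simpa using ge_of_tendsto hlim ((eventually_ge_atTop 1).mono hbound)

end OneDimensionalJensen

section ConvexDirections

variable {n k l : ℕ} {V W U : Type*} [NormedAddCommGroup V] [NormedSpace ℝ V]
  [NormedAddCommGroup W] [NormedSpace ℝ W] [NormedAddCommGroup U] [NormedSpace ℝ U]
  {A : (Fin n → ℕ) → (V →L[ℝ] W)} {B : (Fin n → ℕ) → (U →L[ℝ] V)} {F : V → ℝ}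

/-- The directions along which `F` is convex on every line. -/
def convexDirections (F : V → ℝ) : Set V :=
  {b | ∀ z, ConvexOn ℝ Set.univ fun s : ℝ => F (z + s • b)}

lemma isClosed_convexDirections (hF : Continuous F) : IsClosed (convexDirections F) := by
  simp only [convexDirections, ConvexOn, Set.ofPred_forall, Set.ofPred_and]
  refine isClosed_iInter fun z => isClosed_const.inter ?_
  iterate 9 refine isClosed_iInter fun _ => ?_
  exact isClosed_le (by fun_prop) (by fun_prop)

lemma AQuasiconvex.mem_convexDirections_of_intFreq [CompleteSpace V] (hF : AQuasiconvex A k F)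
    {m : Fin n → ℤ} (hm : m ≠ 0) {b : V} (hb : opSymbol A k (intFreq m) b = 0) :
    b ∈ convexDirections F := by
  intro z
  have hcont := hF.1
  refine convexOn_univ_of_le_setIntegral (by fun_prop) (continuous_planeWave (intFreq m) Real.pi)
    (fun x => Real.abs_cos_le_one _) (by simp [planeWave]) (setIntegral_planeWave hm _)
    fun p a => ?_
  have hineq := hF.2 (z + p • b) (fun x => planeWave (intFreq m) Real.pi x • (a • b))
    ((contDiff_planeWave _ _).smul contDiff_const)
    ((zPeriodic_planeWave m _).smul fun _ _ => rfl)
    (by rw [integral_smul_const, setIntegral_planeWave hm, zero_smul])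
    (fun x => by rw [opApply_planeWave_smul, map_smul, hb, smul_zero, smul_zero])
  refine hineq.trans_eq (integral_congr_ae (Eventually.of_forall fun x => ?_))
  simp only [add_smul, smul_smul, add_assoc, mul_comm]

lemma continuous_opSymbol_apply (A : (Fin n → ℕ) → (V →L[ℝ] W)) (k : ℕ) (b : V) :
    Continuous fun ξ : Dom n => opSymbol A k ξ b := by
  simp only [opSymbol, sum_apply, smul_apply]
  fun_prop

lemma tendsto_inv_smul_intFreq_roundVec (ξ : Dom n) :
    Tendsto (fun j : ℕ => ((j : ℝ) + 1)⁻¹ • intFreq (roundVec (((j : ℝ) + 1) • ξ))) atTop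
      (𝓝 ξ) := by
  refine tendsto_pi_nhds.2 fun i => tendsto_iff_dist_tendsto_zero.2 <|
    squeeze_zero (fun _ => dist_nonneg) (fun j => ?_) tendsto_one_div_add_atTop_nhds_zero_nat
  have hj : (0 : ℝ) < (j : ℝ) + 1 := by positivity
  have hround := abs_sub_round (((j : ℝ) + 1) * ξ i)
  have hdiff : ξ i - ((j : ℝ) + 1)⁻¹ * round (((j : ℝ) + 1) * ξ i) =
      (((j : ℝ) + 1) * ξ i - round (((j : ℝ) + 1) * ξ i)) / ((j : ℝ) + 1) := by
    field_simp
  rw [dist_comm, Real.dist_eq]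
  simp only [Pi.smul_apply, smul_eq_mul, intFreq, roundVec]
  rw [hdiff, abs_div, abs_of_pos hj]
  gcongr
  linarith

/-- Kernel vectors at real frequencies are limits of kernel vectors at rational ones: this is where
the potential enters, since `ℬ(ξ)w` depends continuously on `ξ`. -/
lemma AQuasiconvex.waveCone_subset_convexDirections [CompleteSpace V] (hF : AQuasiconvex A k F)
    (hexact : ExactPotential A k B l) : waveCone A k ⊆ convexDirections F := by
  rintro b ⟨ξ, hξ, hb⟩
  obtain ⟨w, rfl⟩ : b ∈ LinearMap.range (opSymbol B l ξ : U →ₗ[ℝ] V) :=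
    hexact ξ hξ ▸ LinearMap.mem_ker.2 hb
  have hlim := tendsto_inv_smul_intFreq_roundVec ξ
  refine (isClosed_convexDirections hF.1).mem_of_tendsto
    (((continuous_opSymbol_apply B l w).tendsto ξ).comp hlim) ?_
  filter_upwards [hlim.eventually_ne hξ] with j hj
  set m := roundVec (((j : ℝ) + 1) • ξ)
  have hm : intFreq m ≠ 0 := fun h => hj (by rw [h, smul_zero])
  refine hF.mem_convexDirections_of_intFreq (m := m) (fun h => hm (h ▸ intFreq_zero)) ?_
  rw [Function.comp_apply, opSymbol_smul, smul_apply, map_smul]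
  exact smul_eq_zero_of_right _
    (LinearMap.mem_ker.1 (hexact _ hm ▸ LinearMap.mem_range_self _ w))

/-- The directions along which `F` is uniformly Lipschitz on every line. -/
def lipschitzDirections (F : V → ℝ) : Submodule ℝ V where
  carrier := {b | ∃ C : NNReal, ∀ (z : V) (y : ℝ), F (z + y • b) ≤ F z + C * |y|}
  zero_mem' := ⟨0, fun z y => by simp⟩
  add_mem' := by
    rintro a b ⟨C, hC⟩ ⟨D, hD⟩
    refine ⟨C + D, fun z y => ?_⟩
    rw [smul_add, ← add_assoc, NNReal.coe_add]
    linarith [hC z y, hD (z + y • a) y]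
  smul_mem' := by
    rintro c b ⟨C, hC⟩
    refine ⟨C * ‖c‖₊, fun z y => (smul_smul y c b ▸ hC z (y * c)).trans_eq ?_⟩
    rw [abs_mul, NNReal.coe_mul, coe_nnnorm, Real.norm_eq_abs]
    ring

lemma convexDirections_subset_lipschitzDirections (hF : LinearGrowth F) :
    convexDirections F ⊆ lipschitzDirections F := by
  obtain ⟨c, hc⟩ := hF
  have hc0 : 0 ≤ c := by simpa using (abs_nonneg _).trans (hc 0)
  refine fun b hb => ⟨(c * ‖b‖).toNNReal, fun z y => ?_⟩
  have hgrowth (y : ℝ) : F (z + y • b) ≤ c * (1 + ‖z‖) + c * ‖b‖ * |y| := by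
    have hnorm : ‖z + y • b‖ ≤ ‖z‖ + |y| * ‖b‖ := (norm_add_le _ _).trans_eq (by
      rw [norm_smul, Real.norm_eq_abs])
    calc F (z + y • b) ≤ c * (1 + ‖z + y • b‖) := (le_abs_self _).trans (hc _)
      _ ≤ c * (1 + (‖z‖ + |y| * ‖b‖)) := by gcongr
      _ = c * (1 + ‖z‖) + c * ‖b‖ * |y| := by ring
  rw [Real.coe_toNNReal _ (by positivity)]
  simpa only [zero_smul, add_zero] using convexOn_univ_sub_le (hb z) hgrowth y

variable [FiniteDimensional ℝ V]

lemma exists_lipschitzWith_of_lipschitzDirections_eq_top (hF : lipschitzDirections F = ⊤) :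
    ∃ K : NNReal, LipschitzWith K F := by
  set e := Module.finBasis ℝ V
  have hdir (i) : ∃ C : NNReal, ∀ (z : V) (y : ℝ), F (z + y • e i) ≤ F z + C * |y| :=
    (hF ▸ Submodule.mem_top : e i ∈ lipschitzDirections F)
  choose C hC using hdir
  have hsum (s : Finset (Fin (Module.finrank ℝ V))) (r : Fin (Module.finrank ℝ V) → ℝ) (z : V) :
      F (z + ∑ i ∈ s, r i • e i) ≤ F z + ∑ i ∈ s, C i * |r i| := by
    induction s using Finset.induction_on generalizing z with
    | empty => simp
    | insert i s hi ih =>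
      rw [Finset.sum_insert hi, Finset.sum_insert hi, ← add_assoc]
      linarith [hC i z (r i), ih (z + r i • e i)]
  set L := fun i => LinearMap.toContinuousLinearMap (e.coord i)
  refine ⟨∑ i, C i * ‖L i‖₊, LipschitzWith.of_le_add_mul _ fun x y => ?_⟩
  have hline := hsum Finset.univ (fun i => e.repr (x - y) i) y
  rw [e.sum_repr, add_sub_cancel] at hline
  refine hline.trans (add_le_add_right ?_ _)
  push_cast
  rw [Finset.sum_mul, dist_eq_norm]
  refine Finset.sum_le_sum fun i _ => ?_
  rw [mul_assoc]
  exact mul_le_mul_of_nonneg_left ((L i).le_opNorm (x - y)) (C i).coe_nonneg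

theorem AQuasiconvex.exists_lipschitzWith (hF : AQuasiconvex A k F) (hspan : SpanningCone A k)
    (hexact : ExactPotential A k B l) (hgrowth : LinearGrowth F) :
    ∃ K : NNReal, LipschitzWith K F := by
  have : CompleteSpace V := FiniteDimensional.complete ℝ V
  refine exists_lipschitzWith_of_lipschitzDirections_eq_top (eq_top_iff.2 ?_)
  rw [← hspan, Submodule.span_le]
  exact (hF.waveCone_subset_convexDirections hexact).trans
    (convexDirections_subset_lipschitzDirections hgrowth)

end ConvexDirections

/-! ## Statement 19: characterization of diffuse concentration under a Jensen condition -/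

theorem stmt19_general {n k l : ℕ} (hn : 0 < n) (hk : 0 < k) (hl : 0 < l)
    {V W U : Type*} [NormedAddCommGroup V] [InnerProductSpace ℝ V] [FiniteDimensional ℝ V]
    [MeasurableSpace V] [BorelSpace V] [NormedAddCommGroup W] [NormedSpace ℝ W]
    [NormedAddCommGroup U] [NormedSpace ℝ U]
    (A : (Fin n → ℕ) → (V →L[ℝ] W)) (B : (Fin n → ℕ) → (U →L[ℝ] V))
    (hspan : SpanningCone A k) (hexact : ExactPotential A k B l)
    (t : ℝ) (ht : 0 < t)
    (nu0 : Measure V) (nuInf : Measure (Metric.sphere (0 : V) 1))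
    (hprob : IsProbabilityMeasure nu0) (hmom : Integrable (fun v : V => ‖v‖) nu0)
    (hfinInf : IsFiniteMeasure nuInf)
    (hJensen : ∀ F : V → ℝ, MemH F → AQuasiconvex A k F →
      F (∫ v, v ∂nu0) ≤ ∫ v, F v ∂nu0) :
    memY B l ((∫ v, v ∂nu0) + t • ∫ w, (w : V) ∂nuInf) nu0 (ENNReal.ofReal t • nuInf) ↔
      ∀ F : V → ℝ, MemH F → AQuasiconvex A k F →
        suppFn (derivSet F) (∫ w, (w : V) ∂nuInf) ≤ ∫ w, rrec F (w : V) ∂nuInf := by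
  constructor
  · intro hY F hH hF
    obtain ⟨K, hLip⟩ := hF.exists_lipschitzWith hspan hexact hH.2.1
    exact hY.suppFn_derivSet_le hexact hk hl ht hmom hLip hH hF
  · intro hG
    have : IsFiniteMeasure (ENNReal.ofReal t • nuInf) := nuInf.smul_finite ENNReal.ofReal_ne_top
    exact (dualInequality_compactifiedMeasure hexact ht.le hmom hJensen hG).memY hn hmom

theorem stmt19 {n k l : ℕ} (hn : 0 < n) (hk : 0 < k) (hl : 0 < l)
    {V W U : Type*} [NormedAddCommGroup V] [InnerProductSpace ℝ V] [FiniteDimensional ℝ V]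
    [MeasurableSpace V] [BorelSpace V]
    [NormedAddCommGroup W] [InnerProductSpace ℝ W] [FiniteDimensional ℝ W]
    [NormedAddCommGroup U] [InnerProductSpace ℝ U] [FiniteDimensional ℝ U]
    (A : (Fin n → ℕ) → (V →L[ℝ] W)) (B : (Fin n → ℕ) → (U →L[ℝ] V))
    (hspan : SpanningCone A k) (hexact : ExactPotential A k B l)
    (t : ℝ) (ht : 0 < t)
    (nu0 : Measure V) (nuInf : Measure (Metric.sphere (0:V) 1))
    (hprob : IsProbabilityMeasure nu0) (hmom : Integrable (fun v : V => ‖v‖) nu0)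
    (hprobInf : IsProbabilityMeasure nuInf)
    (hJensen : ∀ F : V → ℝ, MemH F → AQuasiconvex A k F →
      F (∫ v, v ∂nu0) ≤ ∫ v, F v ∂nu0) :
    memY B l ((∫ v, v ∂nu0) + t • ∫ w, (w : V) ∂nuInf) nu0 (ENNReal.ofReal t • nuInf) ↔
      ∀ F : V → ℝ, MemH F → AQuasiconvex A k F →
        suppFn (derivSet F) (∫ w, (w : V) ∂nuInf) ≤ ∫ w, rrec F (w : V) ∂nuInf :=
  stmt19_general hn hk hl A B hspan hexact t ht nu0 nuInf hprob hmom inferInstance hJensen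

end
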